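/- Let D be a compact subset of ℝ² with nonempty interior. Then D is homeomorphic to the closed 2-dimensional disk if and only if: (1) the interior of D is connected; (2) ℝ² \ D is connected; (3) every point of the boundary ∂D is accessible from the interior of D; (4) every point of ∂D is accessible from ℝ² \ D. -/

import Mathlib

/-
Suppose the four conditions hold and let `f` be a Riemann map from the unit disk onto the interior
of `D`. By the length–area principle the values of `f` on suitable small arcs around a boundary
point `ζ` are close to a single point `p`. If `f` had no limit at `ζ`, it would have three further
cluster points on a small circle around `p`. All three are accessible both from the complement of
`D` and from the part of the image that stays away from `ζ`, and the resulting θ-curve has three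
complementary components, of which none can have all three points in its closure; but the image of
a neighbourhood of `ζ` lies in one of them. So `f` extends continuously to the closed disk. If the
extension took the same value at two boundary points, the image of the two radii would be a Jordan
curve with one side contained in the interior of `D`; then the extension would be constant on an arc
of the circle, hence everywhere, which is absurd.

Conversely, images of radii reach the boundary of a disk from the inside. After an inversion, the
complement of the disk becomes a bounded simply connected domain which is locally connected at its
boundary points, so that its Riemann map has boundary limits and images of radii reach the boundary
from the outside too.

The topology of the plane enters through logarithms: for compact `K`, the complement is connected
if and only if every nonvanishing continuous function on `K` has a continuous logarithm, and the
second condition is invariant under homeomorphisms.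
-/

/-- A point `x` of the boundary of `U` is *accessible* from `U` if there is a continuous
injective path in the closure of `U` ending at `x` and otherwise staying in `U`. -/
def Accessible {X : Type*} [TopologicalSpace X] (U : Set X) (x : X) : Prop :=
  ∃ φ : unitInterval → X, Continuous φ ∧ Function.Injective φ ∧
    (∀ t, φ t ∈ closure U) ∧ (∀ t : unitInterval, (t : ℝ) < 1 → φ t ∈ U) ∧ φ 1 = x

open Set Filter Topology Metric

/-- `g` has a continuous logarithm on `K`. The function `l` is defined on the whole space, but only
its values on `K` matter. -/
def HasLogOn {X : Type*} [TopologicalSpace X] (g : X → ℂ) (K : Set X) : Prop :=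
  ∃ l : X → ℂ, ContinuousOn l K ∧ ∀ z ∈ K, Complex.exp (l z) = g z

/-- Eilenberg's property (b): every nonvanishing continuous function on `K` has a continuous
logarithm. For compact plane sets it is equivalent to connectedness of the complement, which turns
separation properties of the plane into statements invariant under homeomorphisms of `K`. -/
def HasContinuousLogs {X : Type*} [TopologicalSpace X] (K : Set X) : Prop :=
  ∀ g : X → ℂ, ContinuousOn g K → (∀ z ∈ K, g z ≠ 0) → HasLogOn g K

section Logarithms

variable {X Y : Type*} [TopologicalSpace X] [TopologicalSpace Y]

namespace HasLogOn

variable {g h : X → ℂ} {K L : Set X}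

theorem congr (hg : HasLogOn g K) (h_eq : EqOn h g K) : HasLogOn h K := by
  obtain ⟨l, hl, hlg⟩ := hg
  exact ⟨l, hl, fun z hz ↦ (hlg z hz).trans (h_eq hz).symm⟩

theorem mono (hg : HasLogOn g L) (hKL : K ⊆ L) : HasLogOn g K := by
  obtain ⟨l, hl, hlg⟩ := hg
  exact ⟨l, hl.mono hKL, fun z hz ↦ hlg z (hKL hz)⟩

theorem comp {K : Set Y} {φ : Y → X} (hg : HasLogOn g L) (hφ : ContinuousOn φ K)
    (hm : MapsTo φ K L) : HasLogOn (g ∘ φ) K := by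
  obtain ⟨l, hl, hlg⟩ := hg
  exact ⟨l ∘ φ, hl.comp hφ hm, fun z hz ↦ hlg _ (hm hz)⟩

theorem mul (hg : HasLogOn g K) (hh : HasLogOn h K) : HasLogOn (fun z ↦ g z * h z) K := by
  obtain ⟨l, hl, hlg⟩ := hg
  obtain ⟨m, hm, hmh⟩ := hh
  exact ⟨fun z ↦ l z + m z, hl.add hm, fun z hz ↦ by rw [Complex.exp_add, hlg z hz, hmh z hz]⟩

theorem inv (hg : HasLogOn g K) : HasLogOn (fun z ↦ (g z)⁻¹) K := by
  obtain ⟨l, hl, hlg⟩ := hg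
  exact ⟨fun z ↦ -l z, hl.neg, fun z hz ↦ by rw [Complex.exp_neg, hlg z hz]⟩

theorem conj (hg : HasLogOn g K) : HasLogOn (fun z ↦ starRingEnd ℂ (g z)) K := by
  obtain ⟨l, hl, hlg⟩ := hg
  exact ⟨fun z ↦ starRingEnd ℂ (l z), Complex.continuous_conj.comp_continuousOn hl,
    fun z hz ↦ by rw [Complex.exp_conj, hlg z hz]⟩

theorem of_slitPlane (hg : ContinuousOn g K) (hs : MapsTo g K Complex.slitPlane) : HasLogOn g K :=
  ⟨fun z ↦ Complex.log (g z), hg.clog hs,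
    fun _ hz ↦ Complex.exp_log (Complex.slitPlane_ne_zero (hs hz))⟩

theorem const {c : ℂ} (hc : c ≠ 0) : HasLogOn (fun _ ↦ c) K :=
  ⟨fun _ ↦ Complex.log c, continuousOn_const, fun _ _ ↦ Complex.exp_log hc⟩

theorem of_norm_sub_lt (hg : ContinuousOn g K) (hh : ContinuousOn h K)
    (hlog : HasLogOn h K) (hlt : ∀ z ∈ K, ‖g z - h z‖ < ‖h z‖) : HasLogOn g K := by
  have h0 : ∀ z ∈ K, h z ≠ 0 := fun z hz ↦ norm_pos_iff.1 ((norm_nonneg _).trans_lt (hlt z hz))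
  have hquot : HasLogOn (fun z ↦ g z / h z) K := by
    refine of_slitPlane (hg.div hh h0) fun z hz ↦ Complex.ball_one_subset_slitPlane ?_
    rw [mem_ball_iff_norm, div_sub_one (h0 z hz), norm_div, div_lt_one (norm_pos_iff.2 (h0 z hz))]
    exact hlt z hz
  exact (hquot.mul hlog).congr fun z hz ↦ (div_mul_cancel₀ _ (h0 z hz)).symm

theorem of_mapsTo_ball {c : ℂ} (hg : ContinuousOn g K) (hm : MapsTo g K (ball c ‖c‖)) :
    HasLogOn g K := by
  rcases eq_or_ne c 0 with rfl | hc
  · exact ⟨0, continuousOn_const, fun z hz ↦ by simpa using hm hz⟩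
  · exact of_norm_sub_lt hg continuousOn_const (const hc) fun z hz ↦ mem_ball_iff_norm.1 (hm hz)

end HasLogOn

theorem eq_of_exp_eq_one {S : Set X} (hS : IsPreconnected S) {d : X → ℂ}
    (hd : ContinuousOn d S) (hexp : ∀ x ∈ S, Complex.exp (d x) = 1) {a b : X} (ha : a ∈ S)
    (hb : b ∈ S) : d a = d b := by
  refine hS.constant_of_mapsTo (T := AddSubgroup.zmultiples (2 * Real.pi * Complex.I))
    ⟨NormedSpace.discreteTopology_zmultiples _⟩ hd (fun x hx ↦ ?_) ha hb
  obtain ⟨n, hn⟩ := Complex.exp_eq_one_iff.1 (hexp x hx)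
  exact AddSubgroup.mem_zmultiples_iff.2 ⟨n, by rw [hn]; simp⟩

theorem sub_eq_sub_of_exp_eq {S : Set X} (hS : IsPreconnected S) {l m : X → ℂ}
    (hl : ContinuousOn l S) (hm : ContinuousOn m S)
    (hexp : ∀ x ∈ S, Complex.exp (l x) = Complex.exp (m x)) {a b : X} (ha : a ∈ S) (hb : b ∈ S) :
    l a - m a = l b - m b :=
  eq_of_exp_eq_one hS (hl.sub hm)
    (fun x hx ↦ by rw [Pi.sub_apply, Complex.exp_sub, hexp x hx, div_self (Complex.exp_ne_zero _)])
    ha hb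

theorem exists_continuousOn_union_eqOn {A B : Set X} (hA : IsClosed A) (hB : IsClosed B)
    {l m : X → Y} (hl : ContinuousOn l A) (hm : ContinuousOn m B) (h : EqOn l m (A ∩ B)) :
    ∃ k : X → Y, ContinuousOn k (A ∪ B) ∧ EqOn k l A ∧ EqOn k m B := by
  classical
  have hkl : EqOn (A.piecewise l m) l A := piecewise_eqOn A l m
  have hkm : EqOn (A.piecewise l m) m B := fun z hz ↦ by
    by_cases hzA : z ∈ A
    · simpa [hzA] using h ⟨hzA, hz⟩
    · simp [hzA]
  exact ⟨_, (hl.congr hkl).union_of_isClosed (hm.congr hkm) hA hB, hkl, hkm⟩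

theorem HasLogOn.union {g : X → ℂ} {A B : Set X} (hA : IsClosed A) (hB : IsClosed B)
    (hgA : HasLogOn g A) (hgB : HasLogOn g B) (hAB : IsPreconnected (A ∩ B)) :
    HasLogOn g (A ∪ B) := by
  obtain ⟨l, hl, hlg⟩ := hgA
  obtain ⟨m, hm, hmg⟩ := hgB
  obtain ⟨c, hc, hlm⟩ : ∃ c : ℂ, Complex.exp c = 1 ∧ ∀ z ∈ A ∩ B, l z = m z + c := by
    rcases (A ∩ B).eq_empty_or_nonempty with hempty | ⟨a, ha⟩
    · exact ⟨0, Complex.exp_zero, by simp [hempty]⟩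
    have hexp : ∀ z ∈ A ∩ B, Complex.exp (l z) = Complex.exp (m z) := fun z hz ↦ by
      rw [hlg z hz.1, hmg z hz.2]
    refine ⟨l a - m a, ?_, fun z hz ↦ ?_⟩
    · rw [Complex.exp_sub, hexp a ha, div_self (Complex.exp_ne_zero _)]
    · rw [← sub_eq_sub_of_exp_eq hAB (hl.mono inter_subset_left) (hm.mono inter_subset_right)
        hexp hz ha, add_sub_cancel]
  obtain ⟨k, hk, hkl, hkm⟩ :=
    exists_continuousOn_union_eqOn hA hB hl (hm.add continuousOn_const) hlm
  refine ⟨k, hk, ?_⟩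
  rintro z (hz | hz)
  · rw [hkl hz, hlg z hz]
  · rw [hkm hz, Pi.add_apply, Complex.exp_add, hc, mul_one, hmg z hz]

namespace HasContinuousLogs

theorem of_leftInvOn {K : Set X} {L : Set Y} (hL : HasContinuousLogs L) {r : Y → X} {s : X → Y}
    (hr : ContinuousOn r L) (hs : ContinuousOn s K) (hrL : MapsTo r L K) (hsK : MapsTo s K L)
    (hrs : LeftInvOn r s K) : HasContinuousLogs K := fun g hg h0 ↦
  ((hL (g ∘ r) (hg.comp hr hrL) fun _ hz ↦ h0 _ (hrL hz)).comp hs hsK).congr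
    fun z hz ↦ by simp only [Function.comp_apply, hrs hz]

theorem of_retraction {K L : Set X} (hL : HasContinuousLogs L) {r : X → X} (hr : ContinuousOn r L)
    (hKL : K ⊆ L) (hrL : MapsTo r L K) (hrK : EqOn r id K) : HasContinuousLogs K :=
  hL.of_leftInvOn hr continuousOn_id hrL hKL hrK

theorem of_isSimplyConnected [LocallyPathConnectedSpace X] {U : Set X} (hU : IsOpen U)
    (hUc : IsSimplyConnected U) : HasContinuousLogs U := fun _ hg h0 ↦
  Complex.exists_continuousOn_eqOn_exp_comp hUc hU hg fun ⟨z, hz, hgz⟩ ↦ h0 z hz hgz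

theorem of_convex {E : Type*} [NormedAddCommGroup E] [NormedSpace ℝ E] {U : Set E}
    (hU : IsOpen U) (hUc : Convex ℝ U) (hne : U.Nonempty) : HasContinuousLogs U := by
  have := hUc.contractibleSpace hne
  exact of_isSimplyConnected hU (SimplyConnectedSpace.ofContractible U)

theorem univ {E : Type*} [NormedAddCommGroup E] [NormedSpace ℝ E] :
    HasContinuousLogs (univ : Set E) :=
  of_convex isOpen_univ convex_univ univ_nonempty

end HasContinuousLogs

theorem sub_eq_sub_of_exp_eq_comp {g : X → ℂ} {C : Set X} {m : X → ℂ} (hm : ContinuousOn m C)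
    (hmg : ∀ z ∈ C, Complex.exp (m z) = g z) [PreconnectedSpace Y] {γ : Y → X} (hγ : Continuous γ)
    (hγC : ∀ t, γ t ∈ C) {Γ : Y → ℂ} (hΓ : Continuous Γ) (hΓg : ∀ t, Complex.exp (Γ t) = g (γ t))
    (s t : Y) : Γ s - m (γ s) = Γ t - m (γ t) :=
  sub_eq_sub_of_exp_eq isPreconnected_univ hΓ.continuousOn
    (hm.comp_continuous hγ hγC).continuousOn
    (fun t _ ↦ (hΓg t).trans (hmg _ (hγC t)).symm) (mem_univ s) (mem_univ t)

-- Two paths with the same endpoints lie in a common compact set, and a logarithm there shows that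
-- lifting `g` along either of them gives the same end value.
theorem HasLogOn.of_forall_isCompact [LocallyPathConnectedSpace X] {U : Set X} (hU : IsOpen U)
    (hUp : IsPathConnected U) {g : X → ℂ} (hg : ContinuousOn g U) (h0 : ∀ z ∈ U, g z ≠ 0)
    (h : ∀ C ⊆ U, IsCompact C → HasLogOn g C) : HasLogOn g U := by
  classical
  have := isPathConnected_iff_pathConnectedSpace.1 hUp
  have := hU.locallyPathConnectedSpace
  obtain ⟨a, ha⟩ := hUp.nonempty
  let f : C(U, {z : ℂ // z ≠ 0}) := ⟨fun z ↦ ⟨g z, h0 z z.2⟩, hg.domRestrict.subtype_mk _⟩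
  have hexp : Complex.exp (Complex.log (g a)) = g a := Complex.exp_log (h0 a ha)
  have hlift : ∀ γ : C(unitInterval, U), γ 0 = ⟨a, ha⟩ → ∃ Γ : C(unitInterval, ℂ),
      Γ 0 = Complex.log (g a) ∧ (fun z ↦ ⟨_, z.exp_ne_zero⟩) ∘ Γ = f.comp γ := by
    intro γ hγ
    have hstart : f (γ 0) = ⟨_, Complex.exp_ne_zero (Complex.log (g a))⟩ := by
      rw [hγ]; exact Subtype.ext hexp.symm
    simpa only [and_comm] using
      Complex.isCoveringMap_exp.exists_path_lifts (f.comp γ) (Complex.log (g a)) hstart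
  have hunique : ∀ (γ γ' : C(unitInterval, U)) (Γ Γ' : C(unitInterval, ℂ)), γ 0 = ⟨a, ha⟩ →
      γ' 0 = ⟨a, ha⟩ → Γ 0 = Complex.log (g a) → Γ' 0 = Complex.log (g a) →
      (fun z ↦ ⟨_, z.exp_ne_zero⟩) ∘ Γ = f.comp γ →
      (fun z ↦ ⟨_, z.exp_ne_zero⟩) ∘ Γ' = f.comp γ' → γ 1 = γ' 1 → Γ 1 = Γ' 1 := by
    intro γ γ' Γ Γ' hγ hγ' hΓ hΓ' hlift hlift' hend
    obtain ⟨m, hm, hmg⟩ := h (range (fun t ↦ (γ t : X)) ∪ range (fun t ↦ (γ' t : X)))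
      (by rintro _ (⟨t, rfl⟩ | ⟨t, rfl⟩) <;> exact Subtype.coe_prop _)
      ((isCompact_range (by fun_prop)).union (isCompact_range (by fun_prop)))
    have hincr := sub_eq_sub_of_exp_eq_comp hm hmg (γ := fun t ↦ (γ t : X)) (by fun_prop)
      (fun t ↦ .inl ⟨t, rfl⟩) Γ.continuous (fun t ↦ congrArg Subtype.val (congrFun hlift t)) 0 1
    have hincr' := sub_eq_sub_of_exp_eq_comp hm hmg (γ := fun t ↦ (γ' t : X)) (by fun_prop)
      (fun t ↦ .inr ⟨t, rfl⟩) Γ'.continuous (fun t ↦ congrArg Subtype.val (congrFun hlift' t)) 0 1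
    rw [hγ, hΓ] at hincr
    rw [hγ', hΓ', ← hend] at hincr'
    linear_combination hincr' - hincr
  obtain ⟨F, ⟨-, hF⟩, -⟩ :=
    Complex.isCoveringMap_exp.isLocalHomeomorph.existsUnique_continuousMap_lifts f ⟨a, ha⟩
      (Complex.log (g a)) (Subtype.ext hexp) hlift hunique
  refine ⟨fun z ↦ if hz : z ∈ U then F ⟨z, hz⟩ else 0, ?_, fun z hz ↦ ?_⟩
  · rw [continuousOn_iff_continuous_domRestrict]
    exact F.continuous.congr fun z ↦ by simp
  · simp only [dif_pos hz]
    exact congrArg Subtype.val (congrFun hF ⟨z, hz⟩)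

theorem exists_continuous_eqOn.{u, v} {X : Type u} {Y : Type v} [TopologicalSpace X] [NormalSpace X]
    [TopologicalSpace Y] [TietzeExtension.{u, v} Y] {K : Set X} (hK : IsClosed K) {g : X → Y}
    (hg : ContinuousOn g K) : ∃ G : X → Y, Continuous G ∧ EqOn G g K := by
  obtain ⟨G, hG⟩ := ContinuousMap.exists_restrict_eq hK ⟨_, hg.domRestrict⟩
  exact ⟨G, G.continuous, fun z hz ↦ by simpa using DFunLike.congr_fun hG ⟨z, hz⟩⟩

end Logarithms

theorem frontier_connectedComponentIn_subset {X : Type*} [TopologicalSpace X]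
    [LocallyConnectedSpace X] {U : Set X} (hU : IsOpen U) (p : X) :
    frontier (connectedComponentIn U p) ⊆ Uᶜ := by
  intro z hz hzU
  rw [hU.connectedComponentIn.frontier_eq] at hz
  obtain ⟨w, hwz, hwp⟩ := mem_closure_iff.1 hz.1 _ hU.connectedComponentIn
    (mem_connectedComponentIn hzU)
  have heq : connectedComponentIn U z = connectedComponentIn U p :=
    (connectedComponentIn_eq hwz).trans (connectedComponentIn_eq hwp).symm
  exact hz.2 (heq ▸ mem_connectedComponentIn hzU)

theorem isPreconnected_compl_closedBall {E : Type*} [NormedAddCommGroup E] [NormedSpace ℝ E]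
    (hE : 1 < Module.rank ℝ E) (c : E) {R : ℝ} (hR : 0 ≤ R) :
    IsPreconnected (closedBall c R)ᶜ := by
  have himage :
      (closedBall c R)ᶜ = (fun x : ℝ × E ↦ c + x.1 • x.2) '' (Ioi R ×ˢ sphere (0 : E) 1) := by
    ext z
    simp only [mem_compl_iff, mem_closedBall_iff_norm, not_le, mem_image, mem_prod, mem_Ioi,
      mem_sphere_zero_iff_norm, Prod.exists]
    constructor
    · intro hz
      have hz0 : ‖z - c‖ ≠ 0 := (hR.trans_lt hz).ne'
      exact ⟨‖z - c‖, ‖z - c‖⁻¹ • (z - c), ⟨hz, by simp [norm_smul, hz0]⟩, by simp [hz0]⟩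
    · rintro ⟨r, x, ⟨hr, hx⟩, rfl⟩
      simpa [norm_smul, hx] using hr.trans_le (le_abs_self r)
  rw [himage]
  exact (isPreconnected_Ioi.prod (isPreconnected_sphere hE 0 1)).image _ (by fun_prop)

theorem not_hasLogOn_sphere (p : ℂ) {R : ℝ} (hR : 0 < R) :
    ¬ HasLogOn (fun z ↦ z - p) (sphere p R) := by
  rintro ⟨l, hl, hlexp⟩
  have hcircle : ∀ t : ℝ, circleMap p R t ∈ sphere p R := circleMap_mem_sphere p hR.le
  have hR' : (R : ℂ) ≠ 0 := by exact_mod_cast hR.ne'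
  have hincr := sub_eq_sub_of_exp_eq isPreconnected_univ
    (l := fun t : ℝ ↦ l (circleMap p R t)) (m := fun t : ℝ ↦ Complex.log R + t * Complex.I)
    (hl.comp_continuous (continuous_circleMap p R) hcircle).continuousOn (by fun_prop)
    (fun t _ ↦ by
      rw [hlexp _ (hcircle t), Complex.exp_add, Complex.exp_log hR']
      simp [circleMap]) (mem_univ 0) (mem_univ (2 * Real.pi))
  have hclosed : circleMap p R (2 * Real.pi) = circleMap p R 0 := by
    simpa using periodic_circleMap p R 0
  have hzero : (2 * Real.pi : ℂ) * Complex.I = 0 := by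
    simp only [hclosed] at hincr
    push_cast at hincr
    linear_combination hincr
  simp [Real.pi_ne_zero] at hzero

section Separation

variable {K : Set ℂ} {p q : ℂ}

theorem sub_ne_zero_of_mem_of_notMem {G : Type*} [AddGroup G] {K : Set G} {z p : G} (hz : z ∈ K)
    (hp : p ∉ K) : z - p ≠ 0 :=
  sub_ne_zero.2 (ne_of_mem_of_not_mem hz hp)

theorem hasLogOn_sub_div_sub_of_mem_ball {ε : ℝ} (hp : ball p ε ⊆ Kᶜ) (hq : q ∈ ball p ε) :
    HasLogOn (fun z ↦ (z - p) / (z - q)) K := by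
  have hne : ∀ z ∈ K, z - p ≠ 0 := fun z hz ↦
    sub_ne_zero_of_mem_of_notMem hz (hp (mem_ball_self (pos_of_mem_ball hq)))
  have hinv : HasLogOn (fun z ↦ (z - q) / (z - p)) K := by
    refine .of_norm_sub_lt (h := fun _ ↦ 1) (.div (by fun_prop) (by fun_prop) hne)
      continuousOn_const (.const one_ne_zero) fun z hz ↦ ?_
    have hεz : ε ≤ ‖z - p‖ := not_lt.1 fun hlt ↦ hp (mem_ball_iff_norm.2 hlt) hz
    rw [div_sub_one (hne z hz), norm_one, norm_div, div_lt_one (norm_pos_iff.2 (hne z hz)),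
      sub_sub_sub_cancel_left, norm_sub_rev]
    exact (mem_ball_iff_norm.1 hq).trans_le hεz
  exact hinv.inv.congr fun z _ ↦ (inv_div _ _).symm

theorem hasLogOn_sub_div_sub_of_isPreconnected {C : Set ℂ} (hK : IsClosed K)
    (hC : IsPreconnected C) (hCK : Disjoint C K) (hp : p ∈ C) (hq : q ∈ C) :
    HasLogOn (fun z ↦ (z - p) / (z - q)) K := by
  refine hC.induction₂ (fun p q ↦ HasLogOn (fun z ↦ (z - p) / (z - q)) K)
    (fun x hx ↦ ?_) (fun x y w _ hy _ hxy hyw ↦ ?_) (fun x y _ _ h ↦ ?_) hp hq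
  · obtain ⟨ε, hε, hball⟩ := isOpen_iff.1 hK.isOpen_compl x (disjoint_left.1 hCK hx)
    filter_upwards [mem_nhdsWithin_of_mem_nhds (ball_mem_nhds x hε)] with y hy
    exact hasLogOn_sub_div_sub_of_mem_ball hball hy
  · exact (hxy.mul hyw).congr fun z hz ↦
      (div_mul_div_cancel₀ (sub_ne_zero_of_mem_of_notMem hz (disjoint_left.1 hCK hy))).symm
  · exact h.inv.congr fun z _ ↦ (inv_div _ _).symm

theorem hasLogOn_sub_of_isPreconnected_compl (hK : IsCompact K) (hKc : IsPreconnected Kᶜ)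
    (hp : p ∉ K) : HasLogOn (fun z ↦ z - p) K := by
  obtain ⟨R, hR, hKR⟩ := hK.isBounded.subset_ball_lt 0 0
  have hRK : (R : ℂ) ∉ K := fun h ↦ by simpa [abs_of_pos hR] using hKR h
  have hlog : HasLogOn (fun z ↦ z - (R : ℂ)) K := by
    refine .of_mapsTo_ball (c := -(R : ℂ)) (by fun_prop) fun z hz ↦ ?_
    simpa [abs_of_pos hR] using hKR hz
  exact ((hasLogOn_sub_div_sub_of_isPreconnected hK.isClosed hKc disjoint_compl_left hp
    hRK).mul hlog).congr fun z hz ↦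
      (div_mul_cancel₀ _ (sub_ne_zero_of_mem_of_notMem hz hRK)).symm

-- Otherwise a logarithm would let one continue `z - p` from outside the component of `p` across
-- that component without zeros, and so provide a logarithm of `z - p` on a large circle.
theorem mem_connectedComponentIn_of_hasLogOn_of_isBounded (hK : IsClosed K) (hp : p ∉ K)
    (hq : q ∉ K) (hb : Bornology.IsBounded (connectedComponentIn Kᶜ p))
    (h : HasLogOn (fun z ↦ (z - p) / (z - q)) K) : q ∈ connectedComponentIn Kᶜ p := by
  classical
  by_contra hqp
  obtain ⟨l, hl, hlexp⟩ := h
  obtain ⟨G, hG, hGl⟩ := exists_continuous_eqOn hK hl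
  set U := connectedComponentIn Kᶜ p
  have hpU : p ∈ U := mem_connectedComponentIn hp
  have hfrontier : frontier U ⊆ K := by
    simpa using frontier_connectedComponentIn_subset hK.isOpen_compl p
  let H : ℂ → ℂ := fun z ↦ if z ∈ U then (z - q) * Complex.exp (G z) else z - p
  have hH : Continuous H := by
    refine Continuous.if (fun z hz ↦ ?_) (by fun_prop) (by fun_prop)
    rw [hGl (hfrontier hz), hlexp z (hfrontier hz),
      mul_div_cancel₀ _ (sub_ne_zero_of_mem_of_notMem (hfrontier hz) hq)]
  have hH0 : ∀ z ∈ univ, H z ≠ 0 := by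
    intro z _
    by_cases hz : z ∈ U
    · simpa only [H, if_pos hz] using
        mul_ne_zero (sub_ne_zero_of_mem_of_notMem hz hqp) (Complex.exp_ne_zero _)
    · simpa only [H, if_neg hz] using sub_ne_zero.2 (ne_of_mem_of_not_mem hpU hz).symm
  obtain ⟨R, hR, hUR⟩ := hb.subset_ball_lt 0 p
  refine not_hasLogOn_sphere p hR
    (((HasContinuousLogs.univ H hH.continuousOn hH0).mono (subset_univ _)).congr fun z hz ↦ ?_)
  exact (if_neg fun hzU ↦ (mem_ball.1 (hUR hzU)).ne hz).symm

theorem mem_connectedComponentIn_of_not_isBounded (hK : Bornology.IsBounded K)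
    (hp : ¬ Bornology.IsBounded (connectedComponentIn Kᶜ p))
    (hq : ¬ Bornology.IsBounded (connectedComponentIn Kᶜ q)) : q ∈ connectedComponentIn Kᶜ p := by
  obtain ⟨R, hR, hKR⟩ := hK.subset_ball_lt 0 0
  have hsub : (closedBall 0 R)ᶜ ⊆ Kᶜ := compl_subset_compl.2 (hKR.trans ball_subset_closedBall)
  have hmeets : ∀ S : Set ℂ, ¬ Bornology.IsBounded S → ∃ z ∈ S, z ∈ (closedBall 0 R)ᶜ := by
    intro S hS
    by_contra! hSR
    exact hS (isBounded_closedBall.subset fun z hz ↦ not_notMem.1 (hSR z hz))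
  obtain ⟨a, ha, haR⟩ := hmeets _ hp
  obtain ⟨b, hb, hbR⟩ := hmeets _ hq
  have hfar := (isPreconnected_compl_closedBall (by simp) 0 hR.le).subset_connectedComponentIn
    haR hsub
  rw [connectedComponentIn_eq ha, connectedComponentIn_eq (hfar hbR), ← connectedComponentIn_eq hb]
  exact mem_connectedComponentIn
    (connectedComponentIn_nonempty_iff.1 (nonempty_iff_ne_empty.2 fun h ↦ hq (by simp [h])))

theorem mem_connectedComponentIn_of_hasLogOn (hK : IsCompact K) (hp : p ∉ K) (hq : q ∉ K)
    (h : HasLogOn (fun z ↦ (z - p) / (z - q)) K) : q ∈ connectedComponentIn Kᶜ p := by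
  by_cases hbp : Bornology.IsBounded (connectedComponentIn Kᶜ p)
  · exact mem_connectedComponentIn_of_hasLogOn_of_isBounded hK.isClosed hp hq hbp h
  by_cases hbq : Bornology.IsBounded (connectedComponentIn Kᶜ q)
  · have hpq := mem_connectedComponentIn_of_hasLogOn_of_isBounded hK.isClosed hq hp hbq
      (h.inv.congr fun z _ ↦ (inv_div _ _).symm)
    rw [← connectedComponentIn_eq hpq]
    exact mem_connectedComponentIn hq
  exact mem_connectedComponentIn_of_not_isBounded hK.isBounded hbp hbq

theorem HasContinuousLogs.isPreconnected_compl (hK : IsCompact K) (h : HasContinuousLogs K) :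
    IsPreconnected Kᶜ := by
  refine isPreconnected_of_forall_pair fun p hp q hq ↦
    ⟨connectedComponentIn Kᶜ p, connectedComponentIn_subset _ _, mem_connectedComponentIn hp,
      mem_connectedComponentIn_of_hasLogOn hK hp hq (h _ ?_ fun z hz ↦ ?_),
      isPreconnected_connectedComponentIn⟩
  · exact .div (by fun_prop) (by fun_prop) fun z hz ↦ sub_ne_zero_of_mem_of_notMem hz hq
  · exact div_ne_zero (sub_ne_zero_of_mem_of_notMem hz hp) (sub_ne_zero_of_mem_of_notMem hz hq)

-- Janiszewski's theorem: the logarithms of `(z - p) / (z - q)` on `X` and on `Y` glue along the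
-- connected intersection.
theorem mem_connectedComponentIn_compl_union {X Y : Set ℂ} (hX : IsCompact X) (hY : IsCompact Y)
    (hXY : IsPreconnected (X ∩ Y)) {C D : Set ℂ} (hC : IsPreconnected C) (hD : IsPreconnected D)
    (hCX : Disjoint C X) (hDY : Disjoint D Y) (hpC : p ∈ C) (hqC : q ∈ C)
    (hpD : p ∈ D) (hqD : q ∈ D) : q ∈ connectedComponentIn (X ∪ Y)ᶜ p :=
  mem_connectedComponentIn_of_hasLogOn (hX.union hY)
    (fun h ↦ h.elim (disjoint_left.1 hCX hpC) (disjoint_left.1 hDY hpD))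
    (fun h ↦ h.elim (disjoint_left.1 hCX hqC) (disjoint_left.1 hDY hqD))
    (.union hX.isClosed hY.isClosed
      (hasLogOn_sub_div_sub_of_isPreconnected hX.isClosed hC hCX hpC hqC)
      (hasLogOn_sub_div_sub_of_isPreconnected hY.isClosed hD hDY hpD hqD) hXY)

end Separation

section RegularApproximation

variable {E F : Type*} [NormedAddCommGroup E] [NormedSpace ℝ E] [FiniteDimensional ℝ E]
  [NormedAddCommGroup F] [NormedSpace ℝ F]

open scoped ContDiff in
theorem exists_contDiff_forall_dist_lt [CompleteSpace F] {K : Set E} (hK : IsCompact K) {f : E → F}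
    (hf : Continuous f) {ε : ℝ} (hε : 0 < ε) :
    ∃ g : E → F, ContDiff ℝ ∞ g ∧ ∀ x ∈ K, dist (f x) (g x) < ε := by
  have hnear : ∀ᶠ g : C(E, F) in 𝓝 ⟨f, hf⟩, ∀ x ∈ K, dist (f x) (g x) < ε :=
    tendstoUniformlyOn_iff.1
      (ContinuousMap.tendsto_iff_forall_isCompact_tendstoUniformlyOn.1 tendsto_id K hK) ε hε
  obtain ⟨g, hg, hfg⟩ := ContinuousMap.dense_setOfPred_contDiff.inter_nhds_nonempty hnear
  exact ⟨g, hg, hfg⟩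

theorem exists_mem_ball_forall_injective_fderiv {f : E → E} (hf : Differentiable ℝ f) (c : E)
    {ε : ℝ} (hε : 0 < ε) :
    ∃ c' ∈ ball c ε, ∀ x, f x = c' → Function.Injective (fderiv ℝ f x) := by
  borelize E
  let μ : MeasureTheory.Measure E := MeasureTheory.Measure.addHaar
  have hnull : μ (f '' {x | (fderiv ℝ f x).det = 0}) = 0 :=
    MeasureTheory.addHaar_image_eq_zero_of_det_fderivWithin_eq_zero μ
      (fun x _ ↦ (hf x).hasFDerivAt.hasFDerivWithinAt) fun x hx ↦ hx
  obtain ⟨c', hc', hcrit⟩ := not_subset.1 fun hsub ↦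
    (measure_ball_pos μ c hε).ne' (MeasureTheory.measure_mono_null hsub hnull)
  refine ⟨c', hc', fun x hx ↦ LinearMap.ker_eq_bot.1 ?_⟩
  by_contra hker
  exact hcrit ⟨x, LinearMap.det_eq_zero_iff_ker_ne_bot.2 hker, hx⟩

theorem finite_inter_preimage_of_injective_fderiv {f : E → F} (hf : Differentiable ℝ f) {c : F}
    (hinj : ∀ x, f x = c → Function.Injective (fderiv ℝ f x)) {K : Set E} (hK : IsCompact K) :
    (K ∩ f ⁻¹' {c}).Finite := by
  by_contra hinf
  obtain ⟨x, -, hx⟩ := Set.Infinite.exists_accPt_of_subset_isCompact hinf hK inter_subset_left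
  have hfx : f x = c := (isClosed_singleton.preimage hf.continuous).closure_subset_iff.2
    inter_subset_right (mem_closure_iff_clusterPt.2 hx.clusterPt)
  obtain ⟨C, -, hC⟩ := (fderiv ℝ f x).toLinearMap.exists_antilipschitzWith
    (LinearMap.ker_eq_bot.2 (hinj x hfx))
  have hne := (hf x).hasFDerivAt.eventually_ne (c := c) ⟨C, hC⟩
  exact accPt_iff_frequently_nhdsNE.1 hx (hne.mono fun y hy hyK ↦ hy hyK.2)

end RegularApproximation

open scoped ComplexConjugate

/-- One of the two model maps `z ↦ z - p` and `z ↦ conj (z - p)` with a simple zero at `p`. -/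
def IsModelZero (q : ℂ → ℂ) (p : ℂ) : Prop :=
  (q = fun z ↦ z - p) ∨ q = fun z ↦ conj (z - p)

namespace IsModelZero

variable {q : ℂ → ℂ} {p : ℂ}

theorem continuous (hq : IsModelZero q p) : Continuous q := by
  rcases hq with rfl | rfl <;> fun_prop

theorem ne_zero (hq : IsModelZero q p) {z : ℂ} (hz : z ≠ p) : q z ≠ 0 := by
  rcases hq with rfl | rfl
  exacts [sub_ne_zero.2 hz, (map_ne_zero _).2 (sub_ne_zero.2 hz)]

theorem hasLogOn (hq : IsModelZero q p) {K : Set ℂ} (hK : HasLogOn (fun z ↦ z - p) K) :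
    HasLogOn q K := by
  rcases hq with rfl | rfl
  exacts [hK, hK.conj]

theorem hasLogOn_ball (hq : IsModelZero q p) (c : ℂ) : HasLogOn q (ball c ‖c - p‖) :=
  hq.hasLogOn <| .of_mapsTo_ball (c := c - p) (by fun_prop) fun z hz ↦ by
    simpa [mem_ball_iff_norm] using hz

end IsModelZero

/-- `g` has index `±1` at `p`: on all small circles around `p` it agrees with a model zero up to a
factor with a continuous logarithm. -/
def HasUnitIndexAt (g : ℂ → ℂ) (p : ℂ) : Prop :=
  ∃ q, IsModelZero q p ∧ ∀ᶠ r in 𝓝[>] 0, HasLogOn (fun z ↦ g z / q z) (sphere p r)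

theorem eventually_sphere_subset {X : Type*} [PseudoMetricSpace X] {p : X} {S : Set X}
    (hS : S ∈ 𝓝[≠] p) : ∀ᶠ r in 𝓝[>] 0, sphere p r ⊆ S := by
  obtain ⟨ε, hε, hball⟩ := mem_nhdsWithin_iff.1 hS
  filter_upwards [Ioo_mem_nhdsGT hε] with r hr z hz
  refine hball ⟨mem_ball.2 ((mem_sphere.1 hz).trans_lt hr.2), ?_⟩
  rintro rfl
  simp [hr.1.ne] at hz

theorem HasUnitIndexAt.mul {g u h : ℂ → ℂ} {p : ℂ} {S : Set ℂ} (hg : HasUnitIndexAt g p)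
    (hS : S ∈ 𝓝 p) (hu : HasLogOn u S) (hh : ∀ᶠ z in 𝓝 p, h z = g z * u z) :
    HasUnitIndexAt h p := by
  obtain ⟨q, hq, hlog⟩ := hg
  refine ⟨q, hq, ?_⟩
  filter_upwards [hlog, eventually_sphere_subset (mem_nhdsWithin_of_mem_nhds hS),
    eventually_sphere_subset (mem_nhdsWithin_of_mem_nhds hh)] with r hr hrS hrh
  exact (hr.mul (hu.mono hrS)).congr fun z hz ↦ by
    have hz' : h z = g z * u z := hrh hz
    simp only [hz', div_mul_eq_mul_div]

theorem norm_ne_of_injective {a b : ℂ} (h : Function.Injective fun w : ℂ ↦ a * w + b * conj w) :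
    ‖a‖ ≠ ‖b‖ := by
  intro hab
  rcases eq_or_ne a 0 with rfl | ha
  · exact one_ne_zero (h (by simp [norm_eq_zero.1 (hab.symm.trans norm_zero)] : _ = _))
  obtain ⟨w, hw⟩ := IsAlgClosed.exists_eq_mul_self (-b / a)
  have hw1 : ‖w‖ = 1 := by
    rw [← sq_eq_sq₀ (norm_nonneg w) zero_le_one, sq, ← norm_mul, ← hw, norm_div, norm_neg, ← hab,
      div_self (norm_ne_zero_iff.2 ha), one_pow]
  have hconj : w * conj w = 1 := by rw [Complex.mul_conj']; simp [hw1]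
  have hkernel : a * w + b * conj w = 0 := by
    have hb : a * (w * w) = -b := by rw [← hw, mul_div_cancel₀ _ ha]
    linear_combination conj w * hb - a * w * hconj
  have hw0 : w = 0 := h (by simpa using hkernel)
  simp [hw0] at hw1

theorem exists_forall_eq_mul_add_mul_conj (L : ℂ →L[ℝ] ℂ) :
    ∃ a b : ℂ, ∀ w, L w = a * w + b * conj w := by
  refine ⟨(L 1 - Complex.I * L Complex.I) / 2, (L 1 + Complex.I * L Complex.I) / 2, fun w ↦ ?_⟩
  have hL : L w = w.re * L 1 + w.im * L Complex.I := by
    conv_lhs => rw [← Complex.re_add_im w]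
    rw [map_add, ← Complex.real_smul, ← Complex.real_smul, ← Complex.real_smul, ← L.map_smul,
      ← L.map_smul, Complex.real_smul, Complex.real_smul, mul_one]
  rw [hL]
  nth_rewrite 3 4 [← Complex.re_add_im w]
  simp only [map_add, map_mul, Complex.conj_ofReal, Complex.conj_I]
  linear_combination w.im * L Complex.I * Complex.I_sq

theorem hasUnitIndexAt_of_isLittleO {g : ℂ → ℂ} {a b p : ℂ} (hg : Continuous g) {q₁ q₂ : ℂ → ℂ}
    (hq₁ : IsModelZero q₁ p) (hq₂ : IsModelZero q₂ p) (hab : ‖b‖ < ‖a‖)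
    (h : (fun z ↦ g z - (a * q₁ z + b * q₂ z)) =o[𝓝 p] fun z ↦ z - p) : HasUnitIndexAt g p := by
  refine ⟨q₁, hq₁, ?_⟩
  have hnorm : ∀ {q : ℂ → ℂ}, IsModelZero q p → ∀ z, ‖q z‖ = ‖z - p‖ := by
    rintro q (rfl | rfl) z
    exacts [rfl, RCLike.norm_conj _]
  have hnear : ∀ᶠ z in 𝓝 p, ‖g z - (a * q₁ z + b * q₂ z)‖ ≤ (‖a‖ - ‖b‖) / 2 * ‖z - p‖ :=
    h.def (half_pos (sub_pos.2 hab))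
  filter_upwards [eventually_sphere_subset (mem_nhdsWithin_of_mem_nhds hnear), self_mem_nhdsWithin]
    with r hr hr0
  have hne : ∀ z ∈ sphere p r, q₁ z ≠ 0 := fun z hz ↦ hq₁.ne_zero (ne_of_mem_sphere hz hr0.ne')
  refine .of_mapsTo_ball (c := a) (hg.continuousOn.div hq₁.continuous.continuousOn hne) ?_
  intro z hz
  have hzp : 0 < ‖z - p‖ := norm_pos_iff.2 (sub_ne_zero.2 (ne_of_mem_sphere hz hr0.ne'))
  rw [mem_ball_iff_norm, div_sub' (hne z hz), norm_div, hnorm hq₁, div_lt_iff₀ hzp]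
  calc ‖g z - q₁ z * a‖ = ‖(g z - (a * q₁ z + b * q₂ z)) + b * q₂ z‖ := by ring_nf
    _ ≤ (‖a‖ - ‖b‖) / 2 * ‖z - p‖ + ‖b‖ * ‖z - p‖ := by
      refine (norm_add_le _ _).trans (add_le_add (hr hz) ?_)
      rw [norm_mul, hnorm hq₂]
    _ < ‖a‖ * ‖z - p‖ := by nlinarith

theorem hasUnitIndexAt_of_injective_fderiv {g : ℂ → ℂ} (hg : Differentiable ℝ g) {p : ℂ}
    (hp : g p = 0) (hinj : Function.Injective (fderiv ℝ g p)) : HasUnitIndexAt g p := by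
  obtain ⟨a, b, hab⟩ := exists_forall_eq_mul_add_mul_conj (fderiv ℝ g p)
  have hne : ‖a‖ ≠ ‖b‖ := norm_ne_of_injective (by simpa only [← hab] using hinj)
  have hlin : (fun z ↦ g z - (a * (z - p) + b * conj (z - p))) =o[𝓝 p] fun z ↦ z - p := by
    simpa only [hp, sub_zero, hab] using (hg p).hasFDerivAt.isLittleO
  rcases hne.lt_or_gt with hlt | hlt
  · exact hasUnitIndexAt_of_isLittleO hg.continuous (.inr rfl) (.inl rfl) hlt
      (by simpa only [add_comm] using hlin)
  · exact hasUnitIndexAt_of_isLittleO hg.continuous (.inl rfl) (.inr rfl) hlt hlin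

theorem exists_continuous_eqOn_compl_of_hasLogOn_frontier {X : Type*} [TopologicalSpace X]
    [NormalSpace X] {U : Set X} (hU : IsOpen U) {g : X → ℂ} (hg : ContinuousOn g Uᶜ)
    (hlog : HasLogOn g (frontier U)) :
    ∃ h : X → ℂ, Continuous h ∧ EqOn h g Uᶜ ∧ ∀ z ∈ U, h z ≠ 0 := by
  obtain ⟨l, hl, hlg⟩ := hlog
  obtain ⟨m, hm, hml⟩ := exists_continuous_eqOn isClosed_frontier hl
  obtain ⟨h, hh, hhm, hhg⟩ := exists_continuousOn_union_eqOn isClosed_closure hU.isClosed_compl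
    (Complex.continuous_exp.comp hm).continuousOn hg fun z hz ↦ by
      have hzU : z ∈ frontier U := by rwa [hU.frontier_eq, sdiff_eq]
      rw [Function.comp_apply, hml hzU, hlg z hzU]
  have hcover : closure U ∪ Uᶜ = univ :=
    univ_subset_iff.1 ((union_compl_self U).ge.trans (union_subset_union_left _ subset_closure))
  rw [hcover, continuousOn_univ] at hh
  exact ⟨h, hh, hhg, fun z hz ↦ by
    rw [hhm (subset_closure hz)]
    exact Complex.exp_ne_zero _⟩

-- Induction on the number of zeros: dividing by a model zero at `p` turns the logarithm on a small
-- circle around `p` into a zero-free extension over the enclosed disk.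
theorem hasLogOn_of_hasUnitIndexAt {K U : Set ℂ} (hK : IsCompact K) (hKc : IsPreconnected Kᶜ)
    (hKU : K ⊆ U) (hU : HasContinuousLogs U) (Z : Finset ℂ) (hZK : ∀ p ∈ Z, p ∉ K) {g : ℂ → ℂ}
    (hg : Continuous g) (hzero : ∀ z ∈ U, g z = 0 → z ∈ Z) (hZ : ∀ p ∈ Z, HasUnitIndexAt g p) :
    HasLogOn g K := by
  induction Z using Finset.induction_on generalizing g with
  | empty =>
    exact (hU g hg.continuousOn fun z hz h ↦ Finset.notMem_empty z (hzero z hz h)).mono hKU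
  | insert p Z hpZ ih =>
    rw [Finset.forall_mem_insert] at hZK hZ
    obtain ⟨⟨q, hq, hlog⟩, hZ⟩ := hZ
    have hfar : (K ∪ Z : Set ℂ)ᶜ ∈ 𝓝 p := (hK.isClosed.union Z.finite_toSet.isClosed).compl_mem_nhds
      (not_or.2 ⟨hZK.1, hpZ⟩)
    obtain ⟨r, ⟨hr, hr0⟩, hdisj⟩ := ((hlog.and self_mem_nhdsWithin).and
      (nhdsWithin_le_nhds (eventually_closedBall_subset hfar))).exists
    have hcl : IsClosed (ball p r)ᶜ := isOpen_ball.isClosed_compl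
    have hne : ∀ z ∈ (ball p r)ᶜ, q z ≠ 0 := fun z hz ↦ hq.ne_zero <| by
      rintro rfl
      exact hz (mem_ball_self hr0)
    obtain ⟨h, hh, hhg, hh0⟩ := exists_continuous_eqOn_compl_of_hasLogOn_frontier isOpen_ball
      (hg.continuousOn.div hq.continuous.continuousOn hne) (by rwa [frontier_ball p hr0.ne'])
    have hout : ∀ z ∈ (K ∪ Z : Set ℂ), z ∈ (closedBall p r)ᶜ := fun z hz hzr ↦ hdisj hzr hz
    have hKr : K ⊆ (ball p r)ᶜ := fun z hz hzr ↦ hout z (.inl hz) (ball_subset_closedBall hzr)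
    have hhK : HasLogOn h K := by
      refine ih hZK.2 hh (fun z hzU hz ↦ ?_) fun p' hp' ↦ ?_
      · have hzr : z ∈ (ball p r)ᶜ := fun hzr ↦ hh0 z hzr hz
        have hgz : g z = 0 := by simpa [hhg hzr, hne z hzr] using hz
        refine (Finset.mem_insert.1 (hzero z hzU hgz)).resolve_left ?_
        rintro rfl
        exact hzr (mem_ball_self hr0)
      · have hp'p : p' ≠ p := ne_of_mem_of_not_mem hp' hpZ
        refine (hZ p' hp').mul (ball_mem_nhds p' (norm_pos_iff.2 (sub_ne_zero.2 hp'p)))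
          (hq.hasLogOn_ball p').inv ?_
        filter_upwards [isClosed_closedBall.isOpen_compl.mem_nhds (hout p' (.inr hp'))] with z hz
        rw [hhg fun hzr ↦ hz (ball_subset_closedBall hzr), Pi.div_apply, div_eq_mul_inv]
    have hqK : HasLogOn q K := hq.hasLogOn (hasLogOn_sub_of_isPreconnected_compl hK hKc hZK.1)
    exact (hhK.mul hqK).congr fun z hz ↦ by
      simp only [hhg (hKr hz), Pi.div_apply, div_mul_cancel₀ _ (hne z (hKr hz))]

-- Borsuk's theorem: approximate by a smooth map with finitely many regular zeros, all outside `K`,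
-- and divide these zeros out.
theorem hasContinuousLogs_of_isPreconnected_compl {K : Set ℂ} (hK : IsCompact K)
    (hKc : IsPreconnected Kᶜ) : HasContinuousLogs K := by
  intro g hg h0
  obtain ⟨δ, hδ, hδg⟩ := hK.exists_forall_le' hg.norm fun z hz ↦ norm_pos_iff.2 (h0 z hz)
  obtain ⟨f, hf, hfg⟩ := exists_continuous_eqOn hK.isClosed hg
  obtain ⟨s, hs, hfs⟩ := exists_contDiff_forall_dist_lt hK hf (ε := δ / 4) (by positivity)
  obtain ⟨c, hc, hreg⟩ := exists_mem_ball_forall_injective_fderiv (hs.differentiable (by simp)) 0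
    (ε := δ / 4) (by positivity)
  let G : ℂ → ℂ := fun z ↦ s z - c
  have hG : Differentiable ℝ G := (hs.differentiable (by simp)).sub_const c
  have hinj : ∀ z, G z = 0 → Function.Injective (fderiv ℝ G z) := fun z hz ↦ by
    rw [fderiv_sub_const]
    exact hreg z (sub_eq_zero.1 hz)
  have hclose : ∀ z ∈ K, ‖g z - G z‖ < ‖G z‖ := fun z hz ↦ by
    have hsum : ‖g z - G z‖ < δ / 4 + δ / 4 := by
      rw [show g z - G z = (f z - s z) + c by simp only [G, hfg hz]; ring]
      exact (norm_add_le _ _).trans_lt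
        (add_lt_add (by simpa [dist_eq_norm] using hfs z hz) (mem_ball_zero_iff.1 hc))
    linarith [hδg z hz, norm_sub_norm_le (g z) (G z)]
  obtain ⟨R, hR, hKR⟩ := hK.isBounded.subset_ball_lt 0 0
  have hfin : (closedBall 0 R ∩ G ⁻¹' {0}).Finite :=
    finite_inter_preimage_of_injective_fderiv hG hinj (isCompact_closedBall 0 R)
  refine .of_norm_sub_lt hg hG.continuous.continuousOn ?_ hclose
  refine hasLogOn_of_hasUnitIndexAt hK hKc hKR
    (.of_convex isOpen_ball (convex_ball 0 R) (nonempty_ball.2 hR)) hfin.toFinset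
    (fun p hp hpK ↦ ?_) hG.continuous (fun z hz hGz ↦ ?_) fun p hp ↦ ?_
  · have hGp : G p = 0 := (hfin.mem_toFinset.1 hp).2
    simpa [hGp] using (norm_nonneg _).trans_lt (hclose p hpK)
  · exact hfin.mem_toFinset.2 ⟨ball_subset_closedBall hz, hGz⟩
  · have hGp : G p = 0 := (hfin.mem_toFinset.1 hp).2
    exact hasUnitIndexAt_of_injective_fderiv hG hGp (hinj p hGp)

-- If the complement were connected, the function equal to `1` on `Y` and to `exp (2πi t)` on `X`,
-- with `t` running from `0` at `u` to `1` at `v`, would have a logarithm; but that logarithm would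
-- be constant on `Y` and grow by `2πi` from `u` to `v` on `X`.
theorem not_isPreconnected_compl_of_inter_eq_pair {X Y : Set ℂ} (hX : IsCompact X)
    (hY : IsCompact Y) (hXc : IsPreconnected X) (hYc : IsPreconnected Y) {u v : ℂ} (huv : u ≠ v)
    (hXY : X ∩ Y = {u, v}) : ¬ IsPreconnected (X ∪ Y)ᶜ := by
  intro hc
  have hu : u ∈ X ∩ Y := by simp [hXY]
  have hv : v ∈ X ∩ Y := by simp [hXY]
  let φ : ℂ → ℂ := fun z ↦ 2 * Real.pi * Complex.I * (‖z - u‖ / ‖v - u‖ : ℝ)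
  have hφ : Continuous φ := by fun_prop
  have hφu : φ u = 0 := by simp [φ]
  have hφv : φ v = 2 * Real.pi * Complex.I := by
    have : v - u ≠ 0 := sub_ne_zero.2 huv.symm
    simp [φ, this]
  obtain ⟨g, hg, hgX, hgY⟩ := exists_continuousOn_union_eqOn hX.isClosed hY.isClosed
    (l := fun z ↦ Complex.exp (φ z)) (m := fun _ ↦ 1) (by fun_prop) continuousOn_const (by
      rw [hXY]
      rintro z (rfl | rfl)
      · simp only [hφu, Complex.exp_zero]
      · simp only [hφv, Complex.exp_two_pi_mul_I])
  obtain ⟨l, hl, hlg⟩ := hasContinuousLogs_of_isPreconnected_compl (hX.union hY) hc g hg (by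
    rintro z (hz | hz)
    · simp only [hgX hz, ne_eq, Complex.exp_ne_zero, not_false_eq_true]
    · simp only [hgY hz, ne_eq, one_ne_zero, not_false_eq_true])
  have hlY : l u = l v := eq_of_exp_eq_one hYc (hl.mono subset_union_right)
    (fun z hz ↦ (hlg z (.inr hz)).trans (hgY hz)) hu.2 hv.2
  have hlX : l u - φ u = l v - φ v := sub_eq_sub_of_exp_eq hXc (hl.mono subset_union_left)
    hφ.continuousOn (fun z hz ↦ (hlg z (.inl hz)).trans (hgX hz)) hu.1 hv.1
  rw [hlY, hφu, hφv] at hlX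
  exact Complex.two_pi_I_ne_zero (by linear_combination hlX)

theorem exists_continuousOn_image_leftInvOn {X Y : Type*} [TopologicalSpace X]
    [TopologicalSpace Y] [T2Space Y] [Nonempty X] {K : Set X} (hK : IsCompact K) {h : X → Y}
    (hc : ContinuousOn h K) (hi : InjOn h K) :
    ∃ k : Y → X, ContinuousOn k (h '' K) ∧ LeftInvOn k h K := by
  classical
  have hk : LeftInvOn (Function.invFunOn h K) h K := hi.leftInvOn_invFunOn
  refine ⟨_, continuousOn_iff_isClosed.2 fun t ht ↦ ⟨h '' (K ∩ t),
    ((hK.inter_right ht).image_of_continuousOn (hc.mono inter_subset_left)).isClosed, ?_⟩, hk⟩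
  ext y
  constructor
  · rintro ⟨hy, z, hz, rfl⟩
    rw [mem_preimage, hk hz] at hy
    exact ⟨⟨z, ⟨hz, hy⟩, rfl⟩, z, hz, rfl⟩
  · rintro ⟨⟨z, ⟨hz, hzt⟩, rfl⟩, -⟩
    exact ⟨by rwa [mem_preimage, hk hz], z, hz, rfl⟩

theorem HasContinuousLogs.image {X Y : Type*} [TopologicalSpace X] [TopologicalSpace Y]
    [T2Space Y] {K : Set X} (hK : IsCompact K) (hl : HasContinuousLogs K) {h : X → Y}
    (hc : ContinuousOn h K) (hi : InjOn h K) : HasContinuousLogs (h '' K) := by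
  rcases K.eq_empty_or_nonempty with rfl | ⟨x, -⟩
  · exact fun g _ _ ↦ ⟨0, by simp, by simp⟩
  have : Nonempty X := ⟨x⟩
  obtain ⟨k, hk, hkh⟩ := exists_continuousOn_image_leftInvOn hK hc hi
  refine hl.of_leftInvOn hc hk (mapsTo_image h K) ?_ ?_
  · rintro _ ⟨z, hz, rfl⟩
    rwa [hkh hz]
  · rintro _ ⟨z, hz, rfl⟩
    rw [hkh hz]

theorem hasContinuousLogs_Icc (p q : ℝ) : HasContinuousLogs (Icc p q) := by
  rcases le_or_gt p q with hpq | hqp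
  · refine HasContinuousLogs.univ.of_retraction (r := fun t ↦ projIcc p q hpq t)
      (by fun_prop) (subset_univ _) (fun t _ ↦ (projIcc p q hpq t).2) fun t ht ↦ ?_
    simp only [projIcc_of_mem hpq ht, id]
  · exact fun g _ _ ↦ ⟨0, by simp [hqp], by simp [hqp]⟩

section Disk

variable {h : ℂ → ℂ} {c : ℂ} {R : ℝ}

theorem hasContinuousLogs_closedBall (c : ℂ) (hR : 0 ≤ R) : HasContinuousLogs (closedBall c R) :=
  hasContinuousLogs_of_isPreconnected_compl (isCompact_closedBall c R)
    (isPreconnected_compl_closedBall (by simp) c hR)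

theorem not_hasContinuousLogs_sphere (c : ℂ) (hR : 0 < R) : ¬ HasContinuousLogs (sphere c R) :=
  fun h ↦ not_hasLogOn_sphere c hR (h _ (by fun_prop)
    fun _ hz ↦ sub_ne_zero.2 (ne_of_mem_sphere hz hR.ne'))

theorem not_isPreconnected_compl_image_sphere (hR : 0 < R) (hc : ContinuousOn h (sphere c R))
    (hi : InjOn h (sphere c R)) : ¬ IsPreconnected (h '' sphere c R)ᶜ := by
  intro hpre
  obtain ⟨k, hk, hkh⟩ := exists_continuousOn_image_leftInvOn (isCompact_sphere c R) hc hi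
  refine not_hasContinuousLogs_sphere c hR ((hasContinuousLogs_of_isPreconnected_compl
    ((isCompact_sphere c R).image_of_continuousOn hc) hpre).of_leftInvOn hk hc ?_
    (mapsTo_image _ _) hkh)
  rintro _ ⟨z, hz, rfl⟩
  rwa [hkh hz]

theorem isPreconnected_union_of_mem_closure {X : Type*} [TopologicalSpace X] {A B : Set X}
    (hA : IsPreconnected A) (hB : IsPreconnected B) {x : X} (hxA : x ∈ A) (hxB : x ∈ closure B) :
    IsPreconnected (A ∪ B) := by
  have hinsert : IsPreconnected (insert x B) :=
    hB.subset_closure (subset_insert _ _) (insert_subset hxB subset_closure)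
  simpa [union_insert, ← insert_union, insert_eq_of_mem hxA] using
    hA.union x hxA (mem_insert _ _) hinsert

-- The image of the disk and the complement of the image of the closed disk are both connected,
-- whereas together they fill the disconnected complement of the image of the circle.
theorem isOpen_image_ball (hR : 0 < R) (hc : ContinuousOn h (closedBall c R))
    (hi : InjOn h (closedBall c R)) : IsOpen (h '' ball c R) := by
  have hcS : ContinuousOn h (sphere c R) := hc.mono sphere_subset_closedBall
  have hdisk : IsPreconnected (h '' closedBall c R)ᶜ :=
    ((hasContinuousLogs_closedBall c hR.le).image (isCompact_closedBall c R) hc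
      hi).isPreconnected_compl ((isCompact_closedBall c R).image_of_continuousOn hc)
  have hball : IsPreconnected (h '' ball c R) :=
    (convex_ball c R).isPreconnected.image h (hc.mono ball_subset_closedBall)
  have hdisj : Disjoint (h '' ball c R) (h '' sphere c R) :=
    sphere_disjoint_ball.symm.image hi ball_subset_closedBall sphere_subset_closedBall
  have hcompl : (h '' sphere c R)ᶜ = h '' ball c R ∪ (h '' closedBall c R)ᶜ := by
    rw [← ball_union_sphere, image_union, compl_union, union_inter_distrib_left, union_compl_self,
      univ_inter, union_eq_right.2 hdisj.subset_compl_right]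
  have hclosure : Disjoint (h '' ball c R) (closure (h '' closedBall c R)ᶜ) :=
    disjoint_left.2 fun x hx hxcl ↦
      not_isPreconnected_compl_image_sphere hR hcS (hi.mono sphere_subset_closedBall)
        (hcompl ▸ isPreconnected_union_of_mem_closure hball hdisk hx hxcl)
  have heq : h '' ball c R = (h '' sphere c R)ᶜ \ closure (h '' closedBall c R)ᶜ := by
    rw [hcompl, union_sdiff_distrib, hclosure.sdiff_eq_left, sdiff_eq_empty.2 subset_closure,
      union_empty]
  rw [heq]
  exact ((isCompact_sphere c R).image_of_continuousOn hcS).isClosed.isOpen_compl.sdiff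
    isClosed_closure

end Disk

theorem subset_ball_of_isPreconnected {X : Type*} [PseudoMetricSpace X] {S : Set X} {x p : X}
    {ε : ℝ} (hS : IsPreconnected S) (hdisj : Disjoint S (sphere x ε)) (hpS : p ∈ S)
    (hpx : p ∈ ball x ε) : S ⊆ ball x ε := by
  intro y hy
  by_contra hyx
  obtain ⟨z, hz, hzε⟩ := hS.intermediate_value hpS hy (f := fun z ↦ dist z x) (by fun_prop)
    ⟨(mem_ball.1 hpx).le, not_lt.1 hyx⟩
  exact disjoint_left.1 hdisj hz hzε

-- Janiszewski's theorem, applied to `A` and `B ∪ sphere x ε`, whose intersection is `B`.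
theorem exists_isPreconnected_subset_ball {A B W : Set ℂ} (hA : IsCompact A) (hB : IsCompact B)
    (hBA : B ⊆ A) (hBc : IsPreconnected B) (hW : IsPreconnected W) (hWA : Disjoint W A) {x : ℂ}
    {ε δ : ℝ} (hxA : A ⊆ B ∪ ball x ε) (hδε : δ ≤ ε) (hxB : Disjoint (ball x δ) B) {p q : ℂ}
    (hp : p ∈ W) (hq : q ∈ W) (hpx : p ∈ ball x δ) (hqx : q ∈ ball x δ) :
    ∃ S, IsPreconnected S ∧ p ∈ S ∧ q ∈ S ∧ S ⊆ ball x ε ∧ Disjoint S A := by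
  have hinter : A ∩ (B ∪ sphere x ε) = B := by
    refine Subset.antisymm ?_ fun z hz ↦ ⟨hBA hz, .inl hz⟩
    rintro z ⟨hzA, hz | hz⟩
    · exact hz
    · exact (hxA hzA).resolve_right fun h ↦ disjoint_left.1 sphere_disjoint_ball hz h
  have hδ : Disjoint (ball x δ) (sphere x ε) :=
    sphere_disjoint_ball.symm.mono_left (ball_subset_ball hδε)
  have hpA : p ∉ A ∪ sphere x ε :=
    fun h ↦ h.elim (disjoint_left.1 hWA hp) (disjoint_left.1 hδ hpx)
  have hcomp : connectedComponentIn (A ∪ sphere x ε)ᶜ p ⊆ (A ∪ sphere x ε)ᶜ :=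
    connectedComponentIn_subset _ p
  refine ⟨connectedComponentIn (A ∪ sphere x ε)ᶜ p, isPreconnected_connectedComponentIn,
    mem_connectedComponentIn hpA, ?_,
    subset_ball_of_isPreconnected isPreconnected_connectedComponentIn
      (disjoint_left.2 fun z hz hzε ↦ hcomp hz (.inr hzε)) (mem_connectedComponentIn hpA)
      (ball_subset_ball hδε hpx),
    disjoint_left.2 fun z hz hzA ↦ hcomp hz (.inl hzA)⟩
  have hjan := mem_connectedComponentIn_compl_union hA (hB.union (isCompact_sphere x ε))
    (by rwa [hinter]) hW (convex_ball x δ).isPreconnected hWA (disjoint_union_right.2 ⟨hxB, hδ⟩)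
    hp hq hpx hqx
  rwa [← union_assoc, union_eq_left.2 hBA] at hjan

theorem isPreconnected_thickening {E : Type*} [SeminormedAddCommGroup E] [NormedSpace ℝ E]
    {S : Set E} (hS : IsPreconnected S) (δ : ℝ) : IsPreconnected (thickening δ S) := by
  rw [← add_ball_zero, ← Set.add_image_prod]
  exact (hS.prod (convex_ball 0 δ).isPreconnected).image _ continuous_add.continuousOn

theorem exists_isCompact_isPreconnected_compl {U C : Set ℂ} (hU : IsOpen U)
    (hb : Bornology.IsBounded U) (hUc : IsPreconnected Uᶜ) (hC : IsCompact C) (hCU : C ⊆ U) :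
    ∃ K, IsCompact K ∧ C ⊆ K ∧ K ⊆ U ∧ IsPreconnected Kᶜ := by
  obtain ⟨δ, hδ, hδU⟩ := hC.exists_thickening_subset_open hU hCU
  have hsub : (thickening δ Uᶜ)ᶜ ⊆ U := compl_subset_comm.1 (self_subset_thickening hδ _)
  refine ⟨(thickening δ Uᶜ)ᶜ, isCompact_of_isClosed_isBounded
    isOpen_thickening.isClosed_compl (hb.subset hsub), fun z hz hzt ↦ ?_, hsub, ?_⟩
  · obtain ⟨w, hw, hzw⟩ := mem_thickening_iff.1 hzt
    exact hw (hδU (mem_thickening_iff.2 ⟨z, hz, by rwa [dist_comm]⟩))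
  · rw [compl_compl]
    exact isPreconnected_thickening hUc δ

theorem hasContinuousLogs_of_isOpen {U : Set ℂ} (hU : IsOpen U) (hUp : IsConnected U)
    (hb : Bornology.IsBounded U) (hUc : IsPreconnected Uᶜ) : HasContinuousLogs U := by
  intro g hg h0
  refine .of_forall_isCompact hU (hU.isConnected_iff_isPathConnected.1 hUp) hg h0 fun C hCU hC ↦ ?_
  obtain ⟨K, hK, hCK, hKU, hKc⟩ := exists_isCompact_isPreconnected_compl hU hb hUc hC hCU
  exact (hasContinuousLogs_of_isPreconnected_compl hK hKc g (hg.mono hKU)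
    fun z hz ↦ h0 z (hKU hz)).mono hCK

section LocallyUniformLimits

theorem le_norm_of_forall_mem_frontier_le_norm {E : Type*} [NormedAddCommGroup E]
    [NormedSpace ℂ E] [Nontrivial E] {f : E → ℂ} {V : Set E} (hV : Bornology.IsBounded V)
    (hd : DiffContOnCl ℂ f V) (h0 : ∀ x ∈ closure V, f x ≠ 0) {C : ℝ}
    (hC : ∀ x ∈ frontier V, C ≤ ‖f x‖) {z : E} (hz : z ∈ closure V) : C ≤ ‖f z‖ := by
  rcases le_or_gt C 0 with hC0 | hC0
  · exact hC0.trans (norm_nonneg _)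
  have hinv := Complex.norm_le_of_forall_mem_frontier_norm_le hV (hd.inv h0) (C := C⁻¹)
    (fun x hx ↦ by
      rw [Pi.inv_apply, norm_inv]
      exact inv_anti₀ hC0 (hC x hx)) hz
  rw [Pi.inv_apply, norm_inv] at hinv
  exact (inv_le_inv₀ (norm_pos_iff.2 (h0 z hz)) hC0).1 hinv

-- Hurwitz's theorem: an isolated zero of the limit would violate the minimum modulus principle for
-- the approximants on a small disk.
theorem eventually_eq_zero_of_tendstoLocallyUniformlyOn {ι : Type*} {φ : Filter ι} [φ.NeBot]
    {G : ι → ℂ → ℂ} {g : ℂ → ℂ} {U : Set ℂ} (hU : IsOpen U)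
    (hGg : TendstoLocallyUniformlyOn G g φ U) (hd : ∀ᶠ n in φ, DifferentiableOn ℂ (G n) U)
    (h0 : ∀ᶠ n in φ, ∀ z ∈ U, G n z ≠ 0) {z : ℂ} (hz : z ∈ U) (hgz : g z = 0) :
    ∀ᶠ x in 𝓝 z, g x = 0 := by
  have hg : DifferentiableOn ℂ g U := hGg.differentiableOn hd hU
  refine ((hg.analyticAt (hU.mem_nhds hz)).eventually_eq_zero_or_eventually_ne_zero).resolve_right
    fun hne ↦ ?_
  rw [eventually_nhdsWithin_iff] at hne
  obtain ⟨r, hr, hball⟩ := nhds_basis_closedBall.mem_iff.1 (inter_mem (hU.mem_nhds hz) hne)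
  have hrU : closedBall z r ⊆ U := fun x hx ↦ (hball hx).1
  obtain ⟨w, hw, hmin⟩ := (isCompact_sphere z r).exists_isMinOn
    (NormedSpace.sphere_nonempty.2 hr.le)
    (hg.continuousOn.mono (sphere_subset_closedBall.trans hrU)).norm
  have hpos : 0 < ‖g w‖ :=
    norm_pos_iff.2 ((hball (sphere_subset_closedBall hw)).2 (ne_of_mem_sphere hw hr.ne'))
  have hunif := (tendstoLocallyUniformlyOn_iff_tendstoUniformlyOn_of_compact
    (isCompact_closedBall z r)).1 (hGg.mono hrU)
  obtain ⟨n, hn, hdn, h0n⟩ := ((Metric.tendstoUniformlyOn_iff.1 hunif _ (half_pos hpos)).and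
    (hd.and h0)).exists
  have hcl : closure (ball z r) = closedBall z r := closure_ball z hr.ne'
  have hlarge : ‖g w‖ / 2 ≤ ‖G n z‖ := by
    refine le_norm_of_forall_mem_frontier_le_norm isBounded_ball
      (hdn.mono (hcl ▸ hrU)).diffContOnCl (fun x hx ↦ h0n x (hrU (hcl ▸ hx))) (fun x hx ↦ ?_)
      (hcl ▸ mem_closedBall_self hr.le)
    rw [frontier_ball z hr.ne'] at hx
    have hclose := hn x (sphere_subset_closedBall hx)
    have hmin' : ‖g w‖ ≤ ‖g x‖ := hmin hx
    rw [dist_eq_norm] at hclose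
    linarith [norm_sub_norm_le (g x) (G n x)]
  have hsmall := hn z (mem_closedBall_self hr.le)
  rw [hgz, dist_zero_left] at hsmall
  exact hlarge.not_gt hsmall

theorem tendstoLocallyUniformlyOn_of_equicontinuousOn {ι X α : Type*} [TopologicalSpace X]
    [LocallyCompactSpace X] [UniformSpace α] {F : ι → X → α} {f : X → α} {φ : Filter ι}
    {U : Set X} (hU : IsOpen U) (hF : EquicontinuousOn F U)
    (hf : ∀ x ∈ U, Tendsto (F · x) φ (𝓝 (f x))) : TendstoLocallyUniformlyOn F f φ U := by
  rw [tendstoLocallyUniformlyOn_iff_forall_isCompact hU]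
  refine fun K hKU hK ↦ UniformOnFun.tendsto_iff_tendstoUniformlyOn.1
    ((EquicontinuousOn.tendsto_uniformOnFun_iff_pi' (𝔖 := {K}) (by simpa)
      (by simpa using hF.mono hKU) φ f).2 ?_) K rfl
  exact tendsto_pi_nhds.2 fun x ↦ hf x (hKU (by simpa using x.2))

theorem equicontinuousOn_of_mapsTo_closedBall {ι : Type*} {U : Set ℂ} (hU : IsOpen U)
    {f : ι → ℂ → ℂ} (hf : ∀ n, DifferentiableOn ℂ (f n) U) {c : ℂ} {M : ℝ}
    (hm : ∀ n, MapsTo (f n) U (closedBall c M)) : EquicontinuousOn f U := by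
  intro x hx
  obtain ⟨R, hR, hRU⟩ := Metric.isOpen_iff.1 hU x hx
  refine (equicontinuousAt_of_continuity_modulus (fun y ↦ (M + M) / R * dist y x) ?_ f
    ?_).equicontinuousWithinAt U
  · exact Continuous.tendsto' (by fun_prop) _ _ (by simp)
  · filter_upwards [ball_mem_nhds x hR] with y hy n
    rw [dist_comm]
    exact Complex.dist_le_div_mul_dist_of_mapsTo_ball ((hf n).mono hRU)
      (fun w hw ↦ (dist_triangle_right _ _ c).trans
        (add_le_add (hm n (hRU hw)) (hm n hx))) hy

-- Montel's theorem, with an ultrafilter in place of the extraction of a subsequence.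
theorem exists_tendstoLocallyUniformlyOn_ultrafilter {ι : Type*} {U : Set ℂ} (hU : IsOpen U)
    {f : ι → ℂ → ℂ} (hf : ∀ n, DifferentiableOn ℂ (f n) U) {c : ℂ} {M : ℝ}
    (hm : ∀ n, MapsTo (f n) U (closedBall c M)) (φ : Ultrafilter ι) :
    ∃ F : ℂ → ℂ, TendstoLocallyUniformlyOn f F φ U := by
  have hlim : ∀ z ∈ U, ∃ w, Tendsto (f · z) φ (𝓝 w) := by
    intro z hz
    obtain ⟨w, -, hw⟩ := (isCompact_closedBall c M).ultrafilter_le_nhds (φ.map (f · z))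
      (le_principal_iff.2 (Eventually.of_forall (f := (φ : Filter ι)) fun n ↦ hm n hz))
    exact ⟨w, hw⟩
  choose! F hF using hlim
  exact ⟨F, tendstoLocallyUniformlyOn_of_equicontinuousOn hU
    (equicontinuousOn_of_mapsTo_closedBall hU hf hm) hF⟩

end LocallyUniformLimits

section DiskShift

/-- The disk automorphism `z ↦ (z - a) / (1 - conj a * z)`, which moves `a` to `0`. -/
noncomputable def diskShift (a z : ℂ) : ℂ := (z - a) / (1 - starRingEnd ℂ a * z)

theorem diskShift_self (a : ℂ) : diskShift a a = 0 := by simp [diskShift]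

theorem diskShift_zero (a : ℂ) : diskShift a 0 = -a := by simp [diskShift]

variable {a z : ℂ}

theorem one_sub_conj_mul_ne_zero (ha : ‖a‖ < 1) (hz : ‖z‖ < 1) :
    1 - starRingEnd ℂ a * z ≠ 0 := by
  intro h
  have hnorm : ‖a‖ * ‖z‖ = 1 := by
    rw [← Complex.norm_conj a, ← norm_mul, ← sub_eq_zero.1 h, norm_one]
  nlinarith [norm_nonneg a, norm_nonneg z]

theorem normSq_one_sub_conj_mul_sub_normSq_sub (a z : ℂ) :
    Complex.normSq (1 - starRingEnd ℂ a * z) - Complex.normSq (z - a) =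
      (1 - Complex.normSq a) * (1 - Complex.normSq z) := by
  simp only [Complex.normSq_apply, Complex.sub_re, Complex.sub_im, Complex.mul_re, Complex.mul_im,
    Complex.one_re, Complex.one_im, Complex.conj_re, Complex.conj_im]
  ring

theorem norm_diskShift_lt_one (ha : ‖a‖ < 1) (hz : ‖z‖ < 1) : ‖diskShift a z‖ < 1 := by
  rw [diskShift, norm_div, div_lt_one (norm_pos_iff.2 (one_sub_conj_mul_ne_zero ha hz)),
    ← sq_lt_sq₀ (norm_nonneg _) (norm_nonneg _), ← Complex.normSq_eq_norm_sq,
    ← Complex.normSq_eq_norm_sq, ← sub_pos, normSq_one_sub_conj_mul_sub_normSq_sub,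
    Complex.normSq_eq_norm_sq, Complex.normSq_eq_norm_sq]
  exact mul_pos (sub_pos.2 (pow_lt_one₀ (norm_nonneg a) ha two_ne_zero))
    (sub_pos.2 (pow_lt_one₀ (norm_nonneg z) hz two_ne_zero))

theorem diskShift_neg_diskShift (ha : ‖a‖ < 1) (hz : ‖z‖ < 1) :
    diskShift (-a) (diskShift a z) = z := by
  have hz0 := one_sub_conj_mul_ne_zero ha hz
  have ha0 := one_sub_conj_mul_ne_zero ha ha
  have hden : 1 - starRingEnd ℂ (-a) * ((z - a) / (1 - starRingEnd ℂ a * z)) =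
      (1 - starRingEnd ℂ a * a) / (1 - starRingEnd ℂ a * z) := by
    rw [map_neg]
    field_simp
    ring
  have hnum : (z - a) / (1 - starRingEnd ℂ a * z) - -a =
      z * (1 - starRingEnd ℂ a * a) / (1 - starRingEnd ℂ a * z) := by
    rw [sub_neg_eq_add, div_add' _ _ _ hz0]
    ring
  rw [diskShift, diskShift, hden, hnum, div_div_div_cancel_right₀ hz0, mul_div_cancel_right₀ _ ha0]

theorem hasDerivAt_diskShift (ha : ‖a‖ < 1) (hz : ‖z‖ < 1) :
    HasDerivAt (diskShift a) ((1 - starRingEnd ℂ a * a) / (1 - starRingEnd ℂ a * z) ^ 2) z := by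
  refine (((hasDerivAt_id z).sub_const a).div
    (((hasDerivAt_id z).const_mul (starRingEnd ℂ a)).const_sub 1)
    (one_sub_conj_mul_ne_zero ha hz)).congr_deriv ?_
  simp only [id]
  congr 1
  ring

theorem differentiableOn_diskShift (ha : ‖a‖ < 1) :
    DifferentiableOn ℂ (diskShift a) (ball 0 1) := fun _ hz ↦
  (hasDerivAt_diskShift ha (mem_ball_zero_iff.1 hz)).differentiableAt.differentiableWithinAt

theorem mapsTo_diskShift (ha : ‖a‖ < 1) : MapsTo (diskShift a) (ball 0 1) (ball 0 1) :=
  fun _ hz ↦ mem_ball_zero_iff.2 (norm_diskShift_lt_one ha (mem_ball_zero_iff.1 hz))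

end DiskShift

section SquareRoot

theorem exists_differentiableOn_sq_eq {U : Set ℂ} (hU : IsOpen U) (hl : HasContinuousLogs U)
    {g : ℂ → ℂ} (hg : DifferentiableOn ℂ g U) (h0 : ∀ z ∈ U, g z ≠ 0) :
    ∃ s : ℂ → ℂ, DifferentiableOn ℂ s U ∧ ∀ z ∈ U, s z ^ 2 = g z := by
  obtain ⟨l, hlc, hlg⟩ := hl g hg.continuousOn h0
  have hsq : ∀ z ∈ U, Complex.exp (l z / 2) ^ 2 = g z := fun z hz ↦ by
    rw [← Complex.exp_nat_mul, Nat.cast_ofNat, mul_div_cancel₀ _ two_ne_zero, hlg z hz]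
  refine ⟨fun z ↦ Complex.exp (l z / 2), fun z hz ↦ ?_, hsq⟩
  have hz' := hU.mem_nhds hz
  refine (HasDerivAt.of_comp_left (f := (· ^ 2)) ?_ (hasDerivAt_pow 2 _)
    (hg.differentiableAt hz').hasDerivAt (by simp [Complex.exp_ne_zero]) ?_).differentiableAt
    |>.differentiableWithinAt
  · exact Complex.continuous_exp.continuousAt.comp ((hlc.continuousAt hz').div_const 2)
  · filter_upwards [hz'] using hsq

/-- The self-map of the disk fixing `0` obtained from squaring by disk automorphisms. It is not
injective, so by the Schwarz lemma it contracts at `0`, which is what Koebe's square-root trick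
exploits. -/
noncomputable def diskSquare (v ζ : ℂ) : ℂ := diskShift (v ^ 2) (diskShift (-v) ζ ^ 2)

variable {v : ℂ}

theorem differentiableOn_diskSquare (hv : ‖v‖ < 1) :
    DifferentiableOn ℂ (diskSquare v) (ball 0 1) := by
  have hv2 : ‖v ^ 2‖ < 1 := by rw [norm_pow]; exact pow_lt_one₀ (norm_nonneg v) hv two_ne_zero
  have hv' : ‖-v‖ < 1 := by rwa [norm_neg]
  refine (differentiableOn_diskShift hv2).comp ((differentiableOn_diskShift hv').pow 2)
    fun ζ hζ ↦ ?_
  rw [mem_ball_zero_iff, norm_pow]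
  exact pow_lt_one₀ (norm_nonneg _) (mem_ball_zero_iff.1 (mapsTo_diskShift hv' hζ)) two_ne_zero

theorem deriv_diskSquare_zero (hv : ‖v‖ < 1) :
    deriv (diskSquare v) 0 = 2 * v / (1 + starRingEnd ℂ v * v) := by
  have hv2 : ‖v ^ 2‖ < 1 := by rw [norm_pow]; exact pow_lt_one₀ (norm_nonneg v) hv two_ne_zero
  have hshift : diskShift (-v) 0 ^ 2 = v ^ 2 := by rw [diskShift_zero, neg_neg]
  have hinner := (hasDerivAt_diskShift (a := -v) (z := 0) (by rwa [norm_neg]) (by simp)).pow 2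
  have houter : HasDerivAt (diskShift (v ^ 2)) _ ((diskShift (-v) ^ 2) 0) :=
    hasDerivAt_diskShift hv2 (by rwa [Pi.pow_apply, hshift])
  refine (houter.comp 0 hinner).deriv.trans ?_
  have hfac : 1 - starRingEnd ℂ (v ^ 2) * v ^ 2 =
      (1 - starRingEnd ℂ v * v) * (1 + starRingEnd ℂ v * v) := by
    rw [map_pow]
    ring
  have hne := one_sub_conj_mul_ne_zero hv2 hv2
  rw [Pi.pow_apply, hshift]
  rw [hfac] at hne ⊢
  have hminus := left_ne_zero_of_mul hne
  have hplus := right_ne_zero_of_mul hne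
  simp only [diskShift_zero, map_neg, neg_neg]
  field_simp
  ring

theorem norm_deriv_diskSquare_zero_lt_one (hv : ‖v‖ < 1) : ‖deriv (diskSquare v) 0‖ < 1 := by
  have hden : 1 + starRingEnd ℂ v * v = ((1 + ‖v‖ ^ 2 : ℝ) : ℂ) := by
    rw [Complex.conj_mul']
    push_cast
    rfl
  rw [deriv_diskSquare_zero hv, hden, norm_div, norm_mul, Complex.norm_real,
    Real.norm_of_nonneg (by positivity), Complex.norm_ofNat, div_lt_one (by positivity)]
  nlinarith [sq_pos_of_pos (sub_pos.2 hv)]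

end SquareRoot

section RiemannMap

variable {U : Set ℂ} {z₀ : ℂ} {f F : ℂ → ℂ}

/-- The competitors in the extremal problem that produces the Riemann map: univalent holomorphic
maps from `U` into the unit disk sending `z₀` to `0`. Univalence makes `deriv_ne_zero` automatic,
but carrying it along is cheaper than proving it. -/
structure IsDiskChart (U : Set ℂ) (z₀ : ℂ) (f : ℂ → ℂ) : Prop where
  differentiableOn : DifferentiableOn ℂ f U
  mapsTo : MapsTo f U (ball 0 1)
  injOn : InjOn f U
  deriv_ne_zero : ∀ z ∈ U, deriv f z ≠ 0
  map_base : f z₀ = 0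

theorem deriv_eq_of_eqOn_comp {ψ G : ℂ → ℂ} {z : ℂ} (hU : U ∈ 𝓝 z)
    (hF : EqOn F (ψ ∘ G) U) (hψ : DifferentiableAt ℂ ψ (G z)) (hG : DifferentiableAt ℂ G z) :
    deriv F z = deriv ψ (G z) * deriv G z :=
  (hF.eventuallyEq_of_mem hU).deriv_eq.trans (deriv_comp z hψ hG)

theorem eqOn_const_of_eventually_eq (hU : IsOpen U) (hUp : IsPreconnected U) {g : ℂ → ℂ}
    (hg : DifferentiableOn ℂ g U) {z c : ℂ} (hz : z ∈ U) (hc : ∀ᶠ x in 𝓝 z, g x = c) :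
    EqOn g (fun _ ↦ c) U :=
  (hg.analyticOnNhd hU).eqOn_of_preconnected_of_eventuallyEq (fun _ _ ↦ analyticAt_const) hUp
    hz hc

theorem injOn_of_tendstoLocallyUniformlyOn {ι : Type*} {φ : Filter ι} [φ.NeBot]
    {f : ι → ℂ → ℂ} (hU : IsOpen U)
    (hd : ∀ n, DifferentiableOn ℂ (f n) U) (hi : ∀ n, InjOn (f n) U)
    (hfF : TendstoLocallyUniformlyOn f F φ U)
    (hnc : ∀ z ∈ U, ∀ c, ¬ ∀ᶠ x in 𝓝 z, F x = c) : InjOn F U := by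
  intro z₁ hz₁ z₂ hz₂ h
  by_contra hne
  have hlim : TendstoLocallyUniformlyOn (fun n z ↦ f n z - f n z₂) (fun z ↦ F z - F z₂) φ
      (U \ {z₂}) :=
    (hfF.mono sdiff_subset).fun_sub
      ((hfF.tendsto_at hz₂).tendstoUniformlyOn_const _).tendstoLocallyUniformlyOn
  have hev := eventually_eq_zero_of_tendstoLocallyUniformlyOn (hU.sdiff isClosed_singleton) hlim
    (.of_forall fun n ↦ ((hd n).mono sdiff_subset).sub_const _)
    (.of_forall fun n z hz h ↦ hz.2 (hi n hz.1 hz₂ (sub_eq_zero.1 h)))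
    (show z₁ ∈ U \ {z₂} from ⟨hz₁, hne⟩) (sub_eq_zero.2 h)
  exact hnc z₁ hz₁ (F z₂) (hev.mono fun x hx ↦ sub_eq_zero.1 hx)

namespace IsDiskChart

theorem of_subset_ball {R : ℝ} (hR : 0 < R) (hU : U ⊆ ball z₀ R) :
    IsDiskChart U z₀ fun z ↦ (z - z₀) / R := by
  have hR' : (R : ℂ) ≠ 0 := Complex.ofReal_ne_zero.2 hR.ne'
  have hd : ∀ z, HasDerivAt (fun z : ℂ ↦ (z - z₀) / R) (1 / R) z := fun z ↦
    ((hasDerivAt_id z).sub_const z₀).div_const _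
  refine ⟨fun z _ ↦ (hd z).differentiableAt.differentiableWithinAt, fun z hz ↦ ?_,
    fun z _ w _ h ↦ ?_, fun z _ ↦ ?_, by simp⟩
  · rw [mem_ball_zero_iff, norm_div, Complex.norm_real, Real.norm_of_nonneg hR.le]
    exact (div_lt_one hR).2 (mem_ball_iff_norm.1 (hU hz))
  · simpa [div_left_inj' hR'] using h
  · rw [(hd z).deriv]
    exact one_div_ne_zero hR'

theorem norm_deriv_le (hf : IsDiskChart U z₀ f) {r : ℝ} (hr : 0 < r) (hrU : ball z₀ r ⊆ U) :
    ‖deriv f z₀‖ ≤ 1 / r := by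
  refine Complex.norm_deriv_le_div_of_mapsTo_ball (hf.differentiableOn.mono hrU) (fun z hz ↦ ?_) hr
  rw [hf.map_base]
  exact ball_subset_closedBall (hf.mapsTo (hrU hz))

theorem of_comp (hU : IsOpen U) (hF : IsDiskChart U z₀ F) {ψ G : ℂ → ℂ}
    (hψ : DifferentiableOn ℂ ψ (ball 0 1)) (hG : DifferentiableOn ℂ G U)
    (hGm : MapsTo G U (ball 0 1)) (hG0 : G z₀ = 0) (hFG : EqOn F (ψ ∘ G) U) :
    IsDiskChart U z₀ G := by
  refine ⟨hG, hGm, fun x hx y hy hxy ↦ hF.injOn hx hy ?_, fun z hz hGz ↦ ?_, hG0⟩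
  · rw [hFG hx, hFG hy, Function.comp_apply, Function.comp_apply, hxy]
  · refine hF.deriv_ne_zero z hz ?_
    rw [deriv_eq_of_eqOn_comp (hU.mem_nhds hz) hFG
      (hψ.differentiableAt (isOpen_ball.mem_nhds (hGm hz)))
      (hG.differentiableAt (hU.mem_nhds hz)), hGz, mul_zero]

theorem exists_norm_deriv_lt (hU : IsOpen U) (hl : HasContinuousLogs U) (hz₀ : z₀ ∈ U)
    (hF : IsDiskChart U z₀ F) {w : ℂ} (hw : ‖w‖ < 1) (hwF : w ∉ F '' U) :
    ∃ G, IsDiskChart U z₀ G ∧ ‖deriv F z₀‖ < ‖deriv G z₀‖ := by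
  have hFn : ∀ z ∈ U, ‖F z‖ < 1 := fun z hz ↦ mem_ball_zero_iff.1 (hF.mapsTo hz)
  obtain ⟨s, hs, hsq⟩ := exists_differentiableOn_sq_eq hU hl
    ((differentiableOn_diskShift hw).comp hF.differentiableOn hF.mapsTo) fun z hz ↦
      div_ne_zero (sub_ne_zero.2 fun h ↦ hwF ⟨z, hz, h⟩) (one_sub_conj_mul_ne_zero hw (hFn z hz))
  have hs1 : ∀ z ∈ U, ‖s z‖ < 1 := fun z hz ↦ by
    rw [← sq_lt_one_iff₀ (norm_nonneg _), ← norm_pow, hsq z hz]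
    exact norm_diskShift_lt_one hw (hFn z hz)
  have hw_eq : s z₀ ^ 2 = -w := by
    rw [hsq z₀ hz₀, Function.comp_apply, hF.map_base, diskShift_zero]
  have hv := hs1 z₀ hz₀
  have hψ := differentiableOn_diskSquare hv
  have hG : DifferentiableOn ℂ (diskShift (s z₀) ∘ s) U :=
    (differentiableOn_diskShift hv).comp hs fun z hz ↦ mem_ball_zero_iff.2 (hs1 z hz)
  have hG0 : (diskShift (s z₀) ∘ s) z₀ = 0 := diskShift_self _
  have hFG : EqOn F (diskSquare (s z₀) ∘ diskShift (s z₀) ∘ s) U := fun z hz ↦ by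
    simp only [Function.comp_apply, diskSquare]
    rw [diskShift_neg_diskShift hv (hs1 z hz), hsq z hz, hw_eq, Function.comp_apply,
      diskShift_neg_diskShift hw (hFn z hz)]
  have hGc : IsDiskChart U z₀ (diskShift (s z₀) ∘ s) := hF.of_comp hU hψ hG
    (fun z hz ↦ mem_ball_zero_iff.2 (norm_diskShift_lt_one hv (hs1 z hz))) hG0 hFG
  refine ⟨_, hGc, ?_⟩
  rw [deriv_eq_of_eqOn_comp (hU.mem_nhds hz₀) hFG
    (by rw [hG0]; exact hψ.differentiableAt (ball_mem_nhds 0 one_pos))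
    (hG.differentiableAt (hU.mem_nhds hz₀)), hG0, norm_mul]
  exact mul_lt_of_lt_one_left (norm_pos_iff.2 (hGc.deriv_ne_zero z₀ hz₀))
    (norm_deriv_diskSquare_zero_lt_one hv)

theorem of_tendstoLocallyUniformlyOn {ι : Type*} {φ : Filter ι} [φ.NeBot] {f : ι → ℂ → ℂ}
    (hU : IsOpen U) (hUp : IsPreconnected U) (hz₀ : z₀ ∈ U) (hf : ∀ n, IsDiskChart U z₀ (f n))
    (hfF : TendstoLocallyUniformlyOn f F φ U)
    (hF' : deriv F z₀ ≠ 0) : IsDiskChart U z₀ F := by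
  have hfd : ∀ᶠ n in φ, DifferentiableOn ℂ (f n) U := .of_forall fun n ↦ (hf n).differentiableOn
  have hd : DifferentiableOn ℂ F U := hfF.differentiableOn hfd hU
  have hnc : ∀ z ∈ U, ∀ c, ¬ ∀ᶠ x in 𝓝 z, F x = c := fun z hz c hc ↦ hF' <| by
    rw [((eqOn_const_of_eventually_eq hU hUp hd hz hc).eventuallyEq_of_mem
      (hU.mem_nhds hz₀)).deriv_eq, deriv_const]
  have hle : ∀ z ∈ U, ‖F z‖ ≤ 1 := fun z hz ↦ le_of_tendsto (hfF.tendsto_at hz).norm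
    (.of_forall fun n ↦ (mem_ball_zero_iff.1 ((hf n).mapsTo hz)).le)
  refine ⟨hd, fun z hz ↦ mem_ball_zero_iff.2 ((hle z hz).lt_of_ne fun h1 ↦ ?_),
    injOn_of_tendstoLocallyUniformlyOn hU (fun n ↦ (hf n).differentiableOn)
      (fun n ↦ (hf n).injOn) hfF hnc, fun z hz hz' ↦ hF' ?_, ?_⟩
  · have hconst := Complex.eqOn_of_isPreconnected_of_isMaxOn_norm hUp hU hd hz
      fun x hx ↦ by simp [h1, hle x hx]
    exact hnc z hz (F z) (hconst.eventuallyEq_of_mem (hU.mem_nhds hz))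
  · exact eqOn_const_of_eventually_eq hU hUp (hd.deriv hU) hz
      (eventually_eq_zero_of_tendstoLocallyUniformlyOn hU (hfF.deriv hfd hU)
        (hfd.mono fun n hn ↦ hn.deriv hU) (.of_forall fun n ↦ (hf n).deriv_ne_zero) hz hz') hz₀
  · refine tendsto_nhds_unique (hfF.tendsto_at hz₀) ?_
    simp only [(hf _).map_base, tendsto_const_nhds_iff]

theorem exists_forall_norm_deriv_le (hU : IsOpen U) (hUp : IsPreconnected U)
    (hb : Bornology.IsBounded U) (hz₀ : z₀ ∈ U) :
    ∃ F, IsDiskChart U z₀ F ∧ ∀ G, IsDiskChart U z₀ G → ‖deriv G z₀‖ ≤ ‖deriv F z₀‖ := by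
  obtain ⟨R, hR, hUR⟩ := hb.subset_ball_lt 0 z₀
  obtain ⟨r, hr, hrU⟩ := Metric.isOpen_iff.1 hU z₀ hz₀
  have hchart := of_subset_ball hR hUR
  set S : Set ℝ := (fun f : ℂ → ℂ ↦ ‖deriv f z₀‖) '' {f | IsDiskChart U z₀ f}
  have hS : BddAbove S := ⟨1 / r, forall_mem_image.2 fun f hf ↦ hf.norm_deriv_le hr hrU⟩
  obtain ⟨u, -, hu, huS⟩ := exists_seq_tendsto_sSup (S := S) ⟨_, _, hchart, rfl⟩ hS
  choose f hf hfu using huS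
  obtain ⟨F, hfF⟩ := exists_tendstoLocallyUniformlyOn_ultrafilter hU
    (fun n ↦ (hf n).differentiableOn)
    (fun n ↦ (hf n).mapsTo.mono_right ball_subset_closedBall) (hyperfilter ℕ)
  have hsup : ‖deriv F z₀‖ = sSup S := by
    refine tendsto_nhds_unique ((hfF.deriv (.of_forall fun n ↦ (hf n).differentiableOn)
      hU).tendsto_at hz₀).norm ?_
    exact (hu.mono_left Nat.hyperfilter_le_atTop).congr fun n ↦ (hfu n).symm
  have hle : ∀ G, IsDiskChart U z₀ G → ‖deriv G z₀‖ ≤ ‖deriv F z₀‖ := fun G hG ↦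
    hsup ▸ le_csSup hS ⟨G, hG, rfl⟩
  exact ⟨F, of_tendstoLocallyUniformlyOn hU hUp hz₀ hf hfF
    (norm_pos_iff.1 ((norm_pos_iff.2 (hchart.deriv_ne_zero z₀ hz₀)).trans_le (hle _ hchart))), hle⟩

theorem exists_bijOn (hU : IsOpen U) (hUp : IsPreconnected U) (hb : Bornology.IsBounded U)
    (hl : HasContinuousLogs U) (hz₀ : z₀ ∈ U) :
    ∃ F, IsDiskChart U z₀ F ∧ BijOn F U (ball 0 1) := by
  obtain ⟨F, hF, hmax⟩ := exists_forall_norm_deriv_le hU hUp hb hz₀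
  refine ⟨F, hF, hF.mapsTo, hF.injOn, fun w hw ↦ ?_⟩
  by_contra hwF
  obtain ⟨G, hG, hlt⟩ := hF.exists_norm_deriv_lt hU hl hz₀ (mem_ball_zero_iff.1 hw) hwF
  exact (hmax G hG).not_gt hlt

end IsDiskChart

theorem differentiableOn_of_invOn {V : Set ℂ} (hU : IsOpen U) (hV : IsOpen V) {F g : ℂ → ℂ}
    (hF : DifferentiableOn ℂ F U) (hF' : ∀ z ∈ U, deriv F z ≠ 0) (hg : MapsTo g V U)
    (hgF : InvOn g F U V) : DifferentiableOn ℂ g V := by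
  intro w hw
  have hgw := hg hw
  have hs : HasStrictDerivAt F (deriv F (g w)) (g w) :=
    (hF.analyticAt (hU.mem_nhds hgw)).hasStrictDerivAt
  have hc : ContinuousAt g w := by
    rw [ContinuousAt, ← hgF.2 hw, ← hs.map_nhds_eq (hF' _ hgw), tendsto_map'_iff, hgF.1 hgw]
    refine tendsto_id.congr' ?_
    filter_upwards [hU.mem_nhds hgw] with x hx using (hgF.1 hx).symm
  exact (HasDerivAt.of_local_left_inverse hc hs.hasDerivAt (hF' _ hgw)
    (by filter_upwards [hV.mem_nhds hw] using hgF.2)).differentiableAt.differentiableWithinAt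

theorem exists_riemann_map (hU : IsOpen U) (hUp : IsPreconnected U)
    (hb : Bornology.IsBounded U) (hl : HasContinuousLogs U) (hz₀ : z₀ ∈ U) :
    ∃ f : ℂ → ℂ, DifferentiableOn ℂ f (ball 0 1) ∧ BijOn f (ball 0 1) U ∧ f 0 = z₀ := by
  obtain ⟨F, hF, hbij⟩ := IsDiskChart.exists_bijOn hU hUp hb hl hz₀
  have hinv := hbij.invOn_invFunOn
  have hmaps := hbij.surjOn.mapsTo_invFunOn
  refine ⟨Function.invFunOn F U, differentiableOn_of_invOn hU isOpen_ball hF.differentiableOn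
    hF.deriv_ne_zero hmaps hinv, hinv.symm.bijOn hmaps hbij.mapsTo, ?_⟩
  rw [← hF.map_base, hinv.1 hz₀]

end RiemannMap

section LengthArea

open MeasureTheory
open scoped Real ENNReal

theorem lintegral_norm_deriv_sq_eq_volume_image {g : ℂ → ℂ} {W : Set ℂ} (hW : IsOpen W)
    (hd : DifferentiableOn ℂ g W) (hi : InjOn g W) :
    ∫⁻ w in W, ENNReal.ofReal (‖deriv g w‖ ^ 2) = volume (g '' W) := by
  rw [← lintegral_abs_det_fderiv_eq_addHaar_image volume hW.measurableSet
    (f' := fun w ↦ ContinuousLinearMap.mul ℝ ℂ (deriv g w)) (fun w hw ↦ ?_) hi]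
  · refine lintegral_congr fun w ↦ ?_
    have det_eq : (ContinuousLinearMap.mul ℝ ℂ (deriv g w)).det = Algebra.norm ℝ (deriv g w) := rfl
    rw [det_eq, Algebra.norm_complex_eq]
    simp [Complex.normSq_eq_norm_sq]
  · convert ((hd.differentiableAt (hW.mem_nhds hw)).hasDerivAt.hasFDerivAt.restrictScalars
      ℝ).hasFDerivWithinAt (s := W) using 1
    ext; simp [mul_comm]

theorem sq_integral_norm_le {E : Type*} [NormedAddCommGroup E] {h : ℝ → E} {a b : ℝ} (hab : a ≤ b)
    (hc : ContinuousOn h (Icc a b)) :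
    (∫ t in a..b, ‖h t‖) ^ 2 ≤ (b - a) * ∫ t in a..b, ‖h t‖ ^ 2 := by
  rcases hab.eq_or_lt with rfl | hlt
  · simp
  have jensen := (even_two.convexOn_pow (𝕜 := ℝ)).map_set_average_le (μ := volume)
    (t := Ioc a b) (f := fun t ↦ ‖h t‖) (by fun_prop) isClosed_univ (by simp [hlt]) (by simp)
    (Eventually.of_forall fun _ ↦ mem_univ _)
    (hc.norm.integrableOn_Icc.mono_set Ioc_subset_Icc_self)
    ((hc.norm.pow 2).integrableOn_Icc.mono_set Ioc_subset_Icc_self)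
  have hba : 0 < b - a := sub_pos.2 hlt
  simp only [setAverage_eq, Real.volume_real_Ioc_of_le hab, smul_eq_mul,
    ← intervalIntegral.integral_of_le hab] at jensen
  rwa [mul_pow, inv_pow, inv_mul_le_iff₀ (by positivity), ← mul_assoc, sq (b - a),
    mul_inv_cancel_right₀ hba.ne'] at jensen

theorem norm_sub_sq_le_mul_integral_circleMap {g : ℂ → ℂ} {W : Set ℂ} (hW : IsOpen W)
    (hd : DifferentiableOn ℂ g W) {c : ℂ} {s a b : ℝ} (hab : a ≤ b)
    (harc : MapsTo (circleMap c s) (Icc a b) W) :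
    ‖g (circleMap c s b) - g (circleMap c s a)‖ ^ 2 ≤
      (b - a) * (s ^ 2 * ∫ θ in a..b, ‖deriv g (circleMap c s θ)‖ ^ 2) := by
  set γ' : ℝ → ℂ := fun θ ↦ deriv g (circleMap c s θ) * (circleMap 0 s θ * Complex.I)
  have hγ : ∀ θ ∈ uIcc a b, HasDerivAt (fun θ ↦ g (circleMap c s θ)) (γ' θ) θ := by
    rw [uIcc_of_le hab]
    exact fun θ hθ ↦ (hd.differentiableAt (hW.mem_nhds (harc hθ))).hasDerivAt.comp θ
      (hasDerivAt_circleMap c s θ)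
  have hγc : ContinuousOn γ' (Icc a b) :=
    ((hd.deriv hW).continuousOn.comp (continuous_circleMap c s).continuousOn harc).mul
      (by fun_prop)
  have hγn : ∀ θ, ‖γ' θ‖ ^ 2 = s ^ 2 * ‖deriv g (circleMap c s θ)‖ ^ 2 := fun θ ↦ by
    simp [γ', mul_pow, mul_comm]
  calc ‖g (circleMap c s b) - g (circleMap c s a)‖ ^ 2
    _ = ‖∫ θ in a..b, γ' θ‖ ^ 2 := by
      rw [intervalIntegral.integral_eq_sub_of_hasDerivAt hγ
        (hγc.intervalIntegrable_of_Icc hab)]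
    _ ≤ (∫ θ in a..b, ‖γ' θ‖) ^ 2 := by
      gcongr
      exact intervalIntegral.norm_integral_le_integral_norm hab
    _ ≤ (b - a) * ∫ θ in a..b, ‖γ' θ‖ ^ 2 := sq_integral_norm_le hab hγc
    _ = _ := by simp only [hγn, intervalIntegral.integral_const_mul]

theorem ofReal_norm_sub_sq_le_mul_lintegral_circleMap {g : ℂ → ℂ} {W : Set ℂ} (hW : IsOpen W)
    (hd : DifferentiableOn ℂ g W) {c : ℂ} {s a b : ℝ} (hab : a ≤ b)
    (harc : MapsTo (circleMap c s) (Icc a b) W) :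
    ENNReal.ofReal (‖g (circleMap c s b) - g (circleMap c s a)‖ ^ 2) ≤
      ENNReal.ofReal ((b - a) * s ^ 2) *
        ∫⁻ θ in Ioc a b, ENNReal.ofReal (‖deriv g (circleMap c s θ)‖ ^ 2) := by
  have hcont : ContinuousOn (fun θ ↦ ‖deriv g (circleMap c s θ)‖ ^ 2) (Icc a b) :=
    (((hd.deriv hW).continuousOn.comp (continuous_circleMap c s).continuousOn harc).norm).pow 2
  rw [← ofReal_integral_eq_lintegral_ofReal
      (hcont.integrableOn_Icc.mono_set Ioc_subset_Icc_self)
      (Eventually.of_forall fun _ ↦ by positivity),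
    ← ENNReal.ofReal_mul (mul_nonneg (sub_nonneg.2 hab) (sq_nonneg s)),
    ← intervalIntegral.integral_of_le hab, mul_assoc]
  exact ENNReal.ofReal_le_ofReal (norm_sub_sq_le_mul_integral_circleMap hW hd hab harc)

theorem lintegral_eq_lintegral_circleMap {F : ℂ → ℝ≥0∞} (hF : Measurable F) :
    ∫⁻ w, F w = ∫⁻ s in Ioi 0, ∫⁻ θ in Ioo (-π) π, ENNReal.ofReal s * F (circleMap 0 s θ) := by
  have hpolar : ∀ p : ℝ × ℝ, Complex.polarCoord.symm p = circleMap 0 p.1 p.2 := fun p ↦ by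
    simp [circleMap, Complex.polarCoord_symm_apply, Complex.exp_mul_I]
  have hcircle : Measurable fun p : ℝ × ℝ ↦ circleMap 0 p.1 p.2 := by
    unfold circleMap
    fun_prop
  rw [← Complex.lintegral_comp_polarCoord_symm, polarCoord_target, Measure.volume_eq_prod,
    ← Measure.prod_restrict]
  simp only [hpolar, smul_eq_mul]
  exact lintegral_prod _ (measurable_fst.ennreal_ofReal.mul (hF.comp hcircle)).aemeasurable

-- Otherwise `δ / s` would be integrable at `0`.
theorem frequently_lt_ofReal_div_of_lintegral_ne_top {h : ℝ → ℝ≥0∞}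
    (hh : ∫⁻ s in Ioi 0, h s ≠ ∞) {δ : ℝ} (hδ : 0 < δ) :
    ∃ᶠ s in 𝓝[>] 0, h s < ENNReal.ofReal (δ / s) := by
  intro hle
  obtain ⟨ρ, hρ, hle⟩ := (nhdsGT_basis (0 : ℝ)).eventually_iff.1 hle
  have hint : IntegrableOn (fun s : ℝ ↦ δ / s) (Ioo 0 ρ) := by
    refine ⟨by fun_prop, (hasFiniteIntegral_iff_ofReal ?_).2 ?_⟩
    · exact (ae_restrict_iff' measurableSet_Ioo).2
        (Eventually.of_forall fun s hs ↦ (div_pos hδ hs.1).le)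
    · exact ((setLIntegral_mono' measurableSet_Ioo fun s hs ↦ not_lt.1 (hle hs)).trans
        (lintegral_mono_set Ioo_subset_Ioi_self)).trans_lt hh.lt_top
  have hrpow : IntegrableOn (fun s : ℝ ↦ s ^ (-1 : ℝ)) (Ioo 0 ρ) := by
    refine IntegrableOn.congr_fun (f := fun s ↦ δ⁻¹ * (δ / s)) (hint.const_mul δ⁻¹)
      (fun s _ ↦ ?_) measurableSet_Ioo
    rw [Real.rpow_neg_one]
    field_simp
  exact lt_irrefl _ ((intervalIntegral.integrableOn_Ioo_rpow_iff hρ).1 hrpow)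

theorem circleMap_zero_mem_ball_one_iff {s : ℝ} (hs : 0 < s) (θ : ℝ) :
    circleMap 0 s θ ∈ ball (1 : ℂ) 1 ↔ s < 2 * Real.cos θ := by
  have norm_sq : ‖circleMap 0 s θ - 1‖ ^ 2 - 1 = s * (s - 2 * Real.cos θ) := by
    rw [← Complex.normSq_eq_norm_sq, circleMap_zero, Complex.exp_mul_I, ← Complex.ofReal_cos,
      ← Complex.ofReal_sin, Complex.normSq_apply]
    simp only [Complex.sub_re, Complex.mul_re, Complex.ofReal_re, Complex.add_re, Complex.I_re,
      Complex.I_im, Complex.ofReal_im, Complex.add_im, Complex.mul_im, Complex.one_re,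
      Complex.sub_im, Complex.one_im]
    linear_combination s ^ 2 * Real.sin_sq_add_cos_sq θ
  rw [mem_ball, dist_eq_norm, ← sq_lt_sq₀ (norm_nonneg _) zero_le_one, one_pow, ← sub_neg, norm_sq]
  simp [mul_neg_iff, hs, hs.not_gt]

theorem exists_eq_circleMap_of_mem_ball_one {z : ℂ} (hz : z ∈ ball (1 : ℂ) 1) :
    ∃ θ ∈ Ioo (-(π / 2)) (π / 2), z = circleMap 0 ‖z‖ θ := by
  refine ⟨z.arg, abs_lt.1 (Complex.abs_arg_lt_pi_div_two_iff.2 (Or.inl ?_)),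
    by rw [circleMap_zero, Complex.norm_mul_exp_arg_mul_I]⟩
  rw [mem_ball_iff_norm'] at hz
  have := (Complex.abs_re_le_norm (1 - z)).trans_lt hz
  rw [abs_lt, Complex.sub_re, Complex.one_re] at this
  linarith

theorem concaveOn_two_mul_cos : ConcaveOn ℝ (Icc (-(π / 2)) (π / 2)) fun θ ↦ 2 * Real.cos θ :=
  strictConcaveOn_cos_Icc.concaveOn.smul zero_le_two

theorem mapsTo_circleMap_Icc_ball_one {s a b : ℝ} (hs : 0 < s) (ha : a ∈ Icc (-(π / 2)) (π / 2))
    (hb : b ∈ Icc (-(π / 2)) (π / 2)) (hsa : circleMap 0 s a ∈ ball (1 : ℂ) 1)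
    (hsb : circleMap 0 s b ∈ ball (1 : ℂ) 1) :
    MapsTo (circleMap 0 s) (Icc a b) (ball 1 1) := fun θ hθ ↦ by
  rw [circleMap_zero_mem_ball_one_iff hs] at *
  exact ((concaveOn_two_mul_cos.convex_gt s).ordConnected.out ⟨ha, hsa⟩ ⟨hb, hsb⟩ hθ).2

theorem ofReal_norm_sub_sq_le_lintegral_indicator_ball_one {g : ℂ → ℂ}
    (hd : DifferentiableOn ℂ g (ball 1 1)) {s a b : ℝ} (hs : 0 < s)
    (ha : a ∈ Ioo (-(π / 2)) (π / 2)) (hb : b ∈ Ioo (-(π / 2)) (π / 2)) (hab : a ≤ b)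
    (hsa : circleMap 0 s a ∈ ball (1 : ℂ) 1) (hsb : circleMap 0 s b ∈ ball (1 : ℂ) 1) :
    ENNReal.ofReal (‖g (circleMap 0 s b) - g (circleMap 0 s a)‖ ^ 2) ≤
      ENNReal.ofReal (π * s) * ∫⁻ θ in Ioo (-π) π, ENNReal.ofReal s *
        (ball 1 1).indicator (fun w ↦ ENNReal.ofReal (‖deriv g w‖ ^ 2)) (circleMap 0 s θ) := by
  set F : ℂ → ℝ≥0∞ := (ball (1 : ℂ) 1).indicator fun w ↦ ENNReal.ofReal (‖deriv g w‖ ^ 2) with hF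
  have harc := mapsTo_circleMap_Icc_ball_one hs (Ioo_subset_Icc_self ha) (Ioo_subset_Icc_self hb)
    hsa hsb
  have hIoc : Ioc a b ⊆ Ioo (-π) π := fun θ hθ ↦
    ⟨by linarith [ha.1, hθ.1, Real.pi_pos], by linarith [hb.2, hθ.2, Real.pi_pos]⟩
  calc ENNReal.ofReal (‖g (circleMap 0 s b) - g (circleMap 0 s a)‖ ^ 2)
    _ ≤ ENNReal.ofReal ((b - a) * s ^ 2) *
        ∫⁻ θ in Ioc a b, ENNReal.ofReal (‖deriv g (circleMap 0 s θ)‖ ^ 2) :=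
      ofReal_norm_sub_sq_le_mul_lintegral_circleMap isOpen_ball hd hab harc
    _ = ENNReal.ofReal ((b - a) * s ^ 2) * ∫⁻ θ in Ioc a b, F (circleMap 0 s θ) := by
      congr 1
      refine setLIntegral_congr_fun measurableSet_Ioc fun θ hθ ↦ ?_
      rw [hF, indicator_of_mem (harc (Ioc_subset_Icc_self hθ))]
    _ ≤ ENNReal.ofReal (π * s ^ 2) * ∫⁻ θ in Ioo (-π) π, F (circleMap 0 s θ) := by
      gcongr
      linarith [ha.1, hb.2]
    _ = _ := by
      rw [lintegral_const_mul' _ _ ENNReal.ofReal_ne_top, ← mul_assoc,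
        ← ENNReal.ofReal_mul (by positivity), mul_assoc π, sq]

-- Length–area principle: `∫ s (∫ |g'|²) ds` is the area of the image, so it is finite, and the
-- inner integral, which controls the oscillation on the arc of radius `s`, is often less than
-- `δ / s²`.
theorem frequently_forall_dist_le_of_injOn_ball_one {g : ℂ → ℂ}
    (hd : DifferentiableOn ℂ g (ball 1 1)) (hi : InjOn g (ball 1 1))
    (hb : Bornology.IsBounded (g '' ball 1 1)) {ε : ℝ} (hε : 0 < ε) :
    ∃ᶠ s in 𝓝[>] 0, ∀ z ∈ ball (1 : ℂ) 1, ∀ w ∈ ball (1 : ℂ) 1, ‖z‖ = s → ‖w‖ = s →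
      dist (g z) (g w) ≤ ε := by
  have hfin : ∫⁻ w, (ball 1 1).indicator (fun w ↦ ENNReal.ofReal (‖deriv g w‖ ^ 2)) w ≠ ∞ := by
    rw [lintegral_indicator measurableSet_ball,
      lintegral_norm_deriv_sq_eq_volume_image isOpen_ball hd hi]
    exact hb.measure_lt_top.ne
  rw [lintegral_eq_lintegral_circleMap
    (((measurable_deriv g).norm.pow_const 2).ennreal_ofReal.indicator measurableSet_ball)] at hfin
  refine ((frequently_lt_ofReal_div_of_lintegral_ne_top hfin (δ := ε ^ 2 / π)
    (by positivity)).and_eventually self_mem_nhdsWithin).mono ?_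
  rintro s ⟨hlt, hs : 0 < s⟩ z hz w hw hzs hws
  obtain ⟨b, hbπ, hzb⟩ := exists_eq_circleMap_of_mem_ball_one hz
  obtain ⟨a, haπ, hwa⟩ := exists_eq_circleMap_of_mem_ball_one hw
  rw [hzs] at hzb
  rw [hws] at hwa
  subst hzb hwa
  clear hzs hws
  wlog hab : a ≤ b generalizing a b
  · rw [dist_comm]
    exact this a haπ b hbπ hw hz (le_of_not_ge hab)
  rw [dist_eq_norm, ← sq_le_sq₀ (norm_nonneg _) hε.le, ← ENNReal.ofReal_le_ofReal_iff (sq_nonneg ε)]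
  refine (ofReal_norm_sub_sq_le_lintegral_indicator_ball_one hd hs haπ hbπ hab hw hz).trans ?_
  calc _ ≤ ENNReal.ofReal (π * s) * ENNReal.ofReal (ε ^ 2 / π / s) := by gcongr
    _ = ENNReal.ofReal (ε ^ 2) := by
      rw [← ENNReal.ofReal_mul (by positivity)]
      congr 1
      field_simp

end LengthArea

theorem isOpen_image_of_injOn {f : ℂ → ℂ} {O : Set ℂ} (hO : IsOpen O) (hc : ContinuousOn f O)
    (hi : InjOn f O) : IsOpen (f '' O) := by
  rw [isOpen_iff_mem_nhds]
  rintro _ ⟨z, hz, rfl⟩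
  obtain ⟨r, hr, hrO⟩ := nhds_basis_closedBall.mem_iff.1 (hO.mem_nhds hz)
  exact mem_of_superset ((isOpen_image_ball hr (hc.mono hrO) (hi.mono hrO)).mem_nhds
    (mem_image_of_mem f (mem_ball_self hr))) (image_mono (ball_subset_closedBall.trans hrO))

section BoundaryArcs

variable {ζ : ℂ} {r : ℝ}

theorem mul_one_sub_mem_ball_iff (hζ : ‖ζ‖ = 1) (w : ℂ) :
    ζ * (1 - w) ∈ ball (0 : ℂ) 1 ↔ w ∈ ball (1 : ℂ) 1 := by
  rw [mem_ball_zero_iff, mem_ball_iff_norm', norm_mul, hζ, one_mul]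

theorem dist_mul_one_sub (hζ : ‖ζ‖ = 1) (w : ℂ) : dist (ζ * (1 - w)) ζ = ‖w‖ := by
  rw [dist_eq_norm, mul_sub, mul_one, sub_sub_cancel_left, norm_neg, norm_mul, hζ, one_mul]

theorem exists_eq_mul_one_sub (hζ : ‖ζ‖ = 1) (z : ℂ) : ∃ w, z = ζ * (1 - w) := by
  have hζ0 : ζ ≠ 0 := norm_ne_zero_iff.1 (by rw [hζ]; exact one_ne_zero)
  exact ⟨1 - z / ζ, by field_simp; ring⟩

theorem ball_inter_sphere_nonempty (hζ : ‖ζ‖ = 1) (hr : r ∈ Ioo 0 2) :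
    (ball (0 : ℂ) 1 ∩ sphere ζ r).Nonempty := by
  refine ⟨ζ * (1 - (r : ℂ)), ?_, ?_⟩
  · rw [mul_one_sub_mem_ball_iff hζ, mem_ball_iff_norm', ← Complex.ofReal_one,
      ← Complex.ofReal_sub, Complex.norm_real, Real.norm_eq_abs, abs_lt]
    constructor <;> linarith [hr.1, hr.2]
  · rw [mem_sphere, dist_mul_one_sub hζ, Complex.norm_real, Real.norm_of_nonneg hr.1.le]

open scoped Real in
theorem isPreconnected_ball_sdiff_closedBall (hζ : ‖ζ‖ = 1) (hr : 0 < r) :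
    IsPreconnected (ball (0 : ℂ) 1 \ closedBall ζ r) := by
  set P : Set (ℝ × ℝ) := {p | p.1 ∈ Icc (-(π / 2)) (π / 2) ∧ p.2 < 2 * Real.cos p.1} ∩
    {p | r < p.2}
  have hP : Convex ℝ P := concaveOn_two_mul_cos.convex_strict_hypograph.inter
    (convex_halfSpace_gt (f := fun p : ℝ × ℝ ↦ p.2) ⟨fun _ _ ↦ rfl, fun _ _ ↦ rfl⟩ r)
  suffices himg : ball (0 : ℂ) 1 \ closedBall ζ r =
      (fun p : ℝ × ℝ ↦ ζ * (1 - circleMap 0 p.2 p.1)) '' P by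
    rw [himg]
    refine hP.isPreconnected.image _ (Continuous.continuousOn ?_)
    simp only [circleMap_zero]
    fun_prop
  ext z
  constructor
  · rintro ⟨hz, hzr⟩
    obtain ⟨w, rfl⟩ := exists_eq_mul_one_sub hζ z
    rw [mem_closedBall, dist_mul_one_sub hζ, not_le] at hzr
    rw [mul_one_sub_mem_ball_iff hζ] at hz
    obtain ⟨θ, hθ, hw⟩ := exists_eq_circleMap_of_mem_ball_one hz
    rw [hw, circleMap_zero_mem_ball_one_iff (hr.trans hzr)] at hz
    exact ⟨(θ, ‖w‖), ⟨⟨Ioo_subset_Icc_self hθ, hz⟩, hzr⟩, by simp only [← hw]⟩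
  · rintro ⟨⟨θ, s⟩, ⟨⟨-, hs⟩, hrs : r < s⟩, rfl⟩
    have hs0 : 0 < s := hr.trans hrs
    refine ⟨(mul_one_sub_mem_ball_iff hζ _).2 ((circleMap_zero_mem_ball_one_iff hs0 θ).2 hs), ?_⟩
    rwa [mem_closedBall, dist_mul_one_sub hζ, norm_circleMap_zero, abs_of_pos hs0, not_le]

variable {f : ℂ → ℂ}

theorem frequently_forall_dist_le (hd : DifferentiableOn ℂ f (ball 0 1))
    (hi : InjOn f (ball 0 1)) (hb : Bornology.IsBounded (f '' ball 0 1)) (hζ : ‖ζ‖ = 1) {ε : ℝ}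
    (hε : 0 < ε) : ∃ᶠ r in 𝓝[>] 0, ∀ z ∈ ball 0 1 ∩ sphere ζ r, ∀ w ∈ ball 0 1 ∩ sphere ζ r,
      dist (f z) (f w) ≤ ε := by
  have hζ0 : ζ ≠ 0 := norm_ne_zero_iff.1 (by rw [hζ]; exact one_ne_zero)
  have hmaps : MapsTo (fun w : ℂ ↦ ζ * (1 - w)) (ball 1 1) (ball 0 1) := fun w hw ↦
    (mul_one_sub_mem_ball_iff hζ w).2 hw
  refine (frequently_forall_dist_le_of_injOn_ball_one (g := fun w ↦ f (ζ * (1 - w)))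
    (hd.comp (by fun_prop) hmaps) (hi.comp (fun x _ y _ h ↦ by simpa [hζ0] using h) hmaps)
    (hb.subset ?_) hε).mono fun r hosc z hz w hw ↦ ?_
  · rintro _ ⟨w, hw, rfl⟩
    exact mem_image_of_mem f (hmaps hw)
  · obtain ⟨z, rfl⟩ := exists_eq_mul_one_sub hζ z
    obtain ⟨w, rfl⟩ := exists_eq_mul_one_sub hζ w
    rw [mem_inter_iff, mul_one_sub_mem_ball_iff hζ, mem_sphere, dist_mul_one_sub hζ] at hz hw
    exact hosc z hz.1 w hw.1 hz.2 hw.2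

theorem exists_forall_frequently_mapsTo_ball (hd : DifferentiableOn ℂ f (ball 0 1))
    (hi : InjOn f (ball 0 1)) (hb : Bornology.IsBounded (f '' ball 0 1)) (hζ : ‖ζ‖ = 1) :
    ∃ p, ∀ η > 0, ∃ᶠ r in 𝓝[>] 0, MapsTo f (ball 0 1 ∩ sphere ζ r) (ball p η) := by
  have hsmall (n : ℕ) : ∃ r ∈ Ioo (0 : ℝ) (1 / (n + 1)), ∃ a ∈ ball 0 1 ∩ sphere ζ r,
      ∀ z ∈ ball 0 1 ∩ sphere ζ r, dist (f z) (f a) ≤ 1 / (n + 1) := by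
    have hn : (0 : ℝ) < 1 / (n + 1) := Nat.one_div_pos_of_nat
    obtain ⟨r, hosc, hrn, hr2⟩ := ((frequently_forall_dist_le hd hi hb hζ hn).and_eventually
      (inter_mem (Ioo_mem_nhdsGT hn) (Ioo_mem_nhdsGT two_pos))).exists
    obtain ⟨a, ha⟩ := ball_inter_sphere_nonempty hζ hr2
    exact ⟨r, hrn, a, ha, fun z hz ↦ hosc z hz a ha⟩
  choose r hr a ha hosc using hsmall
  obtain ⟨p, -, φ, hφ, hp⟩ := tendsto_subseq_of_bounded hb fun n ↦ mem_image_of_mem f (ha n).1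
  have hinv : Tendsto (fun n ↦ (1 : ℝ) / (φ n + 1)) atTop (𝓝 0) :=
    tendsto_one_div_add_atTop_nhds_zero_nat.comp hφ.tendsto_atTop
  have hrφ : Tendsto (r ∘ φ) atTop (𝓝[>] 0) := tendsto_nhdsWithin_iff.2
    ⟨squeeze_zero (fun n ↦ (hr _).1.le) (fun n ↦ (hr _).2.le) hinv,
      Eventually.of_forall fun n ↦ (hr _).1⟩
  refine ⟨p, fun η hη ↦ hrφ.frequently (Eventually.frequently ?_)⟩
  filter_upwards [Metric.tendsto_nhds.1 hp (η / 2) (half_pos hη),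
    hinv.eventually_lt_const (half_pos hη)] with n hfa hn z hz
  calc dist (f z) p ≤ dist (f z) (f (a (φ n))) + dist (f (a (φ n))) p := dist_triangle _ _ _
    _ < η / 2 + η / 2 := add_lt_add ((hosc _ z hz).trans_lt hn) hfa
    _ = η := add_halves η

-- The circle of radius `r` around `ζ` cuts `U` into two open pieces, and `f` is open.
theorem subset_image_sdiff_closedBall {U S : Set ℂ} (hU : IsOpen U) (hc : ContinuousOn f U)
    (hi : InjOn f U) (hS : IsPreconnected S) (hSf : S ⊆ f '' U)
    (hdis : MapsTo f (U ∩ sphere ζ r) Sᶜ) {z : ℂ} (hz : z ∈ U) (hzS : f z ∈ S)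
    (hzr : r < dist z ζ) : S ⊆ f '' (U \ closedBall ζ r) := by
  have hopen {O : Set ℂ} (hO : IsOpen O) (hOU : O ⊆ U) : IsOpen (f '' O) :=
    isOpen_image_of_injOn hO (hc.mono hOU) (hi.mono hOU)
  refine hS.subset_left_of_subset_union (hopen (hU.sdiff isClosed_closedBall) sdiff_subset)
    (hopen (hU.inter (isOpen_ball (x := ζ) (ε := r))) inter_subset_left) ?_ ?_
    ⟨f z, hzS, z, ⟨hz, by rwa [mem_closedBall, not_le]⟩, rfl⟩
  · refine Disjoint.image ?_ hi sdiff_subset inter_subset_left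
    exact disjoint_left.2 fun x hx hx' ↦ hx.2 (ball_subset_closedBall hx'.2)
  · intro s hs
    obtain ⟨x, hx, rfl⟩ := hSf hs
    rcases lt_trichotomy (dist x ζ) r with h | h | h
    · exact Or.inr ⟨x, ⟨hx, h⟩, rfl⟩
    · exact absurd hs (hdis ⟨hx, h⟩)
    · exact Or.inl ⟨x, ⟨hx, by rwa [mem_closedBall, not_le]⟩, rfl⟩

theorem notMem_image_of_mapClusterPt {U : Set ℂ} (hU : IsOpen U) (hc : ContinuousOn f U)
    (hi : InjOn f U) (hζ : ζ ∉ U) {w : ℂ} (hw : MapClusterPt w (𝓝[U] ζ) f) : w ∉ f '' U := by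
  rintro ⟨z, hz, rfl⟩
  obtain ⟨V, W, hV, hW, hzV, hζW, hVW⟩ := t2_separation (ne_of_mem_of_not_mem hz hζ)
  have hopen : IsOpen (f '' (U ∩ V)) := isOpen_image_of_injOn (hU.inter hV)
    (hc.mono inter_subset_left) (hi.mono inter_subset_left)
  obtain ⟨x, ⟨y, hy, hyx⟩, hxU, hxW⟩ := ((hw.frequently (hopen.mem_nhds
    (mem_image_of_mem f ⟨hz, hzV⟩))).and_eventually
      (inter_mem self_mem_nhdsWithin (mem_nhdsWithin_of_mem_nhds (hW.mem_nhds hζW)))).exists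
  obtain rfl := hi hy.1 hxU hyx
  exact disjoint_left.1 hVW hy.2 hxW

-- Near `ζ`, the values of `f` enter `ball p e` on small arcs and leave it by lack of convergence,
-- so they cross its boundary circle.
theorem exists_mapClusterPt_mem_sphere (hc : ContinuousOn f (ball 0 1)) (hζ : ‖ζ‖ = 1) {p : ℂ}
    (hp : ∀ η > 0, ∃ᶠ r in 𝓝[>] 0, MapsTo f (ball 0 1 ∩ sphere ζ r) (ball p η))
    (hlim : ¬ Tendsto f (𝓝[ball 0 1] ζ) (𝓝 p)) :
    ∃ d > 0, ∀ e ∈ Ioo 0 d, ∃ w ∈ sphere p e, MapClusterPt w (𝓝[ball 0 1] ζ) f := by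
  rw [Metric.tendsto_nhds] at hlim
  push Not at hlim
  obtain ⟨d, hd, hfar⟩ := hlim
  refine ⟨d, hd, fun e he ↦ (isCompact_sphere p e).exists_mapClusterPt_of_frequently ?_⟩
  rw [(nhdsWithin_hasBasis nhds_basis_ball _).frequently_iff]
  intro ρ hρ
  obtain ⟨r, hrp, hrρ, hr2⟩ := ((hp e he.1).and_eventually
    (inter_mem (Ioo_mem_nhdsGT hρ) (Ioo_mem_nhdsGT two_pos))).exists
  obtain ⟨a, ha, har⟩ := ball_inter_sphere_nonempty hζ hr2
  obtain ⟨b, hbd, hb⟩ := (hfar.and_eventually (inter_mem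
    (mem_nhdsWithin_of_mem_nhds (ball_mem_nhds ζ hρ)) self_mem_nhdsWithin)).exists
  have hconn : IsPreconnected (ball ζ ρ ∩ ball (0 : ℂ) 1) :=
    ((convex_ball ζ ρ).inter (convex_ball 0 1)).isPreconnected
  have hdist : ContinuousOn (fun z ↦ dist (f z) p) (ball ζ ρ ∩ ball 0 1) :=
    (continuous_id.dist continuous_const).comp_continuousOn (hc.mono inter_subset_right)
  exact hconn.intermediate_value (a := a) ⟨mem_ball.2 (har.trans_lt hrρ.2), ha⟩ hb hdist
    ⟨(hrp ⟨ha, har⟩).le, he.2.le.trans hbd⟩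

theorem exists_continuousOn_closure_extension {U : Set ℂ} (hU : IsOpen U)
    (hUb : Bornology.IsBounded U) (hc : ContinuousOn f U) (hi : InjOn f U)
    (hlim : ∀ ζ ∈ frontier U, ∃ p, Tendsto f (𝓝[U] ζ) (𝓝 p)) :
    ∃ F : ℂ → ℂ, ContinuousOn F (closure U) ∧ EqOn F f U ∧ F '' closure U = closure (f '' U) ∧
      MapsTo F (frontier U) (f '' U)ᶜ := by
  have hcF : ContinuousOn (extendFrom U f) (closure U) := continuousOn_extendFrom subset_rfl
    fun x hx ↦ by
      by_cases hxU : x ∈ U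
      · exact ⟨f x, hc x hxU⟩
      · exact hlim x (hU.frontier_eq ▸ ⟨hx, hxU⟩)
  have heq : EqOn (extendFrom U f) f U := fun x hx ↦ extendFrom_eq (subset_closure hx) (hc x hx)
  refine ⟨_, hcF, heq, ?_, fun ζ hζ ↦ ?_⟩
  · rw [← heq.image_eq]
    exact subset_antisymm hcF.image_closure (closure_minimal (image_mono subset_closure)
      (hUb.isCompact_closure.image_of_continuousOn hcF).isClosed)
  · obtain ⟨p, hp⟩ := hlim ζ hζ
    have hζU := frontier_subset_closure hζ
    have := mem_closure_iff_nhdsWithin_neBot.1 hζU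
    rw [extendFrom_eq hζU hp]
    rw [hU.frontier_eq] at hζ
    exact notMem_image_of_mapClusterPt hU hc hi hζ.2 hp.mapClusterPt

end BoundaryArcs

/-- `K` is an arc with endpoints `a` and `b`. The degenerate arc `{a}` with `a = b` is allowed, so
that arcs can be cut at any of their points. -/
def IsArc {X : Type*} [TopologicalSpace X] (K : Set X) (a b : X) : Prop :=
  ∃ (γ : ℝ → X) (p q : ℝ), p ≤ q ∧ ContinuousOn γ (Icc p q) ∧ InjOn γ (Icc p q) ∧
    γ p = a ∧ γ q = b ∧ γ '' Icc p q = K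

namespace IsArc

section TopologicalSpace

variable {X : Type*} [TopologicalSpace X] {K K₁ K₂ C : Set X} {a b y : X}

theorem left_mem (h : IsArc K a b) : a ∈ K := by
  obtain ⟨γ, p, q, hpq, -, -, rfl, -, rfl⟩ := h
  exact mem_image_of_mem _ (left_mem_Icc.2 hpq)

theorem right_mem (h : IsArc K a b) : b ∈ K := by
  obtain ⟨γ, p, q, hpq, -, -, -, rfl, rfl⟩ := h
  exact mem_image_of_mem _ (right_mem_Icc.2 hpq)

theorem isCompact (h : IsArc K a b) : IsCompact K := by
  obtain ⟨γ, p, q, -, hc, -, -, -, rfl⟩ := h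
  exact isCompact_Icc.image_of_continuousOn hc

theorem isPreconnected (h : IsArc K a b) : IsPreconnected K := by
  obtain ⟨γ, p, q, -, hc, -, -, -, rfl⟩ := h
  exact isPreconnected_Icc.image _ hc

theorem hasContinuousLogs [T2Space X] (h : IsArc K a b) : HasContinuousLogs K := by
  obtain ⟨γ, p, q, -, hc, hi, -, -, rfl⟩ := h
  exact (hasContinuousLogs_Icc p q).image isCompact_Icc hc hi

theorem image {Y : Type*} [TopologicalSpace Y] {f : X → Y} (h : IsArc K a b)
    (hc : ContinuousOn f K) (hi : InjOn f K) : IsArc (f '' K) (f a) (f b) := by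
  obtain ⟨γ, p, q, hpq, hγc, hγi, rfl, rfl, rfl⟩ := h
  exact ⟨f ∘ γ, p, q, hpq, hc.comp hγc (mapsTo_image _ _), hi.comp hγi (mapsTo_image _ _), rfl, rfl,
    image_comp f γ _⟩

theorem symm (h : IsArc K a b) : IsArc K b a := by
  obtain ⟨γ, p, q, hpq, hc, hi, rfl, rfl, rfl⟩ := h
  have hneg : MapsTo (fun t : ℝ ↦ -t) (Icc (-q) (-p)) (Icc p q) := fun t ht ↦
    ⟨by linarith [ht.2], by linarith [ht.1]⟩
  refine ⟨fun t ↦ γ (-t), -q, -p, by linarith, hc.comp (by fun_prop) hneg,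
    hi.comp neg_injective.injOn hneg, by simp, by simp, ?_⟩
  rw [← image_image γ (fun t ↦ -t), image_neg_Icc, neg_neg, neg_neg]

theorem singleton (a : X) : IsArc {a} a a :=
  ⟨fun _ ↦ a, 0, 0, le_rfl, continuousOn_const, by simp, rfl, rfl, by simp⟩

theorem of_unitInterval {φ : unitInterval → X} (hc : Continuous φ) (hi : Function.Injective φ) :
    IsArc (range φ) (φ 0) (φ 1) := by
  refine ⟨IccExtend zero_le_one φ, 0, 1, zero_le_one, hc.Icc_extend'.continuousOn, ?_,
    IccExtend_left _ _, IccExtend_right _ _, ?_⟩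
  · intro s hs t ht hst
    rw [IccExtend_of_mem _ _ hs, IccExtend_of_mem _ _ ht] at hst
    exact congrArg Subtype.val (hi hst)
  · rw [← range_domRestrict]
    congr 1
    ext t
    simp

theorem exists_parametrization (h : IsArc K a b) (s : ℝ) :
    ∃ (γ : ℝ → X) (t : ℝ), s ≤ t ∧ ContinuousOn γ (Icc s t) ∧ InjOn γ (Icc s t) ∧
      γ s = a ∧ γ t = b ∧ γ '' Icc s t = K := by
  obtain ⟨γ, p, q, hpq, hc, hi, rfl, rfl, rfl⟩ := h
  have himage : (fun t : ℝ ↦ t + (p - s)) '' Icc s (s + (q - p)) = Icc p q := by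
    rw [image_add_const_Icc]
    ring_nf
  have hshift := himage ▸ mapsTo_image (fun t : ℝ ↦ t + (p - s)) (Icc s (s + (q - p)))
  refine ⟨fun t ↦ γ (t + (p - s)), s + (q - p), by linarith, hc.comp (by fun_prop) hshift,
    hi.comp (add_left_injective _).injOn hshift, by simp, ?_, ?_⟩
  · ring_nf
  · rw [← image_image γ, himage]

theorem join (h₁ : IsArc K₁ a y) (h₂ : IsArc K₂ y b) (h : K₁ ∩ K₂ ⊆ {y}) :
    IsArc (K₁ ∪ K₂) a b := by
  obtain ⟨γ, p, q, hpq, hγc, hγi, rfl, rfl, rfl⟩ := h₁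
  obtain ⟨δ, r, hqr, hδc, hδi, hδq, rfl, rfl⟩ := h₂.exists_parametrization q
  set f : ℝ → X := (Iic q).piecewise γ δ
  have hfγ : EqOn f γ (Icc p q) := fun t ht ↦ piecewise_eq_of_mem _ _ _ ht.2
  have hfδ : EqOn f δ (Icc q r) := fun t ht ↦ by
    rcases ht.1.eq_or_lt with rfl | hlt
    · exact (piecewise_eq_of_mem _ _ _ self_mem_Iic).trans hδq.symm
    · exact piecewise_eq_of_notMem _ _ _ (not_le.2 hlt)
  have hunion : Icc p r = Icc p q ∪ Icc q r := (Icc_union_Icc_eq_Icc hpq hqr).symm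
  have hdisjoint : Disjoint (Icc p q) (Ioc q r) :=
    disjoint_left.2 fun t ht ht' ↦ ht'.1.not_ge ht.2
  refine ⟨f, p, r, hpq.trans hqr, ?_, ?_, hfγ (left_mem_Icc.2 hpq), hfδ (right_mem_Icc.2 hqr), ?_⟩
  · rw [hunion]
    exact (hγc.congr hfγ).union_of_isClosed (hδc.congr hfδ) isClosed_Icc isClosed_Icc
  · rw [← Icc_union_Ioc_eq_Icc hpq hqr, injOn_union hdisjoint]
    refine ⟨hfγ.injOn_iff.2 hγi, (hfδ.injOn_iff.2 hδi).mono Ioc_subset_Icc_self,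
      fun s hs t ht hst ↦ ?_⟩
    have ht' := Ioc_subset_Icc_self ht
    rw [hfγ hs, hfδ ht'] at hst
    have hγs : γ s = γ q := h ⟨⟨s, hs, rfl⟩, t, ht', hst.symm⟩
    exact ht.1.ne' (hδi ht' (left_mem_Icc.2 hqr) (by rw [← hst, hγs, hδq]))
  · rw [hunion, image_union, hfγ.image_eq, hfδ.image_eq]

theorem split (h : IsArc K a b) (hy : y ∈ K) :
    ∃ K₁ K₂, IsArc K₁ a y ∧ IsArc K₂ y b ∧ K₁ ∪ K₂ = K ∧ K₁ ∩ K₂ = {y} := by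
  obtain ⟨γ, p, q, -, hc, hi, rfl, rfl, rfl⟩ := h
  obtain ⟨t, ht, rfl⟩ := hy
  have hpt : Icc p t ⊆ Icc p q := Icc_subset_Icc_right ht.2
  have htq : Icc t q ⊆ Icc p q := Icc_subset_Icc_left ht.1
  refine ⟨γ '' Icc p t, γ '' Icc t q, ⟨γ, p, t, ht.1, hc.mono hpt, hi.mono hpt, rfl, rfl, rfl⟩,
    ⟨γ, t, q, ht.2, hc.mono htq, hi.mono htq, rfl, rfl, rfl⟩, ?_, ?_⟩
  · rw [← image_union, Icc_union_Icc_eq_Icc ht.1 ht.2]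
  · rw [← hi.image_inter hpt htq, Icc_inter_Icc_eq_singleton ht.1 ht.2, image_singleton]

theorem exists_subset_inter_eq_singleton (h : IsArc K a b) (hC : IsClosed C)
    (hKC : (K ∩ C).Nonempty) : ∃ y K₁, IsArc K₁ a y ∧ K₁ ⊆ K ∧ K₁ ∩ C = {y} := by
  obtain ⟨γ, p, q, -, hc, hi, rfl, rfl, rfl⟩ := h
  obtain ⟨_, ⟨s, hs, rfl⟩, hsC⟩ := hKC
  -- the first parameter at which the arc meets `C`
  obtain ⟨t, ⟨ht, htC⟩, hmin⟩ := (isCompact_Icc.of_isClosed_subset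
    (hc.preimage_isClosed_of_isClosed isClosed_Icc hC) inter_subset_left).exists_isLeast
    ⟨s, hs, hsC⟩
  have hpt : Icc p t ⊆ Icc p q := Icc_subset_Icc_right ht.2
  refine ⟨γ t, γ '' Icc p t, ⟨γ, p, t, ht.1, hc.mono hpt, hi.mono hpt, rfl, rfl, rfl⟩,
    image_mono hpt, subset_antisymm ?_ (singleton_subset_iff.2
      ⟨mem_image_of_mem _ (right_mem_Icc.2 ht.1), htC⟩)⟩
  rintro _ ⟨⟨r, hr, rfl⟩, hrC⟩
  rw [hr.2.antisymm (hmin ⟨hpt hr, hrC⟩)]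
  rfl

theorem isPreconnected_sdiff (h : IsArc K a b) : IsPreconnected (K \ {a, b}) := by
  obtain ⟨γ, p, q, hpq, hc, hi, rfl, rfl, rfl⟩ := h
  rw [← image_pair, ← hi.image_sdiff_subset
    (pair_subset (left_mem_Icc.2 hpq) (right_mem_Icc.2 hpq)), Icc_sdiff_both]
  exact isPreconnected_Ioo.image _ (hc.mono Ioo_subset_Icc_self)

theorem isPreconnected_sdiff_right (h : IsArc K a b) : IsPreconnected (K \ {b}) := by
  obtain ⟨γ, p, q, hpq, hc, hi, rfl, rfl, rfl⟩ := h
  rw [← image_singleton, ← hi.image_sdiff_subset (singleton_subset_iff.2 (right_mem_Icc.2 hpq)),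
    Icc_sdiff_right]
  exact isPreconnected_Ico.image _ (hc.mono Ico_subset_Icc_self)

theorem exists_mem_nhds_split (h : IsArc K a b) (hab : a ≠ b) {W : Set X} (hW : W ∈ 𝓝 b) :
    ∃ c K₁ K₂, IsArc K₁ a c ∧ IsArc K₂ c b ∧ K₁ ∪ K₂ = K ∧ b ∉ K₁ ∧ K₂ ⊆ W := by
  obtain ⟨γ, p, q, hpq, hc, hi, rfl, rfl, rfl⟩ := h
  have hlt : p < q := hpq.lt_of_ne fun h ↦ hab (by rw [h])
  have hnear : ∀ᶠ s in 𝓝[<] q, ∀ t ∈ Icc s q, γ t ∈ W := by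
    have : ∀ᶠ t in 𝓝[≤] q, γ t ∈ W := by
      rw [← nhdsWithin_Icc_eq_nhdsLE hlt]
      exact hc q (right_mem_Icc.2 hpq) hW
    obtain ⟨l, hl, hlW⟩ := (mem_nhdsLE_iff_exists_Ioc_subset' hlt).1 this
    filter_upwards [Ioo_mem_nhdsLT hl] with s hs t ht
    exact hlW ⟨hs.1.trans_le ht.1, ht.2⟩
  obtain ⟨s, hsW, hps, hsq⟩ := (hnear.and (Ioo_mem_nhdsLT hlt)).exists
  have hps' : Icc p s ⊆ Icc p q := Icc_subset_Icc_right hsq.le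
  have hsq' : Icc s q ⊆ Icc p q := Icc_subset_Icc_left hps.le
  refine ⟨γ s, γ '' Icc p s, γ '' Icc s q,
    ⟨γ, p, s, hps.le, hc.mono hps', hi.mono hps', rfl, rfl, rfl⟩,
    ⟨γ, s, q, hsq.le, hc.mono hsq', hi.mono hsq', rfl, rfl, rfl⟩, ?_, ?_, image_subset_iff.2 hsW⟩
  · rw [← image_union, Icc_union_Icc_eq_Icc hps.le hsq.le]
  · rw [hi.mem_image_iff hps' (right_mem_Icc.2 hpq)]
    exact fun h ↦ hsq.not_ge h.2

theorem exists_subset_union_of_simpleClosedCurve {L₁ L₂ W : Set X} {u v w : X} (h₁ : IsArc L₁ u v)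
    (h₂ : IsArc L₂ u v) (h : L₁ ∩ L₂ = {u, v}) (hw : w ∈ L₁ \ {u, v}) (hW : W ∈ 𝓝 w) :
    ∃ T c d, IsArc T c d ∧ T ⊆ L₁ ∪ L₂ ∧ L₁ ∪ L₂ ⊆ T ∪ W := by
  have hne : u ≠ w ∧ v ≠ w := by simpa [eq_comm] using hw.2
  obtain ⟨A, B, hA, hB, rfl, hAB⟩ := h₁.split hw.1
  obtain ⟨c, A₁, A₂, hA₁, -, rfl, hwA, hA₂⟩ := hA.exists_mem_nhds_split hne.1 hW
  obtain ⟨d, B₁, B₂, hB₁, -, rfl, -, hB₂⟩ := hB.symm.exists_mem_nhds_split hne.2 hW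
  have hdisj : ∀ z ∈ A₁, z ∉ B₁ := fun z hzA hzB ↦ by
    have hzw : z = w := hAB.subset ⟨Or.inl hzA, Or.inl hzB⟩
    exact hwA (hzw ▸ hzA)
  have hend : ∀ z ∈ A₁ ∪ A₂ ∪ (B₁ ∪ B₂), z ∈ L₂ → z = u ∨ z = v := fun z hz hz₂ ↦
    h.subset ⟨hz, hz₂⟩
  have hA₁₂ : A₁ ∩ L₂ ⊆ {u} := fun z hz ↦
    (hend z (Or.inl (Or.inl hz.1)) hz.2).resolve_right fun hzv ↦
      hdisj z hz.1 (hzv ▸ hB₁.left_mem)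
  have hB₁₂ : (A₁ ∪ L₂) ∩ B₁ ⊆ {v} := fun z hz ↦
    (hend z (Or.inr (Or.inl hz.2)) (hz.1.resolve_left fun hzA ↦ hdisj z hzA hz.2)).resolve_left
      fun hzu ↦ hdisj z (hzu ▸ hA₁.left_mem) hz.2
  refine ⟨_, c, d, (hA₁.symm.join h₂ hA₁₂).join hB₁ hB₁₂, ?_, ?_⟩
  · grind
  · grind

end TopologicalSpace

theorem of_segment {E : Type*} [AddCommGroup E] [Module ℝ E] [TopologicalSpace E]
    [IsTopologicalAddGroup E] [ContinuousSMul ℝ E] (a b : E) : IsArc (segment ℝ a b) a b := by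
  rcases eq_or_ne a b with rfl | hab
  · rw [segment_same]
    exact singleton a
  · exact ⟨AffineMap.lineMap a b, 0, 1, zero_le_one, AffineMap.lineMap_continuous.continuousOn,
      (AffineMap.lineMap_injective ℝ hab).injOn, AffineMap.lineMap_apply_zero _ _,
      AffineMap.lineMap_apply_one _ _, (segment_eq_image_lineMap ℝ a b).symm⟩

theorem isPreconnected_compl {K : Set ℂ} {a b : ℂ} (h : IsArc K a b) : IsPreconnected Kᶜ :=
  h.hasContinuousLogs.isPreconnected_compl h.isCompact

end IsArc

/-- `w` is the endpoint of an arc whose other points lie in `U`: the form of accessibility that only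
remembers the image of the path. -/
def ArcAccessible {X : Type*} [TopologicalSpace X] (U : Set X) (w : X) : Prop :=
  ∃ a ∈ U, ∃ K, IsArc K a w ∧ K ⊆ insert w U

namespace ArcAccessible

section TopologicalSpace

variable {X : Type*} [TopologicalSpace X] {U W : Set X} {w : X}

theorem exists_subset_of_mem_nhds (h : ArcAccessible U w) (hw : w ∉ U) (hW : W ∈ 𝓝 w) :
    ∃ a ∈ U, ∃ K, IsArc K a w ∧ K ⊆ insert w U ∧ K ⊆ W := by
  obtain ⟨a, ha, K, hK, hKU⟩ := h
  obtain ⟨c, K₁, K₂, hK₁, hK₂, rfl, hwK₁, hK₂W⟩ :=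
    hK.exists_mem_nhds_split (ne_of_mem_of_not_mem ha hw) hW
  have hc : c ≠ w := fun h ↦ hwK₁ (h ▸ hK₁.right_mem)
  exact ⟨c, (hKU (Or.inl hK₁.right_mem)).resolve_left hc, K₂, hK₂,
    subset_union_right.trans hKU, hK₂W⟩

theorem mem_closure (h : ArcAccessible U w) : w ∈ closure U := by
  by_cases hw : w ∈ U
  · exact subset_closure hw
  refine mem_closure_iff_nhds.2 fun W hW ↦ ?_
  obtain ⟨a, ha, K, hK, -, hKW⟩ := h.exists_subset_of_mem_nhds hw hW
  exact ⟨a, hKW hK.left_mem, ha⟩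

end TopologicalSpace

section NormedSpace

variable {E : Type*} [NormedAddCommGroup E] [NormedSpace ℝ E] {M C : Set E} {w u : E}

theorem exists_isArc_of_segment_subset {x z : E} (hxz : segment ℝ z x ⊆ M)
    (h : ∃ K, IsArc K x w ∧ K ⊆ insert w M) : ∃ K, IsArc K z w ∧ K ⊆ insert w M := by
  obtain ⟨K, hK, hKM⟩ := h
  obtain ⟨y, S, hS, hSs, hSK⟩ := (IsArc.of_segment z x).exists_subset_inter_eq_singleton
    hK.isCompact.isClosed ⟨x, right_mem_segment ℝ z x, hK.left_mem⟩
  have hy : y ∈ S ∩ K := hSK.superset rfl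
  obtain ⟨K₁, K₂, -, hK₂, rfl, -⟩ := hK.split hy.2
  exact ⟨S ∪ K₂, hS.join hK₂ ((inter_subset_inter_right _ subset_union_right).trans hSK.subset),
    union_subset ((hSs.trans hxz).trans (subset_insert _ _)) (subset_union_right.trans hKM)⟩

theorem exists_isArc_of_mem (h : ArcAccessible M w) (hM : IsOpen M) (hMp : IsPreconnected M)
    (hu : u ∈ M) : ∃ K, IsArc K u w ∧ K ⊆ insert w M := by
  obtain ⟨a, ha, hK⟩ := h
  refine (hMp.induction₂ (fun x z ↦ (∃ K, IsArc K x w ∧ K ⊆ insert w M) ↔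
    ∃ K, IsArc K z w ∧ K ⊆ insert w M) (fun x hx ↦ ?_) (fun _ _ _ _ _ _ ↦ Iff.trans)
    (fun _ _ _ _ ↦ Iff.symm) ha hu).1 hK
  obtain ⟨r, hr, hball⟩ := Metric.isOpen_iff.1 hM x hx
  filter_upwards [mem_nhdsWithin_of_mem_nhds (ball_mem_nhds x hr)] with z hz
  have hzx : segment ℝ z x ⊆ M :=
    ((convex_ball x r).segment_subset hz (mem_ball_self hr)).trans hball
  exact ⟨exists_isArc_of_segment_subset hzx,
    exists_isArc_of_segment_subset (segment_symm ℝ z x ▸ hzx)⟩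

theorem exists_isArc_inter_eq_singleton (h : ArcAccessible M w) (hM : IsOpen M)
    (hMp : IsPreconnected M) (hC : IsClosed C) (hMC : (M ∩ C).Nonempty) :
    ∃ u K, IsArc K w u ∧ K ⊆ insert w M ∧ K ∩ C = {u} := by
  obtain ⟨y, hyM, hyC⟩ := hMC
  obtain ⟨K, hK, hKM⟩ := h.exists_isArc_of_mem hM hMp hyM
  obtain ⟨u, K₁, hK₁, hK₁K, hK₁C⟩ :=
    hK.symm.exists_subset_inter_eq_singleton hC ⟨y, hK.left_mem, hyC⟩
  exact ⟨u, K₁, hK₁, hK₁K.trans hKM, hK₁C⟩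

theorem exists_crosscut {w₁ w₂ : E} (h₁ : ArcAccessible M w₁) (h₂ : ArcAccessible M w₂)
    (hM : IsOpen M) (hMp : IsPreconnected M) (hne : w₁ ≠ w₂) :
    ∃ K, IsArc K w₁ w₂ ∧ K ⊆ insert w₁ (insert w₂ M) ∧ (M ∩ K).Nonempty := by
  obtain ⟨a, ha, K₁, hK₁, hK₁M⟩ := h₁
  obtain ⟨u, K₂, hK₂, hK₂M, hK₂K₁⟩ := h₂.exists_isArc_inter_eq_singleton hM hMp
    hK₁.isCompact.isClosed ⟨a, ha, hK₁.left_mem⟩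
  have hu : u ∈ K₂ ∩ K₁ := hK₂K₁.superset rfl
  have huM : u ∈ M := by grind
  obtain ⟨P, P', hP, -, rfl, -⟩ := hK₁.symm.split hu.2
  refine ⟨P ∪ K₂, hP.join hK₂.symm ?_, by grind, u, huM, Or.inl hP.right_mem⟩
  rw [inter_comm]
  exact (inter_subset_inter_right _ subset_union_left).trans hK₂K₁.subset

theorem exists_tripod {w : Fin 3 → E} (h : ∀ i, ArcAccessible M (w i)) (hM : IsOpen M)
    (hMp : IsPreconnected M) (hwM : ∀ i, w i ∉ M) (hw : Function.Injective w) :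
    ∃ u ∈ M, ∃ A : Fin 3 → Set E, (∀ i, IsArc (A i) u (w i)) ∧ (∀ i, A i ⊆ insert (w i) M) ∧
      Pairwise fun i j ↦ A i ∩ A j = {u} := by
  have hne : w 0 ≠ w 1 ∧ w 0 ≠ w 2 ∧ w 1 ≠ w 2 := by simp [hw.eq_iff]
  obtain ⟨J, hJ, hJM, hMJ⟩ := (h 0).exists_crosscut (h 1) hM hMp hne.1
  obtain ⟨u, S, hS, hSM, hSJ⟩ :=
    (h 2).exists_isArc_inter_eq_singleton hM hMp hJ.isCompact.isClosed hMJ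
  have hu : u ∈ S ∩ J := hSJ.superset rfl
  have huM : u ∈ M := by grind
  obtain ⟨P, Q, hP, hQ, rfl, hPQ⟩ := hJ.split hu.2
  have hPS : P ∩ S = {u} := by grind [hP.right_mem]
  have hQS : Q ∩ S = {u} := by grind [hQ.left_mem]
  refine ⟨u, huM, ![P, Q, S], ?_, ?_, ?_⟩
  · simpa [Fin.forall_fin_succ] using ⟨hP.symm, hQ, hS.symm⟩
  · have hwP : w 1 ∉ P := fun h ↦ hwM 1 (hPQ.subset ⟨h, hQ.right_mem⟩ ▸ huM)
    have hwQ : w 0 ∉ Q := fun h ↦ hwM 0 (hPQ.subset ⟨hP.left_mem, h⟩ ▸ huM)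
    have hPM : P ⊆ insert (w 0) M := by grind
    have hQM : Q ⊆ insert (w 1) M := by grind
    simpa [Fin.forall_fin_succ] using ⟨hPM, hQM, hSM⟩
  · simp [Pairwise, Fin.forall_fin_succ, hPQ, hPS, hQS, inter_comm Q P, inter_comm S]

end NormedSpace

end ArcAccessible

/-- Three arcs from `u` to `v` that meet only in their endpoints: a θ-curve. -/
structure IsThetaCurve {X : Type*} [TopologicalSpace X] (L : Fin 3 → Set X) (u v : X) : Prop where
  isArc : ∀ i, IsArc (L i) u v
  inter_eq : Pairwise fun i j ↦ L i ∩ L j = {u, v}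

section ThetaCurve

theorem mem_closure_connectedComponentIn_compl {L₁ L₂ : Set ℂ} {u v w x y : ℂ}
    (h₁ : IsArc L₁ u v) (h₂ : IsArc L₂ u v) (h : L₁ ∩ L₂ = {u, v}) (hw : w ∈ L₁ \ {u, v})
    (hx : x ∈ (L₁ ∪ L₂)ᶜ) (hy : y ∈ (L₁ ∪ L₂)ᶜ) (hxy : x ∉ connectedComponentIn (L₁ ∪ L₂)ᶜ y) :
    w ∈ closure (connectedComponentIn (L₁ ∪ L₂)ᶜ y) := by
  set S := connectedComponentIn (L₁ ∪ L₂)ᶜ y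
  have hJo : IsOpen (L₁ ∪ L₂)ᶜ := (h₁.isCompact.union h₂.isCompact).isClosed.isOpen_compl
  have hSo : IsOpen S := hJo.connectedComponentIn
  by_contra hwS
  -- Otherwise `S` is not affected by opening the curve near `w`; but the complement of the
  -- remaining arc `T` is connected and contains both `x` and `S`.
  obtain ⟨T, c, d, hT, hTJ, hJT⟩ := h₁.exists_subset_union_of_simpleClosedCurve h₂ h hw
    (isClosed_closure.isOpen_compl.mem_nhds hwS)
  have hJT' := compl_subset_compl.2 hTJ
  refine hxy (hT.isPreconnected_compl.subset_of_closure_inter_subset hSo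
    ⟨y, hJT' hy, mem_connectedComponentIn hy⟩ ?_ (hJT' hx))
  rintro z ⟨hzS, hzT⟩
  by_contra hzn
  have hzJ : z ∈ (L₁ ∪ L₂)ᶜᶜ := frontier_connectedComponentIn_subset hJo y
    (hSo.frontier_eq ▸ ⟨hzS, hzn⟩)
  exact (hJT (not_not.1 hzJ)).elim hzT (· hzS)

theorem exists_disjoint_connectedComponentIn_compl {L₁ L₂ : Set ℂ} {u v x : ℂ}
    (h₁ : IsArc L₁ u v) (h₂ : IsArc L₂ u v) (huv : u ≠ v) (h : L₁ ∩ L₂ = {u, v})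
    (hx : x ∈ (L₁ ∪ L₂)ᶜ) :
    ∃ y ∈ (L₁ ∪ L₂)ᶜ,
      Disjoint (connectedComponentIn (L₁ ∪ L₂)ᶜ y) (connectedComponentIn (L₁ ∪ L₂)ᶜ x) ∧
      (L₁ ∪ L₂) \ {u, v} ⊆ closure (connectedComponentIn (L₁ ∪ L₂)ᶜ y) := by
  obtain ⟨y, hy, hyx⟩ : ∃ y ∈ (L₁ ∪ L₂)ᶜ, y ∉ connectedComponentIn (L₁ ∪ L₂)ᶜ x := by
    by_contra! hall
    refine not_isPreconnected_compl_of_inter_eq_pair h₁.isCompact h₂.isCompact h₁.isPreconnected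
      h₂.isPreconnected huv h ?_
    exact subset_antisymm (connectedComponentIn_subset _ x) hall ▸
      isPreconnected_connectedComponentIn
  have hxy : x ∉ connectedComponentIn (L₁ ∪ L₂)ᶜ y := fun hxy ↦
    hyx (connectedComponentIn_eq hxy ▸ mem_connectedComponentIn hy)
  refine ⟨y, hy, disjoint_left.2 fun z hzy hzx ↦ hyx ?_, ?_⟩
  · rw [connectedComponentIn_eq hzx, ← connectedComponentIn_eq hzy]
    exact mem_connectedComponentIn hy
  · rintro w ⟨hw | hw, hwuv⟩
    · exact mem_closure_connectedComponentIn_compl h₁ h₂ h ⟨hw, hwuv⟩ hx hy hxy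
    · rw [union_comm] at hx hy hxy ⊢
      exact mem_closure_connectedComponentIn_compl h₂ h₁ (inter_comm L₁ L₂ ▸ h) ⟨hw, hwuv⟩ hx hy
        hxy

theorem mem_connectedComponentIn_compl_union_of_mem_closure {X Y N S : Set ℂ} {w₁ w₂ x y : ℂ}
    (hX : IsCompact X) (hY : IsCompact Y) (hXY : IsPreconnected (X ∩ Y)) (hN : IsPreconnected N)
    (hS : IsPreconnected S) (hNXY : Disjoint N (X ∪ Y)) (hSXY : Disjoint S (X ∪ Y))
    (hw₁ : w₁ ∈ closure N ∩ closure S) (hw₁X : w₁ ∉ X) (hw₂ : w₂ ∈ closure N ∩ closure S)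
    (hw₂Y : w₂ ∉ Y) (hx : x ∈ N) (hy : y ∈ S) : y ∈ connectedComponentIn (X ∪ Y)ᶜ x := by
  rw [disjoint_union_right] at hNXY hSXY
  have hpre : ∀ w ∈ closure N ∩ closure S, IsPreconnected (insert w N ∪ insert w S) := fun w hw ↦
    (hN.subset_closure (subset_insert _ _) (insert_subset hw.1 subset_closure)).union w
      (mem_insert _ _) (mem_insert _ _)
      (hS.subset_closure (subset_insert _ _) (insert_subset hw.2 subset_closure))
  have hdisj : ∀ {w : ℂ} {Z : Set ℂ}, w ∉ Z → Disjoint N Z → Disjoint S Z →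
      Disjoint (insert w N ∪ insert w S) Z := fun hw hNZ hSZ ↦
    disjoint_union_left.2 ⟨disjoint_insert_left.2 ⟨hw, hNZ⟩, disjoint_insert_left.2 ⟨hw, hSZ⟩⟩
  have hxm : ∀ w, x ∈ insert w N ∪ insert w S := fun w ↦ Or.inl (Or.inr hx)
  have hym : ∀ w, y ∈ insert w N ∪ insert w S := fun w ↦ Or.inr (Or.inr hy)
  exact mem_connectedComponentIn_compl_union hX hY hXY (hpre w₁ hw₁) (hpre w₂ hw₂)
    (hdisj hw₁X hNXY.1 hSXY.1) (hdisj hw₂Y hNXY.2 hSXY.2) (hxm _) (hym _) (hxm _) (hym _)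

theorem IsThetaCurve.exists_notMem_closure {L : Fin 3 → Set ℂ} {N : Set ℂ} {u v : ℂ}
    {w : Fin 3 → ℂ} (hL : IsThetaCurve L u v) (huv : u ≠ v) (hw : ∀ i, w i ∈ L i \ {u, v})
    (hN : IsPreconnected N) (hne : N.Nonempty) (hNL : ∀ i, Disjoint N (L i)) :
    ∃ i, w i ∉ closure N := by
  by_contra! hwN
  obtain ⟨x, hx⟩ := hne
  have hNJ : Disjoint N (L 0 ∪ L 1) := disjoint_union_right.2 ⟨hNL 0, hNL 1⟩
  have h01 : L 0 ∩ L 1 = {u, v} := hL.inter_eq (by decide)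
  have h02 : L 0 ∩ L 2 = {u, v} := hL.inter_eq (by decide)
  have h12 : L 1 ∩ L 2 = {u, v} := hL.inter_eq (by decide)
  obtain ⟨y, hyJ, hSx, hSw⟩ := exists_disjoint_connectedComponentIn_compl (hL.isArc 0) (hL.isArc 1)
    huv h01 (disjoint_left.1 hNJ hx)
  have hy := mem_connectedComponentIn hyJ
  have hS : IsPreconnected (connectedComponentIn (L 0 ∪ L 1)ᶜ y) :=
    isPreconnected_connectedComponentIn
  have hSJ : connectedComponentIn (L 0 ∪ L 1)ᶜ y ⊆ (L 0 ∪ L 1)ᶜ := connectedComponentIn_subset _ y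
  set S := connectedComponentIn (L 0 ∪ L 1)ᶜ y
  -- `N` and the interior of the third arc lie in one component of the complement of the first two
  have hL₂ : L 2 \ {u, v} ∪ N ⊆ connectedComponentIn (L 0 ∪ L 1)ᶜ x := by
    refine (isPreconnected_union_of_mem_closure (hL.isArc 2).isPreconnected_sdiff hN (hw 2) (hwN 2)
      ).subset_connectedComponentIn (Or.inr hx) (union_subset ?_ hNJ.subset_compl_right)
    grind
  have hSL₂ : Disjoint S (L 2) := disjoint_left.2 fun z hz hz₂ ↦ by
    by_cases hzuv : z ∈ ({u, v} : Set ℂ)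
    · exact hSJ hz (Or.inl (h01.superset hzuv).1)
    · exact disjoint_left.1 hSx hz (hL₂ (Or.inl ⟨hz₂, hzuv⟩))
  have hSL := disjoint_union_right.1 (subset_compl_iff_disjoint_right.1 hSJ)
  have hinter : (L 1 ∪ L 2) ∩ (L 0 ∪ L 2) = L 2 := by grind
  refine disjoint_left.1 hSx hy (connectedComponentIn_mono x ?_
    (mem_connectedComponentIn_compl_union_of_mem_closure (X := L 1 ∪ L 2) (Y := L 0 ∪ L 2)
      ((hL.isArc 1).isCompact.union (hL.isArc 2).isCompact)
      ((hL.isArc 0).isCompact.union (hL.isArc 2).isCompact)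
      (by rw [hinter]; exact (hL.isArc 2).isPreconnected) hN hS (by simp [hNL])
      (by simp [hSL, hSL₂]) ⟨hwN 0, hSw (by grind [hw 0])⟩ (by grind [hw 0])
      ⟨hwN 1, hSw (by grind [hw 1])⟩ (by grind [hw 1]) hx hy))
  grind

theorem exists_isThetaCurve {M V : Set ℂ} {w : Fin 3 → ℂ} (hM : IsOpen M) (hMp : IsPreconnected M)
    (hV : IsOpen V) (hVp : IsPreconnected V) (hMV : Disjoint M V)
    (hwM : ∀ i, ArcAccessible M (w i)) (hwV : ∀ i, ArcAccessible V (w i))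
    (hwMV : ∀ i, w i ∉ M ∪ V) (hw : Function.Injective w) :
    ∃ u ∈ M, ∃ v ∈ V, ∃ L, IsThetaCurve L u v ∧ (∀ i, w i ∈ L i) ∧
      ∀ i, L i ⊆ insert (w i) (M ∪ V) := by
  obtain ⟨u, hu, A, hA, hAM, hAA⟩ :=
    ArcAccessible.exists_tripod hwM hM hMp (fun i h ↦ hwMV i (Or.inl h)) hw
  obtain ⟨v, hv, B, hB, hBV, hBB⟩ :=
    ArcAccessible.exists_tripod hwV hV hVp (fun i h ↦ hwMV i (Or.inr h)) hw
  have hMV' := disjoint_left.1 hMV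
  have hAB : ∀ i, A i ∩ B i ⊆ {w i} := by grind
  have hAB' : ∀ i j, i ≠ j → A i ∩ B j = ∅ := by grind [hw.ne_iff]
  refine ⟨u, hu, v, hv, fun i ↦ A i ∪ B i, ⟨fun i ↦ (hA i).join (hB i).symm (hAB i), ?_⟩,
    fun i ↦ Or.inl (hA i).right_mem, by grind⟩
  intro i j hij
  rw [union_inter_distrib_right, inter_union_distrib_left, inter_union_distrib_left, hAA hij,
    hBB hij, hAB' i j hij, inter_comm, hAB' j i hij.symm, union_empty, empty_union]
  rfl

theorem exists_notMem_closure_of_arcAccessible {M V N : Set ℂ} {w : Fin 3 → ℂ} (hM : IsOpen M)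
    (hMp : IsPreconnected M) (hV : IsOpen V) (hVp : IsPreconnected V) (hMV : Disjoint M V)
    (hwM : ∀ i, ArcAccessible M (w i)) (hwV : ∀ i, ArcAccessible V (w i))
    (hw : Function.Injective w) (hwMV : ∀ i, w i ∉ M ∪ V) (hwN : ∀ i, w i ∉ N)
    (hN : IsPreconnected N) (hne : N.Nonempty) (hNM : Disjoint N M) (hNV : Disjoint N V) :
    ∃ i, w i ∉ closure N := by
  obtain ⟨u, hu, v, hv, L, hL, hwL, hLMV⟩ :=
    exists_isThetaCurve hM hMp hV hVp hMV hwM hwV hwMV hw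
  refine hL.exists_notMem_closure (hMV.ne_of_mem hu hv)
    (fun i ↦ ⟨hwL i, ?_⟩) hN hne fun i ↦ ?_
  · rintro (h | h)
    exacts [hwMV i (Or.inl (h ▸ hu)), hwMV i (Or.inr (h ▸ hv))]
  · exact (disjoint_insert_right.2 ⟨hwN i, disjoint_union_right.2 ⟨hNM, hNV⟩⟩).mono_right (hLMV i)

end ThetaCurve

section BoundaryLimits

variable {f : ℂ → ℂ} {U : Set ℂ} {ζ w : ℂ}

theorem ArcAccessible.eventually_image_sdiff_closedBall (h : ArcAccessible (f '' U) w)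
    (hU : IsOpen U) (hc : ContinuousOn f U) (hi : InjOn f U) (hζ : ζ ∉ U) (hw : w ∉ f '' U) {ρ : ℝ}
    (hρ : 0 < ρ) : ∀ᶠ r in 𝓝 0, MapsTo f (U ∩ sphere ζ r) (ball w ρ)ᶜ →
      ArcAccessible (f '' (U \ closedBall ζ r)) w := by
  obtain ⟨_, ⟨z, hz, rfl⟩, K, hK, hKU, hKw⟩ := h.exists_subset_of_mem_nhds hw (ball_mem_nhds w hρ)
  filter_upwards [Iio_mem_nhds (dist_pos.2 (ne_of_mem_of_not_mem hz hζ))] with r hr hdis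
  have hzr : z ∉ closedBall ζ r := fun h ↦ (mem_closedBall.1 h).not_gt hr
  refine ⟨f z, mem_image_of_mem f ⟨hz, hzr⟩, K, hK, sdiff_singleton_subset_iff.1 ?_⟩
  exact subset_image_sdiff_closedBall hU hc hi hK.isPreconnected_sdiff_right
    (sdiff_singleton_subset_iff.2 hKU) (fun y hy hyK ↦ hdis hy (hKw hyK.1)) hz
    ⟨hK.left_mem, fun h ↦ hw ⟨z, hz, h⟩⟩ hr

theorem mem_closure_image_inter_of_mapClusterPt {W : Set ℂ} (h : MapClusterPt w (𝓝[U] ζ) f)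
    (hW : W ∈ 𝓝 ζ) : w ∈ closure (f '' (U ∩ W)) :=
  h.clusterPt.mem_closure_of_mem _
    (image_mem_map (inter_mem self_mem_nhdsWithin (mem_nhdsWithin_of_mem_nhds hW)))

theorem mem_frontier_image_of_mapClusterPt (hU : IsOpen U) (hc : ContinuousOn f U)
    (hi : InjOn f U) (hζ : ζ ∉ U) (h : MapClusterPt w (𝓝[U] ζ) f) : w ∈ frontier (f '' U) := by
  rw [(isOpen_image_of_injOn hU hc hi).frontier_eq]
  refine ⟨?_, notMem_image_of_mapClusterPt hU hc hi hζ h⟩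
  simpa using mem_closure_image_inter_of_mapClusterPt h univ_mem

theorem exists_three_mapClusterPt_of_not_tendsto {p : ℂ} (hc : ContinuousOn f (ball 0 1))
    (hζ : ‖ζ‖ = 1) (hp : ∀ η > 0, ∃ᶠ r in 𝓝[>] 0, MapsTo f (ball 0 1 ∩ sphere ζ r) (ball p η))
    (hlim : ¬ Tendsto f (𝓝[ball 0 1] ζ) (𝓝 p)) :
    ∃ ρ > 0, ∃ w : Fin 3 → ℂ, Function.Injective w ∧
      ∀ i, MapClusterPt (w i) (𝓝[ball 0 1] ζ) f ∧ Disjoint (ball p ρ) (ball (w i) ρ) := by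
  obtain ⟨d, hd, hcluster⟩ := exists_mapClusterPt_mem_sphere hc hζ hp hlim
  have hradius : ∀ i : Fin 3, d / (i + 2) ∈ Ioo 0 d := fun i ↦
    ⟨by positivity, div_lt_self hd (by linarith [Nat.cast_nonneg (α := ℝ) i])⟩
  choose w hwp hw using fun i ↦ hcluster _ (hradius i)
  refine ⟨d / 8, by positivity, w, fun i j hij ↦ ?_, fun i ↦ ⟨hw i, ball_disjoint_ball ?_⟩⟩
  · have hdist := (hwp i).symm.trans (hij ▸ hwp j)
    field_simp at hdist
    simpa [Fin.ext_iff, eq_comm] using hdist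
  · have hi : (i : ℝ) ≤ 2 := mod_cast Nat.le_of_lt_succ i.2
    rw [dist_comm, mem_sphere.1 (hwp i), le_div_iff₀ (by positivity)]
    nlinarith

theorem exists_tendsto_of_arcAccessible {V : Set ℂ} (hd : DifferentiableOn ℂ f (ball 0 1))
    (hi : InjOn f (ball 0 1)) (hb : Bornology.IsBounded (f '' ball 0 1)) (hV : IsOpen V)
    (hVp : IsPreconnected V) (hUV : Disjoint (f '' ball 0 1) V)
    (hUa : ∀ w ∈ frontier (f '' ball 0 1), ArcAccessible (f '' ball 0 1) w)
    (hVa : ∀ w ∈ frontier (f '' ball 0 1), ArcAccessible V w) (hζ : ‖ζ‖ = 1) :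
    ∃ p, Tendsto f (𝓝[ball 0 1] ζ) (𝓝 p) := by
  have hc := hd.continuousOn
  have hζU : ζ ∉ ball (0 : ℂ) 1 := by simp [hζ]
  obtain ⟨p, hp⟩ := exists_forall_frequently_mapsTo_ball hd hi hb hζ
  refine ⟨p, by_contra fun hlim ↦ ?_⟩
  obtain ⟨ρ, hρ, w, hinj, hw⟩ := exists_three_mapClusterPt_of_not_tendsto hc hζ hp hlim
  have hwU : ∀ i, w i ∉ f '' ball 0 1 := fun i ↦
    notMem_image_of_mapClusterPt isOpen_ball hc hi hζU (hw i).1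
  have hwfr : ∀ i, w i ∈ frontier (f '' ball 0 1) := fun i ↦
    mem_frontier_image_of_mapClusterPt isOpen_ball hc hi hζU (hw i).1
  have hwV : ∀ i, w i ∉ V := fun i ↦
    disjoint_left.1 (hUV.closure_left hV) (frontier_subset_closure (hwfr i))
  obtain ⟨r, hrp, hwM, hr⟩ := ((hp ρ hρ).and_eventually
    ((eventually_all.2 fun i ↦ ((hUa _ (hwfr i)).eventually_image_sdiff_closedBall isOpen_ball hc
      hi hζU (hwU i) hρ).filter_mono nhdsWithin_le_nhds).and self_mem_nhdsWithin)).exists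
  have hwN : ∀ i, w i ∈ closure (f '' (ball 0 1 ∩ ball ζ r)) := fun i ↦
    mem_closure_image_inter_of_mapClusterPt (hw i).1 (ball_mem_nhds ζ hr)
  have hMU : f '' (ball 0 1 \ closedBall ζ r) ⊆ f '' ball 0 1 := image_mono sdiff_subset
  have hNU : f '' (ball 0 1 ∩ ball ζ r) ⊆ f '' ball 0 1 := image_mono inter_subset_left
  have hNM : Disjoint (f '' (ball 0 1 ∩ ball ζ r)) (f '' (ball 0 1 \ closedBall ζ r)) :=
    Disjoint.image (disjoint_left.2 fun z hz hz' ↦ hz'.2 (ball_subset_closedBall hz.2)) hi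
      inter_subset_left sdiff_subset
  obtain ⟨i, hwi⟩ := exists_notMem_closure_of_arcAccessible
    (isOpen_image_of_injOn (isOpen_ball.sdiff isClosed_closedBall) (hc.mono sdiff_subset)
      (hi.mono sdiff_subset))
    ((isPreconnected_ball_sdiff_closedBall hζ hr).image _ (hc.mono sdiff_subset)) hV hVp
    (hUV.mono_left hMU) (fun i ↦ hwM i (hrp.mono_right (hw i).2.subset_compl_right))
    (fun i ↦ hVa _ (hwfr i)) hinj (fun i ↦ not_or.2 ⟨fun h ↦ hwU i (hMU h), hwV i⟩)
    (fun i h ↦ hwU i (hNU h))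
    (((convex_ball _ _).inter (convex_ball _ _)).isPreconnected.image _ (hc.mono inter_subset_left))
    (closure_nonempty_iff.1 ⟨w 0, hwN 0⟩) hNM (hUV.mono_left hNU)
  exact hwi (hwN i)

end BoundaryLimits

section BoundaryInjectivity

variable {F : ℂ → ℂ}

theorem exists_finset_forall_sphere_mul_mem {η : ℂ} {W : Set ℂ} (hη : ‖η‖ = 1) (hW : W ∈ 𝓝 η) :
    ∃ t : Finset ℂ, (∀ ω ∈ t, ‖ω‖ = 1) ∧ ∀ z ∈ sphere (0 : ℂ) 1, ∃ ω ∈ t, ω * z ∈ W := by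
  classical
  obtain ⟨s, hs, hcover⟩ := (isCompact_sphere (0 : ℂ) 1).elim_nhds_subcover
    (fun a ↦ (fun z ↦ η / a * z) ⁻¹' W) fun a ha ↦ by
      refine ContinuousAt.preimage_mem_nhds (by fun_prop) ?_
      rwa [div_mul_cancel₀ η (ne_of_mem_sphere ha one_ne_zero)]
  refine ⟨s.image (η / ·), by simpa [hη] using hs, fun z hz ↦ ?_⟩
  simpa using hcover hz

theorem apply_zero_eq_of_eventually_eq {η p : ℂ} (hF : DiffContOnCl ℂ F (ball 0 1)) (hη : ‖η‖ = 1)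
    (h : ∀ᶠ z in 𝓝[sphere 0 1] η, F z = p) : F 0 = p := by
  obtain ⟨t, ht, hcover⟩ :=
    exists_finset_forall_sphere_mul_mem hη (eventually_nhdsWithin_iff.1 h)
  -- Finitely many rotations of the arc cover the circle, so this product vanishes on the circle.
  set g : ℂ → ℂ := fun z ↦ ∏ ω ∈ t, (F (ω * z) - p)
  have hg : DiffContOnCl ℂ g (ball 0 1) := by
    have hrot : ∀ ω ∈ t, DiffContOnCl ℂ (fun z ↦ F (ω * z)) (ball 0 1) := fun ω hω ↦
      hF.comp (Differentiable.diffContOnCl (by fun_prop)) fun z hz ↦ by simpa [ht ω hω] using hz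
    exact ⟨DifferentiableOn.fun_finsetProd fun ω hω ↦ (hrot ω hω).1.sub_const p,
      continuousOn_finsetProd _ fun ω hω ↦ (hrot ω hω).2.sub continuousOn_const⟩
  have hg₀ : g 0 = 0 := by
    rw [← norm_le_zero_iff]
    refine Complex.norm_le_of_forall_mem_frontier_norm_le isBounded_ball hg (fun z hz ↦ ?_)
      (subset_closure (mem_ball_self one_pos))
    rw [frontier_ball _ one_ne_zero] at hz
    obtain ⟨ω, hω, hωz⟩ := hcover z hz
    have hmem : ω * z ∈ sphere (0 : ℂ) 1 := by simpa [ht ω hω] using hz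
    have hgz : g z = 0 := Finset.prod_eq_zero hω (sub_eq_zero.2 (hωz hmem))
    exact (norm_eq_zero.2 hgz).le
  obtain ⟨ω, -, hω⟩ := Finset.prod_eq_zero_iff.1 hg₀
  rwa [mul_zero, sub_eq_zero] at hω

theorem segment_zero_subset_insert_ball {E : Type*} [NormedAddCommGroup E] [NormedSpace ℝ E]
    [StrictConvexSpace ℝ E] {ζ : E} {r : ℝ} (hr : 0 < r) (hζ : ‖ζ‖ = r) :
    segment ℝ 0 ζ ⊆ insert ζ (ball 0 r) := by
  rw [← insert_endpoints_openSegment]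
  refine insert_subset (Or.inr (by simpa)) (insert_subset_insert ?_)
  refine openSegment_subset_ball_of_ne (by simp [hr.le]) (by simp [hζ]) ?_
  exact (norm_ne_zero_iff.1 (hζ ▸ hr.ne')).symm

theorem segment_zero_inter_segment_zero {E : Type*} [NormedAddCommGroup E] [NormedSpace ℝ E]
    {ζ₁ ζ₂ : E} (hζ : ‖ζ₁‖ = ‖ζ₂‖) (hne : ζ₁ ≠ ζ₂) : segment ℝ 0 ζ₁ ∩ segment ℝ 0 ζ₂ = {0} := by
  refine subset_antisymm ?_ (by simp [left_mem_segment])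
  simp only [segment_eq_image, smul_zero, zero_add]
  rintro _ ⟨⟨s, hs, rfl⟩, t, ht, hst⟩
  rcases eq_or_ne s 0 with rfl | hs0
  · exact zero_smul ℝ ζ₁
  have hts : t = s := by
    have hnorm := congrArg norm hst
    simp only [norm_smul, Real.norm_of_nonneg, hs.1, ht.1, hζ] at hnorm
    refine mul_right_cancel₀ (fun h₂ ↦ hne ?_) hnorm
    rw [norm_eq_zero.1 (hζ.trans h₂), norm_eq_zero.1 h₂]
  exact absurd (smul_right_injective E hs0 (hts ▸ hst)) hne.symm

theorem mem_of_apply_mem_image {X : Set ℂ} {z : ℂ} (hi : InjOn F (ball 0 1))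
    (hbd : MapsTo F (sphere 0 1) (F '' ball 0 1)ᶜ) (hX : X ⊆ closedBall 0 1) (hz : z ∈ ball 0 1)
    (h : F z ∈ F '' X) : z ∈ X := by
  obtain ⟨x, hx, hxz⟩ := h
  rcases ball_union_sphere.superset (hX hx) with hxb | hxs
  · exact hi hxb hz hxz ▸ hx
  · exact absurd ⟨z, hz, hxz.symm⟩ (hbd hxs)

theorem isArc_image_segment {ζ : ℂ} (hc : ContinuousOn F (closedBall 0 1))
    (hi : InjOn F (ball 0 1)) (hbd : MapsTo F (sphere 0 1) (F '' ball 0 1)ᶜ) (hζ : ‖ζ‖ = 1) :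
    IsArc (F '' segment ℝ 0 ζ) (F 0) (F ζ) := by
  refine (IsArc.of_segment 0 ζ).image (hc.mono ((convex_closedBall _ _).segment_subset
    (by simp) (by simp [hζ]))) (InjOn.mono (segment_zero_subset_insert_ball one_pos hζ) ?_)
  exact (injOn_insert (by simp [hζ])).2 ⟨hi, hbd (by simp [hζ])⟩

theorem image_segment_inter_image_segment {ζ₁ ζ₂ : ℂ} (hi : InjOn F (ball 0 1))
    (hbd : MapsTo F (sphere 0 1) (F '' ball 0 1)ᶜ) (hζ₁ : ‖ζ₁‖ = 1) (hζ₂ : ‖ζ₂‖ = 1)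
    (hne : ζ₁ ≠ ζ₂) (he : F ζ₁ = F ζ₂) :
    F '' segment ℝ 0 ζ₁ ∩ F '' segment ℝ 0 ζ₂ = {F 0, F ζ₁} := by
  refine subset_antisymm ?_ (pair_subset ?_ ?_)
  · rintro _ ⟨⟨x₁, hx₁, rfl⟩, hx₂⟩
    rcases segment_zero_subset_insert_ball one_pos hζ₁ hx₁ with rfl | hb
    · exact Or.inr rfl
    · have hx₂ := mem_of_apply_mem_image hi hbd ((convex_closedBall _ _).segment_subset
        (by simp) (by simp [hζ₂])) hb hx₂
      have hx₀ : x₁ = 0 :=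
        (segment_zero_inter_segment_zero (hζ₁.trans hζ₂.symm) hne).subset ⟨hx₁, hx₂⟩
      exact Or.inl (congrArg F hx₀)
  · exact ⟨mem_image_of_mem F (left_mem_segment ..), mem_image_of_mem F (left_mem_segment ..)⟩
  · refine ⟨mem_image_of_mem F (right_mem_segment ..), ?_⟩
    exact he ▸ mem_image_of_mem F (right_mem_segment ..)

theorem apply_mem_closure_connectedComponentIn {X : Set ℂ} {η y : ℂ} {r : ℝ}
    (hc : ContinuousOn F (closedBall 0 1)) (hi : InjOn F (ball 0 1))
    (hbd : MapsTo F (sphere 0 1) (F '' ball 0 1)ᶜ) (hX : StarConvex ℝ 0 X)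
    (hXb : X ⊆ closedBall 0 1) (hη : ‖η‖ = 1) (hr : r ∈ Ioo 0 1)
    (hy : F (r • η) ∈ connectedComponentIn (F '' X)ᶜ y) :
    F η ∈ closure (connectedComponentIn (F '' X)ᶜ y) := by
  have hnorm : ∀ t : ℝ, 0 ≤ t → ‖t • η‖ = t := fun t ht ↦ by
    rw [norm_smul, Real.norm_of_nonneg ht, hη, mul_one]
  have hray : ContinuousOn (fun t : ℝ ↦ F (t • η)) (Icc r 1) :=
    hc.comp (by fun_prop) fun t ht ↦ by
      rw [mem_closedBall_zero_iff, hnorm t (hr.1.le.trans ht.1)]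
      exact ht.2
  have hrX : r • η ∉ X := fun h ↦ connectedComponentIn_subset _ _ hy (mem_image_of_mem F h)
  have hdisj : ∀ t ∈ Ico r 1, F (t • η) ∉ F '' X := fun t ht hFt ↦ by
    have ht0 : 0 < t := hr.1.trans_le ht.1
    have htX : t • η ∈ X := mem_of_apply_mem_image hi hbd hXb
      (by rw [mem_ball_zero_iff, hnorm t ht0.le]; exact ht.2) hFt
    refine hrX ?_
    convert hX.smul_mem htX (div_nonneg hr.1.le ht0.le) (div_le_one_of_le₀ ht.1 ht0.le) using 1
    rw [smul_smul, div_mul_cancel₀ r ht0.ne']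
  have hS : (fun t : ℝ ↦ F (t • η)) '' Ico r 1 ⊆ connectedComponentIn (F '' X)ᶜ y := by
    rw [connectedComponentIn_eq hy]
    exact (isPreconnected_Ico.image _ (hray.mono Ico_subset_Icc_self)).subset_connectedComponentIn
      ⟨r, left_mem_Ico.2 hr.2, rfl⟩ (image_subset_iff.2 hdisj)
  rw [← closure_Ico hr.2.ne] at hray
  refine closure_mono hS (hray.image_closure ⟨1, ?_, by simp⟩)
  rw [closure_Ico hr.2.ne]
  exact right_mem_Icc.2 hr.2.le

theorem image_segment_union_segment_subset {ζ₁ ζ₂ : ℂ} (hζ₁ : ‖ζ₁‖ = 1) (hζ₂ : ‖ζ₂‖ = 1)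
    (he : F ζ₁ = F ζ₂) :
    F '' (segment ℝ 0 ζ₁ ∪ segment ℝ 0 ζ₂) ⊆ insert (F ζ₁) (F '' ball 0 1) := by
  have hsub : ∀ ζ : ℂ, ‖ζ‖ = 1 → F '' segment ℝ 0 ζ ⊆ insert (F ζ) (F '' ball 0 1) := fun ζ hζ ↦
    (image_mono (segment_zero_subset_insert_ball one_pos hζ)).trans_eq (image_insert_eq ..)
  rw [image_union]
  exact union_subset (hsub ζ₁ hζ₁) (he ▸ hsub ζ₂ hζ₂)

theorem closure_image_ball (hc : ContinuousOn F (closedBall 0 1)) :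
    closure (F '' ball 0 1) = F '' closedBall 0 1 := by
  refine subset_antisymm (closure_minimal (image_mono ball_subset_closedBall)
    ((isCompact_closedBall 0 1).image_of_continuousOn hc).isClosed) ?_
  rw [← closure_ball 0 one_ne_zero] at hc ⊢
  exact hc.image_closure

theorem exists_mem_image_segment_sdiff_pair {ζ : ℂ} (hi : InjOn F (ball 0 1))
    (hbd : MapsTo F (sphere 0 1) (F '' ball 0 1)ᶜ) (hζ : ‖ζ‖ = 1) :
    ∃ w ∈ F '' ball 0 1, w ∈ F '' segment ℝ 0 ζ \ {F 0, F ζ} := by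
  have hhalf : (1 / 2 : ℝ) • ζ ∈ ball (0 : ℂ) 1 := by
    rw [mem_ball_zero_iff, norm_smul, hζ]
    norm_num
  have hζ0 : ζ ≠ 0 := fun h ↦ by simp [h] at hζ
  refine ⟨_, mem_image_of_mem F hhalf, mem_image_of_mem F ?_, ?_⟩
  · exact (convex_segment 0 ζ).starConvex (left_mem_segment ..) |>.smul_mem
      (right_mem_segment ..) (by norm_num) (by norm_num)
  · rintro (h | h)
    · have := hi hhalf (mem_ball_self one_pos) h
      simp [hζ0] at this
    · exact hbd (mem_sphere_zero_iff_norm.2 hζ) ⟨_, hhalf, h⟩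

theorem exists_connectedComponentIn_subset_image_ball {V : Set ℂ} {ζ₁ ζ₂ : ℂ}
    (hc : ContinuousOn F (closedBall 0 1)) (hi : InjOn F (ball 0 1))
    (hbd : MapsTo F (sphere 0 1) (F '' ball 0 1)ᶜ) (hV : IsOpen V) (hVp : IsPreconnected V)
    (hUV : Disjoint (F '' ball 0 1) V) (hFV : MapsTo F (sphere 0 1) (closure V)) (hζ₁ : ‖ζ₁‖ = 1)
    (hζ₂ : ‖ζ₂‖ = 1) (hne : ζ₁ ≠ ζ₂) (he : F ζ₁ = F ζ₂) :
    ∃ z ∈ ball (0 : ℂ) 1, F z ∉ F '' (segment ℝ 0 ζ₁ ∪ segment ℝ 0 ζ₂) ∧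
      connectedComponentIn (F '' (segment ℝ 0 ζ₁ ∪ segment ℝ 0 ζ₂))ᶜ (F z) ⊆ F '' ball 0 1 := by
  have hU : IsOpen (F '' ball 0 1) :=
    isOpen_image_of_injOn isOpen_ball (hc.mono ball_subset_closedBall) hi
  have hζ₁s : ζ₁ ∈ sphere (0 : ℂ) 1 := mem_sphere_zero_iff_norm.2 hζ₁
  have hUcl := closure_image_ball hc
  have hVU : Disjoint (F '' closedBall 0 1) V := hUcl ▸ hUV.closure_left hV
  have hVJ : V ⊆ (F '' (segment ℝ 0 ζ₁ ∪ segment ℝ 0 ζ₂))ᶜ := by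
    refine subset_compl_iff_disjoint_left.2 (hVU.mono_left
      ((image_segment_union_segment_subset hζ₁ hζ₂ he).trans (insert_subset ?_ ?_)))
    · exact mem_image_of_mem F (sphere_subset_closedBall hζ₁s)
    · exact image_mono ball_subset_closedBall
  obtain ⟨x, hx⟩ : V.Nonempty := closure_nonempty_iff.1 ⟨_, hFV hζ₁s⟩
  have h₁ := isArc_image_segment hc hi hbd hζ₁
  have h₂ := he ▸ isArc_image_segment hc hi hbd hζ₂
  rw [image_union] at hVJ ⊢
  obtain ⟨y, hy, hSx, hJS⟩ := exists_disjoint_connectedComponentIn_compl h₁ h₂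
    (fun h ↦ hbd hζ₁s ⟨0, mem_ball_self one_pos, h⟩)
    (image_segment_inter_image_segment hi hbd hζ₁ hζ₂ hne he) (hVJ hx)
  have hyS := mem_connectedComponentIn hy
  set S := connectedComponentIn (F '' segment ℝ 0 ζ₁ ∪ F '' segment ℝ 0 ζ₂)ᶜ y
  have hSo : IsOpen S :=
    (h₁.isCompact.union h₂.isCompact).isClosed.isOpen_compl.connectedComponentIn
  have hSV : Disjoint S (closure V) :=
    (hSx.mono_right (hVp.subset_connectedComponentIn hx hVJ)).closure_right hSo
  have hmeet : (S ∩ F '' ball 0 1).Nonempty := by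
    obtain ⟨w, hwU, hw, hwne⟩ := exists_mem_image_segment_sdiff_pair hi hbd hζ₁
    exact inter_comm S _ ▸ mem_closure_iff.1 (hJS ⟨Or.inl hw, hwne⟩) _ hU hwU
  have hSU : S ⊆ F '' ball 0 1 := by
    refine isPreconnected_connectedComponentIn.subset_of_closure_inter_subset hU hmeet ?_
    rw [hUcl, ← ball_union_sphere, image_union]
    rintro _ ⟨hb | ⟨ζ, hζ, rfl⟩, hS⟩
    · exact hb
    · exact absurd (hFV hζ) (disjoint_left.1 hSV hS)
  obtain ⟨z, hz, rfl⟩ := hSU hyS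
  exact ⟨z, hz, hy, hSU⟩

theorem injOn_closedBall_of_mapsTo_closure {V : Set ℂ} (hF : DiffContOnCl ℂ F (ball 0 1))
    (hi : InjOn F (ball 0 1)) (hbd : MapsTo F (sphere 0 1) (F '' ball 0 1)ᶜ) (hV : IsOpen V)
    (hVp : IsPreconnected V) (hUV : Disjoint (F '' ball 0 1) V)
    (hFV : MapsTo F (sphere 0 1) (closure V)) : InjOn F (closedBall 0 1) := by
  have hc : ContinuousOn F (closedBall 0 1) := hF.continuousOn_ball
  have hdisj : Disjoint (ball (0 : ℂ) 1) (sphere 0 1) := sphere_disjoint_ball.symm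
  rw [← ball_union_sphere, injOn_union hdisj]
  refine ⟨hi, fun ζ₁ hζ₁s ζ₂ hζ₂s he ↦ by_contra fun hne ↦ ?_,
    fun x hx y hy h ↦ hbd hy ⟨x, hx, h⟩⟩
  have hζ₁ := mem_sphere_zero_iff_norm.1 hζ₁s
  have hζ₂ := mem_sphere_zero_iff_norm.1 hζ₂s
  obtain ⟨z, hz, hzJ, hzU⟩ :=
    exists_connectedComponentIn_subset_image_ball hc hi hbd hV hVp hUV hFV hζ₁ hζ₂ hne he
  set X := segment ℝ 0 ζ₁ ∪ segment ℝ 0 ζ₂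
  have hX : StarConvex ℝ 0 X :=
    ((convex_segment 0 ζ₁).starConvex (left_mem_segment ..)).union
      ((convex_segment 0 ζ₂).starConvex (left_mem_segment ..))
  have hXb : X ⊆ closedBall 0 1 := union_subset
    ((convex_closedBall _ _).segment_subset (by simp) (by simp [hζ₁]))
    ((convex_closedBall _ _).segment_subset (by simp) (by simp [hζ₂]))
  have hJo : IsOpen (F '' X)ᶜ := by
    rw [image_union]
    exact ((isArc_image_segment hc hi hbd hζ₁).isCompact.union
      (isArc_image_segment hc hi hbd hζ₂).isCompact).isClosed.isOpen_compl
  have hz0 : 0 < ‖z‖ := norm_pos_iff.2 fun h ↦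
    hzJ (h ▸ mem_image_of_mem F (Or.inl (left_mem_segment ..)))
  set η₀ : ℂ := ‖z‖⁻¹ • z
  have hη₀ : ‖z‖ • η₀ = z := smul_inv_smul₀ hz0.ne' z
  have hcont : ContinuousAt (fun η : ℂ ↦ F (‖z‖ • η)) η₀ :=
    (hc.continuousAt (closedBall_mem_nhds_of_mem hz)).comp_of_eq (by fun_prop) hη₀
  have hnear : ∀ᶠ η in 𝓝 η₀, F (‖z‖ • η) ∈ connectedComponentIn (F '' X)ᶜ (F z) :=
    hcont.preimage_mem_nhds
      (hη₀.symm ▸ hJo.connectedComponentIn.mem_nhds (mem_connectedComponentIn hzJ))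
  -- Near `η₀` the values of `F` on the circle lie in the boundary of the component of `F z`, and
  -- the only point of this boundary outside `F '' ball 0 1` is `F ζ₁`.
  refine hbd hζ₁s ⟨0, mem_ball_self one_pos,
    apply_zero_eq_of_eventually_eq (η := η₀) hF (by simp [η₀, hz0.ne']) ?_⟩
  filter_upwards [self_mem_nhdsWithin, nhdsWithin_le_nhds hnear] with η hη hηS
  have hηcl := apply_mem_closure_connectedComponentIn hc hi hbd hX hXb
    (mem_sphere_zero_iff_norm.1 hη) ⟨hz0, mem_ball_zero_iff.1 hz⟩ hηS
  have hηJ : F η ∈ (F '' X)ᶜᶜ := frontier_connectedComponentIn_subset hJo (F z)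
    (hJo.connectedComponentIn.frontier_eq ▸ ⟨hηcl, fun h ↦ hbd hη (hzU h)⟩)
  exact (image_segment_union_segment_subset hζ₁ hζ₂ he (not_not.1 hηJ)).resolve_right (hbd hη)

end BoundaryInjectivity

theorem closure_interior_eq_of_arcAccessible {D : Set ℂ} (hD : IsClosed D)
    (h : ∀ w ∈ frontier D, ArcAccessible (interior D) w) : closure (interior D) = D := by
  refine subset_antisymm (closure_minimal interior_subset hD) fun w hw ↦ ?_
  by_cases hwi : w ∈ interior D
  · exact subset_closure hwi
  · exact (h w (hD.frontier_eq ▸ ⟨hw, hwi⟩)).mem_closure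

theorem nonempty_homeomorph_closedBall_of_arcAccessible {D : Set ℂ} (hD : IsCompact D)
    (hne : (interior D).Nonempty) (hU : IsPreconnected (interior D)) (hV : IsPreconnected Dᶜ)
    (hUa : ∀ w ∈ frontier D, ArcAccessible (interior D) w)
    (hVa : ∀ w ∈ frontier D, ArcAccessible Dᶜ w) : Nonempty (D ≃ₜ closedBall (0 : ℂ) 1) := by
  have hDcl := closure_interior_eq_of_arcAccessible hD.isClosed hUa
  have hfr : frontier (interior D) = frontier D := by
    rw [isOpen_interior.frontier_eq, hD.isClosed.frontier_eq, hDcl]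
  have hUc : IsPreconnected (interior D)ᶜ := closure_compl (s := D) ▸ hV.closure
  have hb : Bornology.IsBounded (interior D) := hD.isBounded.subset interior_subset
  obtain ⟨z₀, hz₀⟩ := hne
  obtain ⟨f, hd, hf, -⟩ := exists_riemann_map isOpen_interior hU hb
    (hasContinuousLogs_of_isOpen isOpen_interior ⟨⟨z₀, hz₀⟩, hU⟩ hb hUc) hz₀
  have hdisj : Disjoint (f '' ball 0 1) Dᶜ := by
    rw [hf.image_eq]
    exact disjoint_compl_right_iff_subset.2 interior_subset
  rw [← hfr, ← hf.image_eq] at hUa hVa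
  obtain ⟨F, hFc, hFf, hFcl, hFb⟩ := exists_continuousOn_closure_extension isOpen_ball
    isBounded_ball hd.continuousOn hf.injOn fun ζ hζ ↦
      exists_tendsto_of_arcAccessible hd hf.injOn (hf.image_eq ▸ hb) hD.isClosed.isOpen_compl hV
        hdisj hUa hVa (mem_sphere_zero_iff_norm.1 (frontier_ball (0 : ℂ) one_ne_zero ▸ hζ))
  rw [← hFf.image_eq] at hFcl hFb hdisj hVa
  have hFd : DiffContOnCl ℂ F (ball 0 1) := ⟨hd.congr hFf, hFc⟩
  rw [frontier_ball _ one_ne_zero] at hFb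
  rw [closure_ball _ one_ne_zero] at hFc hFcl
  have hFfr : MapsTo F (sphere 0 1) (closure Dᶜ) := fun ζ hζ ↦ by
    have hmem : F ζ ∈ closure (F '' ball 0 1) :=
      hFcl ▸ mem_image_of_mem F (sphere_subset_closedBall hζ)
    refine (hVa _ ⟨hmem, fun h ↦ hFb hζ (interior_subset h)⟩).mem_closure
  have hinj := injOn_closedBall_of_mapsTo_closure hFd (hFf.injOn_iff.2 hf.injOn) hFb
    hD.isClosed.isOpen_compl hV hdisj hFfr
  rw [hFf.image_eq, hf.image_eq, hDcl] at hFcl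
  have hbij : BijOn F (closedBall 0 1) D := ⟨hFcl ▸ mapsTo_image _ _, hinj, hFcl.superset⟩
  have : CompactSpace (closedBall (0 : ℂ) 1) :=
    isCompact_iff_compactSpace.1 (isCompact_closedBall 0 1)
  have hcont : Continuous (hbij.equiv F) :=
    (continuousOn_iff_continuous_domRestrict.1 hFc).subtype_mk _
  exact ⟨hcont.homeoOfEquivCompactToT2.symm⟩

section LocallyConnected

/-- `U` is locally connected at `w`, a point that may lie on the boundary of `U`: points of `U`
close to `w` are joined by connected subsets of `U` that stay close to `w`. -/
def LocallyConnectedAt {X : Type*} [TopologicalSpace X] (U : Set X) (w : X) : Prop :=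
  ∀ N ∈ 𝓝 w, ∃ M ∈ 𝓝 w, ∀ p ∈ U ∩ M, ∀ q ∈ U ∩ M, ∃ S ⊆ U ∩ N, IsPreconnected S ∧ p ∈ S ∧ q ∈ S

theorem exists_tendsto_of_locallyConnectedAt {f : ℂ → ℂ} {ζ : ℂ}
    (hd : DifferentiableOn ℂ f (ball 0 1)) (hi : InjOn f (ball 0 1))
    (hb : Bornology.IsBounded (f '' ball 0 1))
    (hU : ∀ w ∈ frontier (f '' ball 0 1), LocallyConnectedAt (f '' ball 0 1) w) (hζ : ‖ζ‖ = 1) :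
    ∃ p, Tendsto f (𝓝[ball 0 1] ζ) (𝓝 p) := by
  have hc := hd.continuousOn
  have hζU : ζ ∉ ball (0 : ℂ) 1 := by simp [hζ]
  obtain ⟨p, hp⟩ := exists_forall_frequently_mapsTo_ball hd hi hb hζ
  refine ⟨p, by_contra fun hlim ↦ ?_⟩
  obtain ⟨d, hd0, hcluster⟩ := exists_mapClusterPt_mem_sphere hc hζ hp hlim
  obtain ⟨w, hwp, hw⟩ := hcluster (d / 2) ⟨half_pos hd0, half_lt_self hd0⟩
  obtain ⟨M, hM, hS⟩ := hU w (mem_frontier_image_of_mapClusterPt isOpen_ball hc hi hζU hw)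
    (ball w (d / 4)) (ball_mem_nhds w (by positivity))
  obtain ⟨z₀, hz₀, hz₀M⟩ := ((hw.frequently hM).and_eventually self_mem_nhdsWithin).exists
  have hz₀ζ : 0 < dist z₀ ζ := dist_pos.2 (ne_of_mem_of_not_mem hz₀M hζU)
  obtain ⟨r, hr, hr0, hrz₀⟩ := ((hp (d / 4) (by positivity)).and_eventually
    (Ioo_mem_nhdsGT hz₀ζ)).exists
  obtain ⟨z₁, hz₁, hz₁U, hz₁r⟩ := ((hw.frequently hM).and_eventually
    (inter_mem self_mem_nhdsWithin (mem_nhdsWithin_of_mem_nhds (ball_mem_nhds ζ hr0)))).exists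
  obtain ⟨S, hSs, hSp, h₀, h₁⟩ :=
    hS _ ⟨mem_image_of_mem f hz₀M, hz₀⟩ _ ⟨mem_image_of_mem f hz₁U, hz₁⟩
  have hdisj : Disjoint (ball p (d / 4)) (ball w (d / 4)) :=
    ball_disjoint_ball (by rw [dist_comm, mem_sphere.1 hwp]; linarith)
  obtain ⟨z, hz, hzz₁⟩ := subset_image_sdiff_closedBall isOpen_ball hc hi hSp
    (hSs.trans inter_subset_left)
    (fun y hy hyS ↦ disjoint_left.1 hdisj (hr hy) (hSs hyS).2) hz₀M h₀ hrz₀ h₁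
  exact hz.2 (hi hz.1 hz₁U hzz₁ ▸ ball_subset_closedBall hz₁r)

theorem exists_isCompact_isPreconnected_sphere_subset_union {ξ : ℂ} {N : Set ℂ} (hξ : ‖ξ‖ = 1)
    (hN : N ∈ 𝓝[sphere 0 1] ξ) :
    ∃ B ⊆ sphere (0 : ℂ) 1, IsCompact B ∧ IsPreconnected B ∧ ξ ∉ B ∧ sphere 0 1 ⊆ B ∪ N := by
  have hξ0 : ξ ≠ 0 := norm_ne_zero_iff.1 (hξ ▸ one_ne_zero)
  -- Measuring angles from `-ξ` puts `ξ` at the two ends of `[-π, π]`.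
  set γ : ℝ → ℂ := fun s ↦ -ξ * Complex.exp (s * Complex.I)
  have hγ : Continuous γ := by fun_prop
  have hγs : ∀ s, γ s ∈ sphere (0 : ℂ) 1 := fun s ↦ by
    simp [γ, hξ, Complex.norm_exp_ofReal_mul_I]
  have hγπ : γ Real.pi = ξ := by simp [γ, Complex.exp_pi_mul_I]
  have hγnegπ : γ (-Real.pi) = ξ := by simp [γ, Complex.exp_neg, Complex.exp_pi_mul_I]
  have hnear : ∀ s₀, γ s₀ = ξ → ∀ᶠ s in 𝓝 s₀, γ s ∈ N := fun s₀ hs₀ ↦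
    tendsto_nhdsWithin_iff.2 ⟨hγ.tendsto' s₀ ξ hs₀, .of_forall hγs⟩ hN
  obtain ⟨α, hα, hα₁⟩ := Metric.eventually_nhds_iff.1 (hnear _ hγπ)
  obtain ⟨β, hβ, hβ₁⟩ := Metric.eventually_nhds_iff.1 (hnear _ hγnegπ)
  refine ⟨γ '' Icc (-Real.pi + β / 2) (Real.pi - α / 2), image_subset_iff.2 fun s _ ↦ hγs s,
    isCompact_Icc.image hγ, isPreconnected_Icc.image _ hγ.continuousOn, ?_, fun z hz ↦ ?_⟩
  · rintro ⟨s, ⟨hβs, hsα⟩, hs⟩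
    have hexp := mul_left_cancel₀ (neg_ne_zero.2 hξ0) (hs.trans hγπ.symm)
    have hsπ := congrArg Complex.im (Complex.exp_inj_of_neg_pi_lt_of_le_pi (by simp; linarith)
      (by simp; linarith) (by simp [Real.pi_pos]) (by simp) hexp)
    simp only [Complex.mul_im, Complex.ofReal_re, Complex.ofReal_im, Complex.I_re, Complex.I_im,
      mul_one, mul_zero, add_zero] at hsπ
    linarith
  · set s := (z / -ξ).arg
    have hsz : γ s = z := by
      have hpolar := Complex.norm_mul_exp_arg_mul_I (z / -ξ)
      rw [norm_div, norm_neg, hξ, mem_sphere_zero_iff_norm.1 hz, div_one, Complex.ofReal_one,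
        one_mul] at hpolar
      simp only [γ, s, hpolar]
      field_simp
    have hs : s ∈ Ioc (-Real.pi) Real.pi := Complex.arg_mem_Ioc _
    by_cases hsβ : s < -Real.pi + β / 2
    · exact Or.inr (hsz ▸ hβ₁ (by rw [Real.dist_eq, abs_lt]; constructor <;> linarith [hs.1]))
    by_cases hsα : Real.pi - α / 2 < s
    · exact Or.inr (hsz ▸ hα₁ (by rw [Real.dist_eq, abs_lt]; constructor <;> linarith [hs.2]))
    · exact Or.inl ⟨s, ⟨not_lt.1 hsβ, not_lt.1 hsα⟩, hsz⟩

theorem locallyConnectedAt_of_frontier_subset_image_sphere {k : ℂ → ℂ} {U : Set ℂ} {w : ℂ}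
    (hc : ContinuousOn k (sphere 0 1)) (hi : InjOn k (sphere 0 1)) (hU : IsOpen U)
    (hUp : IsPreconnected U) (hd : Disjoint U (k '' sphere 0 1))
    (hfr : frontier U ⊆ k '' sphere 0 1) (hw : w ∈ k '' sphere 0 1) : LocallyConnectedAt U w := by
  obtain ⟨ξ, hξ, rfl⟩ := hw
  intro N hN
  obtain ⟨ε, hε, hεN⟩ := Metric.mem_nhds_iff.1 hN
  obtain ⟨B, hBs, hB, hBp, hξB, hcover⟩ := exists_isCompact_isPreconnected_sphere_subset_union
    (mem_sphere_zero_iff_norm.1 hξ) ((hc ξ hξ).preimage_mem_nhdsWithin (ball_mem_nhds _ hε))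
  have hkB : IsCompact (k '' B) := hB.image_of_continuousOn (hc.mono hBs)
  have hkξB : k ξ ∉ k '' B := fun h ↦ hξB ((hi.mem_image_iff hBs hξ).1 h)
  obtain ⟨δ, hδ, hδB⟩ := Metric.isOpen_iff.1 hkB.isClosed.isOpen_compl (k ξ) hkξB
  have hcover' : k '' sphere 0 1 ⊆ k '' B ∪ ball (k ξ) ε :=
    (image_mono hcover).trans
      (image_union .. ▸ union_subset_union_right _ (image_preimage_subset ..))
  refine ⟨ball (k ξ) (min δ ε), ball_mem_nhds _ (lt_min hδ hε), fun p hp q hq ↦ ?_⟩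
  obtain ⟨S, hS, hpS, hqS, hSε, hSA⟩ := exists_isPreconnected_subset_ball
    ((isCompact_sphere (0 : ℂ) 1).image_of_continuousOn hc) hkB (image_mono hBs)
    (hBp.image k (hc.mono hBs)) hUp hd hcover' (min_le_right δ ε)
    (subset_compl_iff_disjoint_right.1 ((ball_subset_ball (min_le_left δ ε)).trans hδB))
    hp.1 hq.1 hp.2 hq.2
  refine ⟨S, subset_inter ?_ (hSε.trans hεN), hS, hpS, hqS⟩
  refine hS.subset_of_closure_inter_subset hU ⟨p, hpS, hp.1⟩ fun z hz ↦ by_contra fun hzU ↦ ?_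
  exact disjoint_left.1 hSA hz.2 (hfr (hU.frontier_eq ▸ ⟨hz.1, hzU⟩))

end LocallyConnected

theorem accessible_of_mapsTo_ball {E X : Type*} [NormedAddCommGroup E] [NormedSpace ℝ E]
    [TopologicalSpace X] {F : E → X} {U : Set X} {ζ : E} (hζ : ‖ζ‖ = 1)
    (hc : ContinuousOn F (insert ζ (ball 0 1 \ {0})))
    (hi : InjOn F (insert ζ (ball 0 1 \ {0}))) (hU : MapsTo F (ball 0 1 \ {0}) U) :
    Accessible U (F ζ) := by
  set γ : unitInterval → E := fun t ↦ ((1 + t : ℝ) / 2) • ζ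
  have hnorm : ∀ t, ‖γ t‖ = (1 + t) / 2 := fun t ↦ by
    rw [norm_smul, hζ, mul_one, Real.norm_of_nonneg (by linarith [t.2.1])]
  have hγ1 : γ 1 = ζ := by simp [γ]
  have hγ : ∀ t < 1, γ t ∈ ball 0 1 \ {0} := fun t ht ↦ by
    have ht1 : (t : ℝ) < 1 := ht
    refine ⟨?_, norm_pos_iff.1 ?_⟩ <;> simp only [mem_ball_zero_iff, hnorm] <;> linarith [t.2.1]
  have hγmem : ∀ t, γ t ∈ insert ζ (ball 0 1 \ {0}) := fun t ↦
    (unitInterval.le_one'.lt_or_eq (a := t)).elim (fun h ↦ Or.inr (hγ t h))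
      fun h ↦ Or.inl (h ▸ hγ1)
  have hφ : Continuous (F ∘ γ) := hc.comp_continuous (by fun_prop) hγmem
  have hφU : MapsTo (F ∘ γ) (Iio 1) U := fun t ht ↦ hU (hγ t ht)
  refine ⟨F ∘ γ, hφ, fun s t hst ↦ ?_, fun t ↦ ?_, hφU, congrArg F hγ1⟩
  · have hst' := congrArg norm (hi (hγmem s) (hγmem t) hst)
    rw [hnorm, hnorm] at hst'
    exact Subtype.ext (by linarith)
  · refine map_mem_closure hφ ?_ hφU
    rw [closure_Iio' ⟨0, zero_lt_one⟩]
    exact unitInterval.le_one'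

section JordanDomain

variable {h : ℂ → ℂ}

theorem image_ball_subset_interior (hc : ContinuousOn h (closedBall 0 1))
    (hi : InjOn h (closedBall 0 1)) : h '' ball 0 1 ⊆ interior (h '' closedBall 0 1) :=
  interior_maximal (image_mono ball_subset_closedBall) (isOpen_image_ball one_pos hc hi)

theorem frontier_image_closedBall_subset (hc : ContinuousOn h (closedBall 0 1))
    (hi : InjOn h (closedBall 0 1)) : frontier (h '' closedBall 0 1) ⊆ h '' sphere 0 1 := by
  rw [((isCompact_closedBall (0 : ℂ) 1).image_of_continuousOn hc).isClosed.frontier_eq]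
  rintro _ ⟨⟨ζ, hζ, rfl⟩, hn⟩
  refine mem_image_of_mem h ((ball_union_sphere.superset hζ).resolve_left fun hb ↦ hn ?_)
  exact image_ball_subset_interior hc hi (mem_image_of_mem h hb)

theorem isPreconnected_interior_image_closedBall (hc : ContinuousOn h (closedBall 0 1))
    (hi : InjOn h (closedBall 0 1)) : IsPreconnected (interior (h '' closedBall 0 1)) :=
  (isPreconnected_ball.image h (hc.mono ball_subset_closedBall)).subset_closure
    (image_ball_subset_interior hc hi) (interior_subset.trans_eq (closure_image_ball hc).symm)

theorem accessible_interior_image_closedBall (hc : ContinuousOn h (closedBall 0 1))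
    (hi : InjOn h (closedBall 0 1)) {w : ℂ} (hw : w ∈ frontier (h '' closedBall 0 1)) :
    Accessible (interior (h '' closedBall 0 1)) w := by
  obtain ⟨ζ, hζ, rfl⟩ := frontier_image_closedBall_subset hc hi hw
  have hsub : insert ζ (ball 0 1 \ {0}) ⊆ closedBall (0 : ℂ) 1 :=
    insert_subset (sphere_subset_closedBall hζ) (sdiff_subset.trans ball_subset_closedBall)
  exact accessible_of_mapsTo_ball (mem_sphere_zero_iff_norm.1 hζ) (hc.mono hsub) (hi.mono hsub)
    fun z hz ↦ image_ball_subset_interior hc hi (mem_image_of_mem h hz.1)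

end JordanDomain

theorem isPreconnected_closedBall_sdiff_zero {E : Type*} [NormedAddCommGroup E] [NormedSpace ℝ E]
    (hE : 1 < Module.rank ℝ E) (r : ℝ) : IsPreconnected (closedBall (0 : E) r \ {0}) := by
  have himage : closedBall (0 : E) r \ {0} =
      (fun q : ℝ × E ↦ q.1 • q.2) '' Ioc 0 r ×ˢ sphere 0 1 := by
    ext z
    constructor
    · rintro ⟨hz, hz0⟩
      have hz0' : ‖z‖ ≠ 0 := norm_ne_zero_iff.2 hz0
      exact ⟨(‖z‖, ‖z‖⁻¹ • z), ⟨⟨norm_pos_iff.2 hz0, mem_closedBall_zero_iff.1 hz⟩,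
        by simp [norm_smul, hz0']⟩, smul_inv_smul₀ hz0' z⟩
    · rintro ⟨⟨t, η⟩, ⟨ht, hη⟩, rfl⟩
      have hη' := ne_zero_of_mem_unit_sphere ⟨η, hη⟩
      refine ⟨?_, smul_ne_zero ht.1.ne' hη'⟩
      rw [mem_closedBall_zero_iff, norm_smul, mem_sphere_zero_iff_norm.1 hη, mul_one,
        Real.norm_of_nonneg ht.1.le]
      exact ht.2
  rw [himage]
  exact (isPreconnected_Ioc.prod (isPreconnected_sphere hE 0 1)).image _ (by fun_prop)

section Inversion

open Bornology

/-- The image of the complement of `D` on the Riemann sphere under the inversion `z ↦ z⁻¹`; the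
point `0` of the image comes from the point at infinity. -/
def inversionCompl (D : Set ℂ) : Set ℂ :=
  {v | v = 0 ∨ v⁻¹ ∉ D}

variable {D : Set ℂ}

theorem compl_inversionCompl (D : Set ℂ) : (inversionCompl D)ᶜ = Inv.inv '' (D \ {0}) := by
  ext v
  simp [inversionCompl, and_comm]

theorem eventually_inv_notMem (hD : IsBounded D) : ∀ᶠ v in 𝓝[≠] 0, v⁻¹ ∉ D :=
  tendsto_inv₀_nhdsNE_zero hD

theorem isOpen_inversionCompl (hD : IsCompact D) : IsOpen (inversionCompl D) := by
  refine isOpen_iff_mem_nhds.2 fun v hv ↦ ?_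
  rcases eq_or_ne v 0 with rfl | hv0
  · filter_upwards [eventually_nhdsWithin_iff.1 (eventually_inv_notMem hD.isBounded)]
      with u hu using or_iff_not_imp_left.2 hu
  · filter_upwards [(continuousAt_inv₀ hv0).preimage_mem_nhds
      (hD.isClosed.isOpen_compl.mem_nhds (hv.resolve_left hv0))] with u hu using Or.inr hu

theorem isPreconnected_inversionCompl (hD : IsBounded D) (h0 : 0 ∈ D) (hDc : IsPreconnected Dᶜ) :
    IsPreconnected (inversionCompl D) := by
  have hne : ∀ z ∈ Dᶜ, z ≠ 0 := fun z hz ↦ ne_of_mem_of_not_mem h0 hz |>.symm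
  refine (hDc.image Inv.inv (continuousOn_inv₀.mono hne)).subset_closure ?_ ?_
  · rintro _ ⟨z, hz, rfl⟩
    exact Or.inr (by rwa [inv_inv])
  · rintro v (rfl | hv)
    · refine mem_closure_iff_frequently.2 (Frequently.filter_mono ?_
        (nhdsWithin_le_nhds (s := {0}ᶜ)))
      exact ((eventually_inv_notMem hD).mono fun v hv ↦ ⟨v⁻¹, hv, inv_inv v⟩).frequently
    · exact subset_closure ⟨v⁻¹, hv, inv_inv v⟩

theorem isBounded_inversionCompl (h0 : D ∈ 𝓝 0) : IsBounded (inversionCompl D) := by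
  refine isBounded_def.2 ?_
  filter_upwards [tendsto_inv₀_cobounded h0, eventually_ne_cobounded 0] with v hv hv0
  exact not_or.2 ⟨hv0, not_not.2 hv⟩

theorem mem_frontier_of_mem_frontier_inversionCompl (hD : IsCompact D) {v : ℂ}
    (hv : v ∈ frontier (inversionCompl D)) : v⁻¹ ∈ frontier D := by
  rw [(isOpen_inversionCompl hD).frontier_eq] at hv
  obtain ⟨hv0, hvD⟩ := not_or.1 hv.2
  refine ⟨subset_closure (not_not.1 hvD), fun hint ↦ ?_⟩
  have hnear : ∀ᶠ u in 𝓝 v, u⁻¹ ∈ D :=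
    continuousAt_inv₀ hv0 (mem_interior_iff_mem_nhds.1 hint)
  obtain ⟨u, hu, huD, hu0⟩ := ((mem_closure_iff_frequently.1 hv.1).and_eventually
    (hnear.and (eventually_ne_nhds hv0))).exists
  exact hu.elim hu0 (not_not.2 huD)

theorem inv_mem_frontier_inversionCompl (hD : IsCompact D) {w : ℂ} (hw : w ∈ frontier D)
    (hw0 : w ≠ 0) : w⁻¹ ∈ frontier (inversionCompl D) := by
  rw [(isOpen_inversionCompl hD).frontier_eq]
  have hwD : w ∈ D := hD.isClosed.frontier_subset hw
  refine ⟨?_, not_or.2 ⟨inv_ne_zero hw0, by rwa [inv_inv, not_not]⟩⟩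
  refine closure_mono ?_ ((continuousAt_inv₀ hw0).continuousWithinAt.mem_closure_image
    (frontier_compl D ▸ hw).1)
  rintro _ ⟨z, hz, rfl⟩
  exact Or.inr (by rwa [inv_inv])

theorem exists_riemann_map_inversionCompl (hD : IsCompact D) (h0 : D ∈ 𝓝 0)
    (hDc : IsPreconnected Dᶜ) (hDp : IsPreconnected (D \ {0})) :
    ∃ f : ℂ → ℂ, DifferentiableOn ℂ f (ball 0 1) ∧ BijOn f (ball 0 1) (inversionCompl D) ∧
      f 0 = 0 := by
  have hU := isOpen_inversionCompl hD
  have hUp := isPreconnected_inversionCompl hD.isBounded (mem_of_mem_nhds h0) hDc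
  have hUb := isBounded_inversionCompl h0
  have hzero : 0 ∈ inversionCompl D := Or.inl rfl
  have hUc : IsPreconnected (inversionCompl D)ᶜ := by
    rw [compl_inversionCompl]
    exact hDp.image _ (continuousOn_inv₀.mono fun z hz ↦ hz.2)
  exact exists_riemann_map hU hUp hUb (hasContinuousLogs_of_isOpen hU ⟨⟨0, hzero⟩, hUp⟩ hUb hUc)
    hzero

theorem accessible_compl_of_riemann_map {f : ℂ → ℂ} (hD : IsCompact D) (h0 : D ∈ 𝓝 0)
    (hc : ContinuousOn f (ball 0 1)) (hf : BijOn f (ball 0 1) (inversionCompl D)) (hf0 : f 0 = 0)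
    (hlim : ∀ ζ : ℂ, ‖ζ‖ = 1 → ∃ p, Tendsto f (𝓝[ball 0 1] ζ) (𝓝 p)) {w : ℂ}
    (hw : w ∈ frontier D) : Accessible Dᶜ w := by
  obtain ⟨F, hFc, hFf, hFcl, hFb⟩ := exists_continuousOn_closure_extension isOpen_ball
    isBounded_ball hc hf.injOn fun ζ hζ ↦ hlim ζ
      (mem_sphere_zero_iff_norm.1 (frontier_ball (0 : ℂ) one_ne_zero ▸ hζ))
  rw [hf.image_eq, closure_ball _ one_ne_zero] at hFcl
  rw [hf.image_eq, frontier_ball _ one_ne_zero] at hFb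
  rw [closure_ball _ one_ne_zero] at hFc
  have hw0 : w ≠ 0 := fun h ↦ hw.2 (mem_interior_iff_mem_nhds.2 (h ▸ h0))
  obtain ⟨hwcl, hwU⟩ := (isOpen_inversionCompl hD).frontier_eq.subset
    (inv_mem_frontier_inversionCompl hD hw hw0)
  obtain ⟨ζ, hζ, hFζ⟩ := hFcl.superset hwcl
  have hζs : ζ ∈ sphere (0 : ℂ) 1 := (ball_union_sphere.superset hζ).resolve_left fun hζb ↦
    hwU (hFζ ▸ hFf hζb ▸ hf.mapsTo hζb)
  have hFi : InjOn F (ball 0 1) := hFf.injOn_iff.2 hf.injOn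
  have hFball : MapsTo F (ball 0 1 \ {0}) (inversionCompl D \ {0}) := fun z hz ↦ by
    rw [hFf hz.1]
    exact ⟨hf.mapsTo hz.1, fun h ↦ hz.2 (hf.injOn hz.1 (mem_ball_self one_pos) (h.trans hf0.symm))⟩
  have hFinsert : InjOn F (insert ζ (ball 0 1 \ {0})) := by
    refine (injOn_insert fun h ↦ sphere_disjoint_ball.le_bot ⟨hζs, h.1⟩).2
      ⟨hFi.mono sdiff_subset, ?_⟩
    rintro ⟨z, hz, hzζ⟩
    exact hFb hζs (hzζ ▸ (hFball hz).1)
  rw [← inv_inv w, ← hFζ]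
  refine accessible_of_mapsTo_ball (F := fun z ↦ (F z)⁻¹) (mem_sphere_zero_iff_norm.1 hζs) ?_
    (inv_injective.comp_injOn hFinsert) fun z hz ↦ (hFball hz).1.resolve_left (hFball hz).2
  refine (hFc.mono (insert_subset hζ (sdiff_subset.trans ball_subset_closedBall))).inv₀ ?_
  exact forall_mem_insert.2 ⟨hFζ ▸ inv_ne_zero hw0, fun z hz ↦ (hFball hz).2⟩

theorem accessible_compl_image_closedBall_of_zero {h : ℂ → ℂ} (hc : ContinuousOn h (closedBall 0 1))
    (hi : InjOn h (closedBall 0 1)) (h0 : h 0 = 0) {w : ℂ}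
    (hw : w ∈ frontier (h '' closedBall 0 1)) : Accessible (h '' closedBall 0 1)ᶜ w := by
  set D := h '' closedBall 0 1
  have hD : IsCompact D := (isCompact_closedBall (0 : ℂ) 1).image_of_continuousOn hc
  have hDc : IsPreconnected Dᶜ := ((hasContinuousLogs_closedBall 0 zero_le_one).image
    (isCompact_closedBall 0 1) hc hi).isPreconnected_compl hD
  have hD0 : D ∈ 𝓝 0 := mem_interior_iff_mem_nhds.1
    (h0 ▸ image_ball_subset_interior hc hi (mem_image_of_mem h (mem_ball_self one_pos)))
  have hDp : IsPreconnected (D \ {0}) := by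
    have hsdiff : D \ {0} = h '' (closedBall 0 1 \ {0}) := by
      rw [hi.image_sdiff_subset (singleton_subset_iff.2 (mem_closedBall_self zero_le_one)),
        image_singleton, h0]
    rw [hsdiff]
    exact (isPreconnected_closedBall_sdiff_zero (by simp) 1).image _ (hc.mono sdiff_subset)
  obtain ⟨f, hd, hf, hf0⟩ := exists_riemann_map_inversionCompl hD hD0 hDc hDp
  have hsphere : ∀ ζ ∈ sphere (0 : ℂ) 1, h ζ ≠ 0 := fun ζ hζ hζ0 ↦
    ne_zero_of_mem_unit_sphere ⟨ζ, hζ⟩ (hi (sphere_subset_closedBall hζ)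
      (mem_closedBall_self zero_le_one) (hζ0.trans h0.symm))
  have hdisj : Disjoint (inversionCompl D) ((Inv.inv ∘ h) '' sphere 0 1) := by
    rw [disjoint_right]
    rintro _ ⟨ζ, hζ, rfl⟩
    refine not_or.2 ⟨inv_ne_zero (hsphere ζ hζ), ?_⟩
    exact not_not.2 (inv_inv (h ζ) ▸ mem_image_of_mem h (sphere_subset_closedBall hζ))
  have hfr : frontier (inversionCompl D) ⊆ (Inv.inv ∘ h) '' sphere 0 1 := fun v hv ↦ by
    obtain ⟨ζ, hζ, hζv⟩ := frontier_image_closedBall_subset hc hi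
      (mem_frontier_of_mem_frontier_inversionCompl hD hv)
    exact ⟨ζ, hζ, inv_eq_iff_eq_inv.2 hζv⟩
  refine accessible_compl_of_riemann_map hD hD0 hd.continuousOn hf hf0 (fun ζ hζ ↦ ?_) hw
  refine exists_tendsto_of_locallyConnectedAt hd hf.injOn
    (hf.image_eq ▸ isBounded_inversionCompl hD0) (fun v hv ↦ ?_) hζ
  rw [hf.image_eq] at hv ⊢
  exact locallyConnectedAt_of_frontier_subset_image_sphere
    ((hc.mono sphere_subset_closedBall).inv₀ hsphere)
    (inv_injective.comp_injOn (hi.mono sphere_subset_closedBall)) (isOpen_inversionCompl hD)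
    (isPreconnected_inversionCompl hD.isBounded (mem_of_mem_nhds hD0) hDc) hdisj hfr (hfr hv)

end Inversion

section Transport

variable {X Y : Type*} [TopologicalSpace X] [TopologicalSpace Y]

theorem Accessible.arcAccessible {U : Set X} {x : X} (h : Accessible U x) : ArcAccessible U x := by
  obtain ⟨φ, hc, hi, -, hU, rfl⟩ := h
  refine ⟨φ 0, hU 0 (by simp), range φ, .of_unitInterval hc hi, range_subset_iff.2 fun t ↦ ?_⟩
  exact (unitInterval.le_one'.lt_or_eq (a := t)).elim (fun ht ↦ Or.inr (hU t ht))
    fun ht ↦ Or.inl (congrArg φ ht)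

theorem Accessible.image {U : Set X} {x : X} (h : Accessible U x) (e : X ≃ₜ Y) :
    Accessible (e '' U) (e x) := by
  obtain ⟨φ, hc, hi, hcl, hU, rfl⟩ := h
  refine ⟨e ∘ φ, e.continuous.comp hc, e.injective.comp hi, fun t ↦ ?_,
    fun t ht ↦ mem_image_of_mem e (hU t ht), rfl⟩
  rw [← e.image_closure]
  exact mem_image_of_mem e (hcl t)

theorem accessible_image_iff {U : Set X} {x : X} (e : X ≃ₜ Y) :
    Accessible (e '' U) (e x) ↔ Accessible U x :=
  ⟨fun h ↦ by simpa [image_image] using h.image e.symm, fun h ↦ h.image e⟩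

theorem exists_continuousOn_bijOn_of_homeomorph [Nonempty Y] {s : Set X} {t : Set Y} (e : s ≃ₜ t) :
    ∃ f : X → Y, ContinuousOn f s ∧ BijOn f s t := by
  let f : X → Y := Function.extend Subtype.val (Subtype.val ∘ e) (fun _ ↦ Classical.arbitrary Y)
  have hf : s.domRestrict f = Subtype.val ∘ e :=
    Function.extend_comp Subtype.val_injective _ _
  refine ⟨f, ?_, ?_⟩
  · rw [continuousOn_iff_continuous_domRestrict, hf]
    exact continuous_subtype_val.comp e.continuous
  · have himage : f '' s = t := by
      rw [← range_domRestrict, hf, e.surjective.range_comp, Subtype.range_val]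
    refine himage ▸ InjOn.bijOn_image ?_
    rw [injOn_iff_injective, hf]
    exact Subtype.val_injective.comp e.injective

end Transport

theorem accessible_compl_image_closedBall {h : ℂ → ℂ} (hc : ContinuousOn h (closedBall 0 1))
    (hi : InjOn h (closedBall 0 1)) {w : ℂ} (hw : w ∈ frontier (h '' closedBall 0 1)) :
    Accessible (h '' closedBall 0 1)ᶜ w := by
  let e := Homeomorph.subRight (h 0)
  have himage : e '' (h '' closedBall 0 1) = (e ∘ h) '' closedBall 0 1 := image_image ..
  rw [← accessible_image_iff e, image_compl_eq e.bijective, himage]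
  refine accessible_compl_image_closedBall_of_zero (e.continuous.comp_continuousOn hc)
    (e.injective.comp_injOn hi) (sub_self _) ?_
  rw [← himage, ← e.image_frontier]
  exact mem_image_of_mem e hw

theorem nonempty_homeomorph_closedBall_iff {D : Set ℂ} (hD : IsCompact D) :
    Nonempty (D ≃ₜ closedBall (0 : ℂ) 1) ↔
      (IsConnected (interior D) ∧ IsConnected Dᶜ ∧
        (∀ x ∈ frontier D, Accessible (interior D) x) ∧
        (∀ x ∈ frontier D, Accessible Dᶜ x)) := by
  constructor
  · rintro ⟨e⟩
    obtain ⟨h, hc, hh⟩ := exists_continuousOn_bijOn_of_homeomorph e.symm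
    obtain ⟨hi, rfl⟩ := And.intro hh.injOn hh.image_eq
    have hDc : IsPreconnected (h '' closedBall 0 1)ᶜ :=
      ((hasContinuousLogs_closedBall 0 zero_le_one).image (isCompact_closedBall 0 1) hc
        hi).isPreconnected_compl hD
    have hne : (interior (h '' closedBall 0 1)).Nonempty :=
      ((nonempty_ball.2 one_pos).image h).mono (image_ball_subset_interior hc hi)
    exact ⟨⟨hne, isPreconnected_interior_image_closedBall hc hi⟩,
      ⟨nonempty_compl.2 hD.ne_univ, hDc⟩, fun x ↦ accessible_interior_image_closedBall hc hi,
      fun x ↦ accessible_compl_image_closedBall hc hi⟩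
  · rintro ⟨hU, hV, hUa, hVa⟩
    exact nonempty_homeomorph_closedBall_of_arcAccessible hD hU.nonempty hU.isPreconnected
      hV.isPreconnected (fun w hw ↦ (hUa w hw).arcAccessible)
      fun w hw ↦ (hVa w hw).arcAccessible

/-- A compact subset of the plane with nonempty interior is homeomorphic to the closed
2-dimensional disk iff its interior is connected, its complement is connected, and every
boundary point is accessible both from the interior and from the complement. -/
theorem compact_homeomorph_closedDisk_iff
    (D : Set (EuclideanSpace ℝ (Fin 2))) (hD : IsCompact D)
    (hne : (interior D).Nonempty) :
    Nonempty (D ≃ₜ (Metric.closedBall (0 : EuclideanSpace ℝ (Fin 2)) 1)) ↔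
      (IsConnected (interior D) ∧ IsConnected Dᶜ ∧
        (∀ x ∈ frontier D, Accessible (interior D) x) ∧
        (∀ x ∈ frontier D, Accessible Dᶜ x)) := by
  let L := Complex.orthonormalBasisOneI.repr
  let e : ℂ ≃ₜ EuclideanSpace ℝ (Fin 2) := L.toHomeomorph
  obtain ⟨K, rfl⟩ : ∃ K, e '' K = D := ⟨e ⁻¹' D, image_preimage_eq _ e.surjective⟩
  have hball : e '' closedBall 0 1 = closedBall 0 1 := by
    have himage := L.image_closedBall 0 1
    rwa [map_zero] at himage
  rw [← hball, ← e.image_interior, ← e.image_frontier, ← image_compl_eq e.bijective,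
    e.isConnected_image, e.isConnected_image, forall_mem_image, forall_mem_image]
  simp only [accessible_image_iff]
  rw [← nonempty_homeomorph_closedBall_iff (e.isCompact_image.1 hD)]
  exact ⟨fun ⟨f⟩ ↦ ⟨(e.image K).trans (f.trans (e.image _).symm)⟩,
    fun ⟨f⟩ ↦ ⟨(e.image K).symm.trans (f.trans (e.image _))⟩⟩
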